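/- Let K be a finite dimensional compact metric space and σ: K^ℤ → K^ℤ the full shift on the alphabet K. Then mdim(K^ℤ, σ) ≥ dim K − 1. -/

import Mathlib

section FrozenDefs

open Filter Set
open scoped ENNReal

namespace MeanDimPaper

variable {X : Type*} [TopologicalSpace X]

/-- `α` is an open cover of `X`. -/
def IsOpenCover (α : Set (Set X)) : Prop :=
  (∀ U ∈ α, IsOpen U) ∧ ⋃₀ α = Set.univ

/-- The order of a cover `α`: the maximum `n ≥ 0` such that there exist `n + 1`
pairwise distinct members of `α` with nonempty common intersection. -/
noncomputable def ord (α : Set (Set X)) : ℕ∞ :=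
  ⨆ n ∈ {n : ℕ | ∃ f : Fin (n + 1) → Set X,
      Function.Injective f ∧ (∀ i, f i ∈ α) ∧ (⋂ i, f i).Nonempty}, (n : ℕ∞)

/-- `β` refines `α`: every member of `β` is contained in some member of `α`. -/
def Refines (β α : Set (Set X)) : Prop := ∀ V ∈ β, ∃ U ∈ α, V ⊆ U

/-- `D(α)`: the minimum of `ord β` over open covers `β` refining `α`. -/
noncomputable def covD (α : Set (Set X)) : ℕ∞ :=
  ⨅ β ∈ {β : Set (Set X) | IsOpenCover β ∧ Refines β α}, ord β

/-- Topological (covering) dimension: the supremum of `D(α)` over open covers `α`. -/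
noncomputable def topDim (X : Type*) [TopologicalSpace X] : ℕ∞ :=
  ⨆ α ∈ {α : Set (Set X) | IsOpenCover α}, covD α

/-- Diameter of a set with respect to a distance function `d`. -/
noncomputable def diamD (d : X → X → ℝ) (U : Set X) : ℝ :=
  sSup {r | ∃ x ∈ U, ∃ y ∈ U, r = d x y}

/-- Mesh of a cover: the supremum of the diameters of its members. -/
noncomputable def mesh (d : X → X → ℝ) (α : Set (Set X)) : ℝ :=
  sSup (diamD d '' α)

/-- `widim_ε(X, d)`: the minimum of `D(α)` over open covers `α` with `mesh(α, d) < ε`. -/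
noncomputable def widim (ε : ℝ) (d : X → X → ℝ) : ℕ∞ :=
  ⨅ α ∈ {α : Set (Set X) | IsOpenCover α ∧ mesh d α < ε}, covD α

/-- `d` is a metric on `X` compatible with the topology of `X`. -/
structure IsCompatMetric {X : Type*} [TopologicalSpace X] (d : X → X → ℝ) : Prop where
  refl : ∀ x, d x x = 0
  eq_of : ∀ x y, d x y = 0 → x = y
  symm : ∀ x y, d x y = d y x
  triangle : ∀ x y z, d x z ≤ d x y + d y z
  isOpen_iff : ∀ U : Set X, IsOpen U ↔ ∀ x ∈ U, ∃ ε > 0, ∀ y, d x y < ε → y ∈ U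

/-- The dynamical distance `d_n(x, y) = max_{0 ≤ i < n} d(Tⁱ x, Tⁱ y)`. -/
noncomputable def dynDist (d : X → X → ℝ) (T : X → X) (n : ℕ) (x y : X) : ℝ :=
  sSup {r | ∃ i < n, r = d (T^[i] x) (T^[i] y)}

/-- Mean dimension `mdim(X, T)` computed with the metric `d`:
`lim_{ε → 0} lim_{n → ∞} widim_ε(X, d_n) / n`.  The inner limit exists (by
subadditivity of `n ↦ widim_ε(X, d_n)`) so it coincides with the liminf, and the inner
quantity is monotone as `ε` decreases, so the limit as `ε → 0` is the supremum over
`ε > 0`. -/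
noncomputable def mdim (T : X → X) (d : X → X → ℝ) : ℝ≥0∞ :=
  ⨆ (ε : ℝ) (_ : 0 < ε),
    Filter.liminf (fun n : ℕ => (widim ε (dynDist d T n) : ℝ≥0∞) / (n : ℝ≥0∞)) Filter.atTop

/-- The full shift `σ` on the alphabet `K`: `σ((xₙ)ₙ) = (xₙ₊₁)ₙ`. -/
def shift (K : Type*) : (ℤ → K) → ℤ → K := fun x n => x (n + 1)

end MeanDimPaper

end FrozenDefs

namespace MeanDimPaper
namespace Ch

open Finsupp

section alg
variable {F : Type*} [CommRing F] {X Y Z : Type*}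

/-- Chains. -/
abbrev Chn (F X : Type*) [CommRing F] := List X →₀ F

/-- linear extension -/
noncomputable abbrev lift {X : Type*} {M : Type*} [AddCommGroup M] [Module F M] (f : List X → M) :
    Chn F X →ₗ[F] M := Finsupp.linearCombination F f

noncomputable def cons (x : X) : Chn F X →ₗ[F] Chn F X :=
  lift (fun l => single (x :: l) 1)

@[simp] lemma lift_single {M : Type*} [AddCommGroup M] [Module F M] (f : List X → M) (l : List X)
    (a : F) : lift f (single l a) = a • f l := by simp [lift]

@[simp] lemma cons_single (x : X) (l : List X) : cons x (single l (1:F)) = single (x :: l) 1 := by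
  simp [cons]

noncomputable def bdL : List X → Chn F X
  | [] => 0
  | x :: l => single l 1 - cons x (bdL l)

noncomputable def bd : Chn F X →ₗ[F] Chn F X := lift bdL

@[simp] lemma bd_single (l : List X) : bd (single l (1:F)) = bdL l := by simp [bd]

lemma lin_ext {M : Type*} [AddCommGroup M] [Module F M] {f g : Chn F X →ₗ[F] M}
    (h : ∀ l, f (single l 1) = g (single l 1)) : f = g := by
  apply Finsupp.lhom_ext'
  intro l
  apply LinearMap.ext_ring
  simpa using h l

lemma bd_cons (x : X) (c : Chn F X) : bd (cons x c) = c - cons x (bd c) := by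
  have : bd ∘ₗ cons x = LinearMap.id - cons x ∘ₗ (bd (F := F)) := by
    apply lin_ext; intro l; simp [bdL]
  simpa using LinearMap.congr_fun this c

lemma bd_bdL (l : List X) : bd (bdL l : Chn F X) = 0 := by
  induction l with
  | nil => simp [bdL]
  | cons x l ih => simp [bdL, bd_cons, ih]

lemma bd_bd (c : Chn F X) : bd (bd c) = 0 := by
  have : bd ∘ₗ bd (F := F) (X := X) = 0 := by
    apply lin_ext; intro l; simp [bd_bdL]
  simpa using LinearMap.congr_fun this c

/-- chains supported on a set -/
abbrev sup (F : Type*) [CommRing F] {X : Type*} (S : Set (List X)) : Submodule F (Chn F X) :=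
  Finsupp.supported F F S

lemma single_mem {S : Set (List X)} {l : List X} (h : l ∈ S) (a : F) : single l a ∈ sup F S :=
  Finsupp.single_mem_supported F a h

lemma lift_mem {M : Type*} [AddCommGroup M] [Module F M] {S : Set (List X)} {f : List X → M}
    {p : Submodule F M} (h : ∀ l ∈ S, f l ∈ p) {c : Chn F X} (hc : c ∈ sup F S) :
    lift f c ∈ p := by
  rw [lift, Finsupp.linearCombination_apply]
  exact Submodule.sum_mem _ fun l hl => p.smul_mem _ (h l (hc hl))

lemma lin_mem {M : Type*} [AddCommGroup M] [Module F M] {S : Set (List X)} (f : Chn F X →ₗ[F] M)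
    {p : Submodule F M} (h : ∀ l ∈ S, f (single l 1) ∈ p) {c : Chn F X} (hc : c ∈ sup F S) :
    f c ∈ p := by
  have : f = lift (fun l => f (single l 1)) := lin_ext (by simp)
  rw [this]; exact lift_mem h hc

lemma lin_congr {M : Type*} [AddCommGroup M] [Module F M] {S : Set (List X)}
    (f g : Chn F X →ₗ[F] M)
    (h : ∀ l ∈ S, f (single l 1) = g (single l 1)) {c : Chn F X} (hc : c ∈ sup F S) :
    f c = g c := by
  have := lin_mem (f - g) (p := ⊥) (S := S) (by intro l hl; simp [h l hl]) hc
  simpa [sub_eq_zero] using this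

lemma lin_zero {M : Type*} [AddCommGroup M] [Module F M] {S : Set (List X)}
    (f : Chn F X →ₗ[F] M)
    (h : ∀ l ∈ S, f (single l 1) = 0) {c : Chn F X} (hc : c ∈ sup F S) :
    f c = 0 := by
  have := lin_congr f 0 (S := S) (by simpa using h) hc
  simpa using this

lemma sup_mono {S T : Set (List X)} (h : S ⊆ T) {c : Chn F X} (hc : c ∈ sup F S) : c ∈ sup F T :=
  Finsupp.supported_mono h hc

lemma cons_mem {S T : Set (List X)} {x : X} (h : ∀ l ∈ S, x :: l ∈ T) {c : Chn F X}
    (hc : c ∈ sup F S) : cons x c ∈ sup F T :=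
  lift_mem (fun l hl => single_mem (h l hl) 1) hc

/-- coboundary of a function on lists, with values in any abelian group -/
def cob {G : Type*} [AddCommGroup G] (c : List X → G) : List X → G
  | [] => 0
  | x :: l => c l - cob (fun l' => c (x :: l')) l

lemma cob_eq (v : List X → F) (l : List X) : cob v l = lift v (bdL (F := F) l) := by
  induction l generalizing v with
  | nil => simp [cob, bdL]
  | cons x l ih =>
    have : ∀ c : Chn F X, lift v (cons x c) = lift (fun l' => v (x :: l')) c := by
      intro c
      have : lift v ∘ₗ cons x = lift (F := F) (fun l' => v (x :: l')) := by
        apply lin_ext; intro l; simp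
      exact LinearMap.congr_fun this c
    simp [cob, bdL, ih, this]

lemma cob_map {G : Type*} [AddCommGroup G] (f : X → Y) (v : List Y → G) (l : List X) :
    cob v (l.map f) = cob (fun l => v (l.map f)) l := by
  induction l generalizing v with
  | nil => simp [cob]
  | cons x l ih => simp [cob, ih]

lemma cob_hom {G H : Type*} [AddCommGroup G] [AddCommGroup H] (f : G →+ H) (v : List X → G)
    (l : List X) : cob (fun l => f (v l)) l = f (cob v l) := by
  induction l generalizing v with
  | nil => simp [cob]
  | cons x l ih => simp [cob, ih]

lemma cob_add {G : Type*} [AddCommGroup G] (v w : List X → G)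
    (l : List X) : cob (fun l => v l + w l) l = cob v l + cob w l := by
  induction l generalizing v w with
  | nil => simp [cob]
  | cons x l ih => simp [cob, ih]; abel

lemma cob_sub {G : Type*} [AddCommGroup G] (v w : List X → G)
    (l : List X) : cob (fun l => v l - w l) l = cob v l - cob w l := by
  induction l generalizing v w with
  | nil => simp [cob]
  | cons x l ih => simp [cob, ih]; abel

lemma cob_cob {G : Type*} [AddCommGroup G] (v : List X → G)
    (l : List X) : cob (cob v) l = 0 := by
  induction l generalizing v with
  | nil => simp [cob]
  | cons x l ih =>
    simp only [cob]
    rw [cob_sub, ih]; simp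

/-- coboundary only depends on the values on sublists of the right length -/
lemma cob_congr {G : Type*} [AddCommGroup G] {v w : List X → G} {l : List X}
    (h : ∀ l', l'.length + 1 = l.length → l'.Sublist l → v l' = w l') : cob v l = cob w l := by
  induction l generalizing v w with
  | nil => simp [cob]
  | cons x l ih =>
    simp only [cob]
    rw [h l (by simp) (by simp), ih]
    intro l' h1 h2
    exact h _ (by simpa using h1) (by simpa using h2)

lemma cob_ofFn {G : Type*} [AddCommGroup G] (c : List X → G) (n : ℕ) (τ : Fin (n+1) → X) :
    cob c (List.ofFn τ) = ∑ i : Fin (n+1), (-1 : ℤ)^(i:ℕ) • c (List.ofFn (fun j => τ (i.succAbove j))) := by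
  induction n generalizing c with
  | zero => simp [cob]
  | succ n ih =>
    rw [List.ofFn_succ, cob, ih, Fin.sum_univ_succ (n := n+1), sub_eq_add_neg,
      ← Finset.sum_neg_distrib]
    congr 1
    · simp
    · refine Finset.sum_congr rfl fun i _ => ?_
      rw [List.ofFn_succ]
      simp [pow_succ]

/-- degenerate lists -/
def Deg (l : List X) : Prop := ¬ l.IsChain (· ≠ ·)

lemma deg_nil : ¬ Deg ([] : List X) := by simp [Deg]
lemma deg_single (x : X) : ¬ Deg [x] := by simp [Deg]
lemma deg_cons_cons {x y : X} {l : List X} : Deg (x :: y :: l) ↔ x = y ∨ Deg (y :: l) := by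
  simp only [Deg, List.isChain_cons_cons]; tauto

lemma deg_cons {x : X} {l : List X} (h : Deg l) : Deg (x :: l) := by
  cases l with
  | nil => exact absurd h deg_nil
  | cons y l => rw [deg_cons_cons]; exact Or.inr h

lemma deg_map (f : X → Y) {l : List X} (h : Deg l) : Deg (l.map f) := by
  induction l with
  | nil => exact absurd h deg_nil
  | cons x l ih =>
    cases l with
    | nil => exact absurd h (deg_single x)
    | cons y l =>
      simp only [List.map_cons] at ih ⊢
      rw [deg_cons_cons] at h ⊢
      rcases h with h | h
      · left; rw [h]
      · right; exact ih h

lemma deg_split (k : ℕ) {l : List X} (h : Deg l) : Deg (l.take (k+1)) ∨ Deg (l.drop k) := by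
  induction k generalizing l with
  | zero => right; simpa using h
  | succ k ih =>
    cases l with
    | nil => exact absurd h deg_nil
    | cons x l =>
    cases l with
    | nil => exact absurd h (deg_single x)
    | cons y l =>
      rw [deg_cons_cons] at h
      rcases h with h | h
      · left; simp [deg_cons_cons, h]
      · rcases ih h with h | h
        · left; rw [List.take_succ_cons]; exact deg_cons h
        · right; simpa using h

lemma bdL_len (l : List X) : (bdL l : Chn F X) ∈ sup F {l' | l'.length + 1 = l.length} := by
  induction l with
  | nil => simp [bdL]
  | cons x l ih =>
    refine Submodule.sub_mem _ (single_mem (by simp) 1) (cons_mem ?_ ih)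
    intro l' h; simp at h ⊢; exact h

lemma bdL_sublist (l : List X) :
    (bdL l : Chn F X) ∈ sup F {l' | l'.length + 1 = l.length ∧ l'.Sublist l} := by
  induction l with
  | nil => simp [bdL]
  | cons x l ih =>
    refine Submodule.sub_mem _ (single_mem (by simp) 1) (cons_mem ?_ ih)
    intro l' h; simpa using h

lemma bdL_deg (l : List X) (h : Deg l) : (bdL l : Chn F X) ∈ sup F {l' | Deg l'} := by
  induction l with
  | nil => exact absurd h deg_nil
  | cons x l ih =>
    cases l with
    | nil => exact absurd h (deg_single x)
    | cons y l =>
      rw [deg_cons_cons] at h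
      rcases h with h | h
      · subst h
        have : (bdL (x :: x :: l) : Chn F X) = cons x (cons x (bdL l)) := by simp [bdL]
        rw [this]
        refine cons_mem (S := {l' | ∃ l'', l' = x :: l''}) ?_ (cons_mem (S := Set.univ) ?_ ?_)
        · rintro l' ⟨l'', rfl⟩; exact deg_cons_cons.2 (Or.inl rfl)
        · intro l' _; exact ⟨l', rfl⟩
        · simp [sup]
      · exact Submodule.sub_mem _ (single_mem h 1) (cons_mem (fun _ => deg_cons) (ih h))

/-! ### cup product (Alexander and Whitney) -/

def crs (p : Z → X) (q : Z → Y) (k : ℕ) (v : List X → F) (w : List Y → F) (l : List Z) : F :=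
  v ((l.take (k+1)).map p) * w ((l.drop k).map q)

lemma cob_mul_left (a : F) (w : List X → F) (l : List X) :
    cob (fun l => a * w l) l = a * cob w l :=
  cob_hom (AddMonoidHom.mulLeft a) w l

lemma cob_crs (p : Z → X) (q : Z → Y) (k : ℕ) (v : List X → F) (w : List Y → F) (l : List Z)
    (hl : k + 2 ≤ l.length) :
    cob (crs p q k v w) l = cob v ((l.take (k+2)).map p) * w ((l.drop (k+1)).map q)
      + (-1)^k * v ((l.take (k+1)).map p) * cob w ((l.drop k).map q) := by
  induction k generalizing v l with
  | zero =>
    match l, hl with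
    | x :: y :: l, _ =>
      have e : (fun l' => crs p q 0 v w (x :: l')) = fun l' => v [p x] * w ((x :: l').map q) := by
        funext l'; simp [crs]
      rw [cob, e, cob_mul_left, cob_map q w]
      simp only [cob, crs, List.take, List.drop, List.map]
      simp
      ring
  | succ k ih =>
    match l, hl with
    | x :: l, hl =>
      have e : (fun l' => crs p q (k+1) v w (x :: l')) = crs p q k (fun l' => v (p x :: l')) w := by
        funext l'; simp [crs]
      rw [cob, e, ih _ _ (by simpa using hl)]
      simp only [crs, List.take_succ_cons, List.drop_succ_cons, List.map_cons, cob]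
      ring

/-! ### shuffle product (Eilenberg and Zilber) -/

variable (m : X → Y → Z)

open Classical in
noncomputable def EL (F : Type*) [CommRing F] : List X → List Y → Chn F Z
  | [], _ => 0
  | _ :: _, [] => 0
  | x :: l, y :: k => cons (m x y) (EL F l (y :: k) + (-1 : F)^l.length • EL F (x :: l) k
      + if l = [] ∧ k = [] then single [] 1 else 0)
  termination_by a b => a.length + b.length

noncomputable def E : Chn F X →ₗ[F] Chn F Y →ₗ[F] Chn F Z :=
  lift (fun a => lift (fun b => EL m F a b))

@[simp] lemma E_single (a : List X) (b : List Y) :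
    E m (single a (1:F)) (single b 1) = EL m F a b := by
  simp [E]

lemma EL_nil_left (b : List Y) : EL m F [] b = 0 := by rw [EL]
lemma EL_nil_right (a : List X) : EL m F a [] = 0 := by cases a <;> rw [EL]

/-- E on lists with chain in second variable-/
lemma E_cons_cons (x : X) (y : Y) {n : ℕ} {c : Chn F X} {d : Chn F Y}
    (hc : c ∈ sup F {l | l.length = n}) :
    E m (cons x c) (cons y d) = cons (m x y) (E m c (cons y d) + (-1 : F)^n • E m (cons x c) d
      + (c [] * d []) • single [] 1) := by
  classical
  -- linear in d
  have key : ∀ k : List Y, E m (cons x c) (cons y (single k 1)) =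
      cons (m x y) (E m c (cons y (single k 1)) + (-1 : F)^n • E m (cons x c) (single k 1)
      + (c [] * (single k (1:F) []) ) • single [] 1) := by
    intro k
    have := lin_congr (F := F) (S := {l : List X | l.length = n})
      (((LinearMap.flip (E m)) (cons y (single k 1))) ∘ₗ cons x)
      ((cons (m x y)) ∘ₗ ((E m).flip (cons y (single k 1)) + ((-1 : F)^n • ((E m).flip (single k 1)) ∘ₗ cons x)
        + ((LinearMap.lsmul F (Chn F Z)).flip (single [] (single k (1:F) []))) ∘ₗ (Finsupp.lapply [])))
      (by
        intro l hl
        replace hl : l.length = n := hl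
        simp only [LinearMap.comp_apply, LinearMap.flip_apply, cons_single, E_single, EL,
          LinearMap.add_apply, LinearMap.smul_apply, hl, Finsupp.lapply_apply, LinearMap.lsmul_apply]
        congr 2
        by_cases h1 : l = [] <;> by_cases h2 : k = [] <;> simp [h1, h2]) hc
    simpa [LinearMap.flip_apply, Finsupp.smul_single] using this
  have := LinearMap.congr_fun (lin_ext (f := (E m (cons x c)) ∘ₗ cons y)
    (g := (cons (m x y)) ∘ₗ ((E m c) ∘ₗ cons y + ((-1 : F)^n • (E m (cons x c)))
        + ((LinearMap.lsmul F (Chn F Z)).flip (single [] (c []))) ∘ₗ (Finsupp.lapply [])))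
    (by
      intro k
      simp only [LinearMap.comp_apply, key, LinearMap.add_apply, LinearMap.smul_apply,
        Finsupp.lapply_apply, LinearMap.flip_apply, LinearMap.lsmul_apply]
      simp [mul_comm])) d
  simpa [mul_comm] using this

lemma nil_mem_sup_zero {c : Chn F X} {S : Set (List X)} (hc : c ∈ sup F S) (h : [] ∉ S) :
    c [] = 0 := by
  by_contra h0
  exact h (hc (by simpa using h0))

lemma bd_EL (a : List X) (b : List Y) :
    bd (EL m F a b) = E m (bdL a) (single b 1) + (-1 : F)^(a.length + 1) • E m (single a 1) (bdL b)
      + ((bdL a : Chn F X) [] * (bdL b : Chn F Y) []) • single [] 1 := by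
  match a, b with
  | [], b =>
    have : E m (single [] (1:F)) = 0 := lin_ext (by simp [EL_nil_left])
    simp [EL_nil_left, bdL, this]
  | x :: l, [] =>
    have : (E m).flip (single [] (1:F)) = 0 := lin_ext (by simp [EL_nil_right])
    have := LinearMap.congr_fun this (bdL (x :: l))
    simp only [LinearMap.flip_apply] at this
    rw [this]; simp [EL_nil_right, bdL]
  | x :: l, y :: k =>
    have h1 := bd_EL l (y :: k)
    have h2 := bd_EL (x :: l) k
    have e1 : E m (bdL (x :: l)) (single (y :: k) (1:F)) = EL m F l (y :: k) -
        E m (cons x (bdL l)) (cons y (single k 1)) := by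
      simp [bdL]
    have e2 : E m (single (x :: l) (1:F)) (bdL (y :: k)) = EL m F (x :: l) k -
        E m (cons x (single l 1)) (cons y (bdL k)) := by
      simp [bdL]
    have e3 : EL m F (x :: l) (y :: k) = E m (cons x (single l 1)) (cons y (single k 1)) := by
      simp
    have hl : (bdL l : Chn F X) ∈ sup F {l' : List X | l'.length = l.length - 1} :=
      sup_mono (fun l' h => by have : l'.length + 1 = l.length := h; show l'.length = _; omega)
        (bdL_len l)
    have hsl : (single l 1 : Chn F X) ∈ sup F {l' : List X | l'.length = l.length} :=
      single_mem (by simp) 1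
    rw [e1, e2, e3, E_cons_cons m x y hsl, E_cons_cons m x y hsl, E_cons_cons m x y hl]
    have n1 : (cons x (bdL l) : Chn F X) [] = 0 :=
      nil_mem_sup_zero (cons_mem (S := Set.univ) (T := {l | l ≠ []}) (by simp) (by simp [sup])) (by simp)
    have n2 : (cons y (bdL k) : Chn F Y) [] = 0 :=
      nil_mem_sup_zero (cons_mem (S := Set.univ) (T := {l | l ≠ []}) (by simp) (by simp [sup])) (by simp)
    have f1 : bd (single (y :: k) (1:F)) = single k 1 - cons y (bdL k) := by simp [bdL]
    rw [bd_cons]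
    simp only [map_add, map_smul, cons_single, E_single, bd_single, h1, h2]
    simp only [bdL, map_sub, LinearMap.sub_apply, cons_single, E_single, Finsupp.sub_apply, n1, n2,
      List.length_cons, map_add, map_smul]
    have hs : (-1 : F)^(l.length + 1) = - (-1)^l.length := by ring
    have hs2 : (-1 : F)^(l.length + 1 + 1) = (-1)^l.length := by ring
    have hm : (-1 : F)^l.length * (-1)^l.length = 1 := by
      rw [← mul_pow]; simp
    cases l with
    | nil =>
      simp [bdL]
      module
    | cons x' l =>
      simp only [List.length_cons, Nat.add_sub_cancel] at *
      rw [hs2, hs] at *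
      have hz : single (x' :: l) (1:F) [] = 0 := by simp
      simp only [hz]
      have hm' : (-1 : F)^l.length * (-1)^l.length = 1 := by
        rw [← mul_pow]; simp
      simp only [smul_add, smul_sub, smul_smul, hm', neg_mul, mul_neg, neg_neg]
      module
  termination_by a.length + b.length

lemma bd_E {k : ℕ} {a : Chn F X} (ha : a ∈ sup F {l | l.length = k + 1}) (b : Chn F Y) :
    bd (E m a b) = E m (bd a) b + (-1 : F)^k • E m a (bd b)
      + ((bd a) [] * (bd b) []) • single [] 1 := by
  have key : ∀ l : List X, l.length = k + 1 → bd (E m (single l 1) b) = E m (bdL l) b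
      + (-1 : F)^k • E m (single l 1) (bd b) + ((bdL l : Chn F X) [] * (bd b) []) • single [] 1 := by
    intro l hl
    have := lin_ext (F := F) (f := bd ∘ₗ (E m (single l 1)))
      (g := E m (bdL l) + (-1 : F)^k • ((E m (single l 1)) ∘ₗ bd) +
        (LinearMap.toSpanSingleton F (Chn F Z) ((bdL l : Chn F X) [] • single [] 1)) ∘ₗ
          (Finsupp.lapply []) ∘ₗ bd) (by
        intro b
        simp [bd_EL, hl, pow_succ, mul_comm])
    have := LinearMap.congr_fun this b
    simpa [mul_comm] using this
  have := lin_congr (F := F) (S := {l : List X | l.length = k+1})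
      (bd ∘ₗ ((E m).flip b))
      (((E m).flip b) ∘ₗ bd + (-1 : F)^k • ((E m).flip (bd b)) +
        (LinearMap.toSpanSingleton F (Chn F Z) ((bd b) [] • single [] 1)) ∘ₗ
          (Finsupp.lapply []) ∘ₗ bd)
      (by
        intro l hl
        have := key l hl
        simpa using this) ha
  simpa using this

/-- support of the shuffle product -/
lemma EL_supp (a : List X) (b : List Y) :
    EL m F a b ∈ sup F {l | l.length + 1 = a.length + b.length ∧
      (∀ e ∈ l, ∃ x ∈ a, ∃ y ∈ b, e = m x y) ∧
      ∀ x a' y b', a = x :: a' → b = y :: b' → ∃ l', l = m x y :: l'} := by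
  match a, b with
  | [], b => simp [EL_nil_left]
  | x :: l, [] => simp [EL_nil_right]
  | x :: l, y :: k =>
    rw [EL]
    have key : ∀ l' : List Z, (l'.length + 1 = l.length + (k.length + 1) ∧ ∀ e ∈ l', ∃ x' ∈ x :: l, ∃ y' ∈ y :: k, e = m x' y')
      → (m x y :: l') ∈ {l_1 : List Z | l_1.length + 1 = (x :: l).length + (y :: k).length ∧
      (∀ e ∈ l_1, ∃ x' ∈ x :: l, ∃ y' ∈ y :: k, e = m x' y') ∧
      ∀ x' a' y' b', x :: l = x' :: a' → y :: k = y' :: b' → ∃ l', l_1 = m x' y' :: l'} := by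
      rintro l' ⟨h1, h2⟩
      refine ⟨by simp at *; omega, ?_, ?_⟩
      · intro e he
        rcases List.mem_cons.1 he with rfl | he
        · exact ⟨x, by simp, y, by simp, rfl⟩
        · exact h2 e he
      · rintro x' a' y' b' h h'
        simp only [List.cons.injEq] at h h'
        exact ⟨l', by rw [h.1, h'.1]⟩
    refine cons_mem key (Submodule.add_mem _ (Submodule.add_mem _ (sup_mono ?_ (EL_supp l (y :: k)))
      (Submodule.smul_mem _ _ (sup_mono ?_ (EL_supp (x :: l) k)))) ?_)
    · rintro l' ⟨h1, h2, -⟩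
      refine ⟨by simpa using h1, fun e he => ?_⟩
      obtain ⟨x', hx', y', hy', rfl⟩ := h2 e he
      exact ⟨x', by simp [hx'], y', hy', rfl⟩
    · rintro l' ⟨h1, h2, -⟩
      refine ⟨by simp at h1 ⊢; omega, fun e he => ?_⟩
      obtain ⟨x', hx', y', hy', rfl⟩ := h2 e he
      exact ⟨x', hx', y', by simp [hy'], rfl⟩
    · split_ifs with h
      · apply single_mem; exact ⟨by simp [h], by simp⟩
      · exact Submodule.zero_mem _
  termination_by a.length + b.length

lemma EL_deg_left (a : List X) (b : List Y) (h : Deg a) : EL m F a b ∈ sup F {l | Deg l} := by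
  match a, b with
  | [], b => simp [EL_nil_left]
  | x :: l, [] => simp [EL_nil_right]
  | [x], y :: k => exact absurd h (deg_single x)
  | x :: x' :: l, y :: k =>
    rw [EL, map_add, map_add, map_smul]
    refine Submodule.add_mem _ (Submodule.add_mem _ ?_ (Submodule.smul_mem _ _ ?_)) ?_
    · rw [deg_cons_cons] at h
      rcases h with rfl | h
      · refine cons_mem ?_ (EL_supp m (x :: l) (y :: k))
        rintro l' ⟨h1, h2, h3⟩
        obtain ⟨l'', rfl⟩ := h3 x l y k rfl rfl
        exact deg_cons_cons.2 (Or.inl rfl)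
      · exact cons_mem (fun _ => deg_cons) (EL_deg_left (x' :: l) (y :: k) h)
    · exact cons_mem (fun _ => deg_cons) (EL_deg_left (x :: x' :: l) k h)
    · simp
  termination_by a.length + b.length

lemma EL_deg_right (a : List X) (b : List Y) (h : Deg b) : EL m F a b ∈ sup F {l | Deg l} := by
  match a, b with
  | [], b => simp [EL_nil_left]
  | x :: l, [] => simp [EL_nil_right]
  | x :: l, [y] => exact absurd h (deg_single y)
  | x :: l, y :: y' :: k =>
    rw [EL, map_add, map_add, map_smul]
    refine Submodule.add_mem _ (Submodule.add_mem _ ?_ (Submodule.smul_mem _ _ ?_)) ?_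
    · exact cons_mem (fun _ => deg_cons) (EL_deg_right l (y :: y' :: k) h)
    · rw [deg_cons_cons] at h
      rcases h with rfl | h
      · refine cons_mem ?_ (EL_supp m (x :: l) (y :: k))
        rintro l' ⟨h1, h2, h3⟩
        obtain ⟨l'', rfl⟩ := h3 x l y k rfl rfl
        exact deg_cons_cons.2 (Or.inl rfl)
      · exact cons_mem (fun _ => deg_cons) (EL_deg_right (x :: l) (y' :: k) h)
    · simp
  termination_by a.length + b.length

lemma EL_single_left (x : X) (b : List Y) (hb : b ≠ []) :
    EL m F [x] b = single (b.map (m x)) 1 := by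
  induction b with
  | nil => exact absurd rfl hb
  | cons y b ih =>
    rw [EL, EL_nil_left]
    cases b with
    | nil => simp [EL_nil_right]
    | cons y' b => rw [ih (by simp)]; simp

lemma lift_cons (v : List X → F) (x : X) (c : Chn F X) :
    lift v (cons x c) = lift (fun l' => v (x :: l')) c := by
  have : lift v ∘ₗ cons x = lift (F := F) (fun l' => v (x :: l')) := by
    apply lin_ext; intro l; simp
  exact LinearMap.congr_fun this c

lemma pair_EL (p : Z → X) (q : Z → Y) (hp : ∀ x y, p (m x y) = x) (hq : ∀ x y, q (m x y) = y)
    (k : ℕ) (v : List X → F) (w : List Y → F) (a : List X) (b : List Y) (ha : a.length = k + 1)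
    (hb : b ≠ []) (hv : ∀ l, l.length = k + 1 → Deg l → (∀ x ∈ l, x ∈ a) → v l = 0) :
    lift (crs p q k v w) (EL m F a b) = v a * w b := by
  induction k generalizing v a with
  | zero =>
    match a, ha with
    | [x], _ =>
      rw [EL_single_left m x b hb]
      have e : (q ∘ m x) = id := by funext y; simp [hq]
      cases b with
      | nil => exact absurd rfl hb
      | cons y b => simp [crs, hp, hq, e]
  | succ k ih =>
    match a, b, ha, hb with
    | x :: l, y :: b, ha, hb =>
      have hl : l.length = k + 1 := by simpa using ha
      rw [EL]; simp only [map_add, map_smul]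
      have hne : ¬ (l = [] ∧ b = []) := by rintro ⟨rfl, -⟩; simp at hl
      have e : (fun l' => crs p q (k+1) v w (m x y :: l')) =
          crs p q k (fun l' => v (x :: l')) w := by
        funext l'; simp [crs, hp]
      have h2 : lift (crs p q (k+1) v w) (cons (m x y) (EL m F (x :: l) b)) = 0 := by
        rw [lift_cons, e]
        refine lin_zero _ ?_ (EL_supp m (x :: l) b)
        rintro l' ⟨h1, h2, h3⟩
        simp only [lift_single, one_smul, crs]
        cases b with
        | nil =>
          cases l' with
          | nil => simp at h1; rw [h1] at hl; simp at hl
          | cons z l' =>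
            obtain ⟨_, _, _, h, _⟩ := h2 z (by simp)
            simp at h
        | cons y' b =>
          obtain ⟨l'', rfl⟩ := h3 x l y' b rfl rfl
          rw [hv, zero_mul]
          · simp at h1 ⊢; omega
          · simp only [List.take_succ_cons, List.map_cons, hp]
            exact deg_cons_cons.2 (Or.inl rfl)
          · intro x' hx'
            rcases List.mem_cons.1 hx' with rfl | hx'
            · simp
            · obtain ⟨z, hz, rfl⟩ := List.mem_map.1 hx'
              obtain ⟨x1, hx1, y1, hy1, rfl⟩ := h2 z (List.mem_of_mem_take hz)
              rw [hp]; exact hx1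
      rw [h2, lift_cons, e, ih (fun l' => v (x :: l')) l hl]
      · simp [hne]
      · intro l' h1 h2 h3
        refine hv _ (by simp [h1]) (deg_cons h2) ?_
        intro x' hx'
        rcases List.mem_cons.1 hx' with rfl | hx'
        · simp
        · simp [h3 x' hx']


end alg
end Ch
end MeanDimPaper

namespace MeanDimPaper
namespace Ch

open Finsupp

section cls
variable {F : Type*} [CommRing F] {X Y Z : Type*}

structure Coc (S T : Set (List X)) (k : ℕ) (v : List X → F) : Prop where
  van : ∀ l ∈ S, l.length = k + 1 → (l ∈ T ∨ Deg l) → v l = 0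
  coc : ∀ l ∈ S, l.length = k + 2 → cob v l = 0

structure Cyc (S T : Set (List X)) (k : ℕ) (z : Chn F X) : Prop where
  supp : z ∈ sup F {l | l ∈ S ∧ l.length = k + 1}
  bdy : bd z ∈ sup F {l | l ∈ S ∧ l.length = k ∧ (l ∈ T ∨ Deg l)}

def Hered (S : Set (List X)) : Prop := ∀ l l', l ∈ S → (∀ x ∈ l', x ∈ l) → l' ∈ S

lemma hh {W : Type*} {S : Set (List W)} (f : Z → W) (hS : Hered S) {l l' : List Z}
      (h : ∀ x ∈ l', x ∈ l) (hl : l.map f ∈ S) : l'.map f ∈ S := by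
  refine hS _ _ hl ?_
  intro x hx
  obtain ⟨z, hz, rfl⟩ := List.mem_map.1 hx
  exact List.mem_map.2 ⟨z, h z hz, rfl⟩

lemma single_mem' {S : Set (List X)} {l : List X} {a : F} (h : l ∈ S) : single l a ∈ sup F S :=
  Finsupp.single_mem_supported F a h

lemma prod_coc {SX TX : Set (List X)} {SY TY : Set (List Y)} {SZ TZ : Set (List Z)}
    (p : Z → X) (q : Z → Y) (hSX : Hered SX) (hSY : Hered SY) (hTX : Hered TX) (hTY : Hered TY)
    (h1 : ∀ l ∈ SZ, l.map p ∈ SX) (h2 : ∀ l ∈ SZ, l.map q ∈ SY)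
    (h3 : ∀ l ∈ TZ, l.map p ∈ TX ∨ l.map q ∈ TY) {k j : ℕ} {v : List X → F} {w : List Y → F}
    (hv : Coc SX TX k v) (hw : Coc SY TY j w) : Coc SZ TZ (k + j) (crs p q k v w) := by
  constructor
  · intro l hl hlen hT
    have hvs : ∀ {n}, (l.take n).map p ∈ SX := hh p hSX (fun _ => List.mem_of_mem_take) (h1 l hl)
    have hws : ∀ {n}, (l.drop n).map q ∈ SY := hh q hSY (fun _ => List.mem_of_mem_drop) (h2 l hl)
    have hvl : ((l.take (k+1)).map p).length = k + 1 := by simp; omega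
    have hwl : ((l.drop k).map q).length = j + 1 := by simp; omega
    have key : ((l.take (k+1)).map p ∈ TX ∨ Deg ((l.take (k+1)).map p)) ∨
        ((l.drop k).map q ∈ TY ∨ Deg ((l.drop k).map q)) := by
      rcases hT with hT | hT
      · rcases h3 l hT with h | h
        · exact Or.inl (Or.inl (hh p hTX (fun _ => List.mem_of_mem_take) h))
        · exact Or.inr (Or.inl (hh q hTY (fun _ => List.mem_of_mem_drop) h))
      · rcases deg_split k hT with h | h
        · exact Or.inl (Or.inr (deg_map _ h))
        · exact Or.inr (Or.inr (deg_map _ h))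
    rw [crs]
    rcases key with h | h
    · rw [hv.van _ hvs hvl h, zero_mul]
    · rw [hw.van _ hws hwl h, mul_zero]
  · intro l hl hlen
    have hvs : ∀ {n}, (l.take n).map p ∈ SX := hh p hSX (fun _ => List.mem_of_mem_take) (h1 l hl)
    have hws : ∀ {n}, (l.drop n).map q ∈ SY := hh q hSY (fun _ => List.mem_of_mem_drop) (h2 l hl)
    rw [cob_crs _ _ _ _ _ _ (by omega), hv.coc _ hvs (by simp; omega),
      hw.coc _ hws (by simp; omega)]
    simp

lemma lin_mem₂ {M : Type*} [AddCommGroup M] [Module F M] {S : Set (List X)} {S' : Set (List Y)}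
    (f : Chn F X →ₗ[F] Chn F Y →ₗ[F] M)
    {p : Submodule F M} (h : ∀ l ∈ S, ∀ l' ∈ S', f (single l 1) (single l' 1) ∈ p)
    {c : Chn F X} (hc : c ∈ sup F S) {d : Chn F Y} (hd : d ∈ sup F S') :
    f c d ∈ p :=
  lin_mem (f.flip d) (S := S) (fun l hl => lin_mem (f (single l 1)) (h l hl) hd) hc

lemma prod_cyc {SX TX : Set (List X)} {SY TY : Set (List Y)} {SZ TZ : Set (List Z)}
    (m : X → Y → Z)
    (h1 : ∀ a ∈ SX, ∀ b ∈ SY, ∀ l : List Z, (∀ e ∈ l, ∃ x ∈ a, ∃ y ∈ b, e = m x y) → l ∈ SZ)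
    (h2 : ∀ a ∈ TX, ∀ b ∈ SY, ∀ l : List Z, (∀ e ∈ l, ∃ x ∈ a, ∃ y ∈ b, e = m x y) → l ∈ TZ)
    (h3 : ∀ a ∈ SX, ∀ b ∈ TY, ∀ l : List Z, (∀ e ∈ l, ∃ x ∈ a, ∃ y ∈ b, e = m x y) → l ∈ TZ)
    (hn : [] ∈ SZ) (hn' : [] ∈ TZ)
    {k j : ℕ} {z : Chn F X} {w : Chn F Y}
    (hz : Cyc SX TX k z) (hw : Cyc SY TY j w) : Cyc SZ TZ (k + j) (E m z w) := by
  constructor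
  · refine lin_mem₂ (E m) ?_ hz.supp hw.supp
    rintro a ⟨ha, hal⟩ b ⟨hb, hbl⟩
    rw [E_single]
    refine sup_mono ?_ (EL_supp m a b)
    rintro l ⟨h, h', -⟩
    exact ⟨h1 a ha b hb l h', by omega⟩
  · rw [bd_E m (k := k) (sup_mono (fun l h => h.2) hz.supp)]
    refine Submodule.add_mem _ (Submodule.add_mem _ ?_ (Submodule.smul_mem _ _ ?_)) ?_
    · refine lin_mem₂ (E m) ?_ hz.bdy hw.supp
      rintro a ⟨ha, hal, hT⟩ b ⟨hb, hbl⟩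
      rw [E_single]
      rcases hT with hT | hT
      · refine sup_mono ?_ (EL_supp m a b)
        rintro l ⟨h, h', -⟩
        exact ⟨h1 a ha b hb l h', by omega, Or.inl (h2 a hT b hb l h')⟩
      · have := EL_deg_left (F := F) m a b hT
        have := (Finsupp.mem_supported _ _).1 this
        intro l hl
        obtain ⟨h, h', -⟩ := EL_supp (F := F) m a b hl
        exact ⟨h1 a ha b hb l h', by omega, Or.inr (this hl)⟩
    · refine lin_mem₂ (E m) ?_ hz.supp hw.bdy
      rintro a ⟨ha, hal⟩ b ⟨hb, hbl, hT⟩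
      rw [E_single]
      rcases hT with hT | hT
      · refine sup_mono ?_ (EL_supp m a b)
        rintro l ⟨h, h', -⟩
        exact ⟨h1 a ha b hb l h', by omega, Or.inl (h3 a ha b hT l h')⟩
      · have := EL_deg_right (F := F) m a b hT
        have := (Finsupp.mem_supported _ _).1 this
        intro l hl
        obtain ⟨h, h', -⟩ := EL_supp (F := F) m a b hl
        exact ⟨h1 a ha b hb l h', by omega, Or.inr (this hl)⟩
    · rcases Nat.eq_zero_or_pos k with rfl | hk
      · rcases Nat.eq_zero_or_pos j with rfl | hj
        · exact Submodule.smul_mem _ _ (single_mem' ⟨hn, rfl, Or.inl hn'⟩)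
        · rw [nil_mem_sup_zero hw.bdy, mul_zero, zero_smul]
          · exact Submodule.zero_mem _
          · rintro ⟨_, h, _⟩; simp at h; omega
      · rw [nil_mem_sup_zero hz.bdy, zero_mul, zero_smul]
        · exact Submodule.zero_mem _
        · rintro ⟨_, h, _⟩; simp at h; omega

lemma prod_ev {SX TX : Set (List X)} {S' T' : Set (List X)} {SY TY : Set (List Y)}
    (p : Z → X) (q : Z → Y) (m : X → Y → Z) (hp : ∀ x y, p (m x y) = x) (hq : ∀ x y, q (m x y) = y)
    (hSX : Hered SX) (hS' : S' ⊆ SX)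
    {k j : ℕ} {v : List X → F} (w : List Y → F)
    (hv : Coc SX TX k v) {z : Chn F X} {z' : Chn F Y} (hz : Cyc S' T' k z) (hz' : Cyc SY TY j z') :
    lift (crs p q k v w) (E m z z') = lift v z * lift w z' := by
  have key : ∀ a ∈ {l | l ∈ S' ∧ l.length = k + 1}, ∀ b ∈ {l | l ∈ SY ∧ l.length = j + 1},
    lift (crs p q k v w) (EL m F a b) = v a * w b := by
    rintro a ⟨ha, hal⟩ b ⟨hb, hbl⟩
    refine pair_EL m p q hp hq k v w a b hal ?_ ?_
    · rintro rfl; simp at hbl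
    · intro l h1 h2 h3
      exact hv.van l (hSX a l (hS' ha) h3) h1 (Or.inr h2)
  have k2 : ∀ a ∈ {l | l ∈ S' ∧ l.length = k + 1},
      lift (crs p q k v w) (E m (single a 1) z') = v a * lift w z' := by
    intro a ha
    have := lin_congr (lift (crs p q k v w) ∘ₗ (E m (single a 1))) (v a • lift w)
      (by intro b hb; simpa using key a ha b hb) hz'.supp
    simpa using this
  have := lin_congr (lift (crs p q k v w) ∘ₗ ((E m).flip z')) ((lift w z') • lift v)
      (by intro b hb; simpa [mul_comm] using k2 b hb) hz.supp
  simpa [mul_comm] using this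

/-! ### sorting -/

section sort
variable {ι : Type*} [LinearOrder ι]

noncomputable def insL (F : Type*) [CommRing F] (x : ι) : List ι → Chn F ι
  | [] => single [x] 1
  | y :: m => if x < y then single (x :: y :: m) 1 else if x = y then 0 else - cons y (insL F x m)

lemma insL_of_lt (x : ι) (l : List ι) (h : ∀ y ∈ l, x < y) : insL F x l = single (x :: l) 1 := by
  cases l with
  | nil => rfl
  | cons y l => rw [insL, if_pos (h y (by simp))]

lemma bd_insL (x : ι) (m : List ι) (hm : m.Pairwise (· < ·)) :
    bd (insL F x m) = single m 1 - lift (insL F x) (bdL m : Chn F ι) := by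
  induction m with
  | nil => simp [insL, bdL]
  | cons y m ih =>
    rw [List.pairwise_cons] at hm
    rw [insL]
    split_ifs with h1 h2
    · have : lift (insL F x) (bdL (y :: m) : Chn F ι) = cons x (bdL (y :: m)) := by
        refine lin_congr _ _ ?_ (bdL_sublist (y :: m))
        rintro l' ⟨h2, h3⟩
        rw [lift_single, one_smul, cons_single, insL_of_lt]
        intro z hz
        rcases List.mem_cons.1 (h3.subset hz) with rfl | h
        · exact h1
        · exact h1.trans (hm.1 z h)
      rw [this, bd_single]; rfl
    · subst h2
      have : lift (insL F x) (cons x (bdL m : Chn F ι)) = 0 := by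
        rw [cons]
        have : lift (insL F x) ∘ₗ (cons x : Chn F ι →ₗ[F] _) = 0 := lin_ext (by intro l; simp [insL])
        exact LinearMap.congr_fun this _
      rw [bdL, map_sub, this, lift_single, insL_of_lt x m hm.1]; simp
    · have : ∀ c : Chn F ι, lift (insL F x) (cons y c) = - cons y (lift (insL F x) c) := by
        intro c
        have : lift (insL F x) ∘ₗ cons y = - (cons y ∘ₗ lift (insL F x)) :=
          lin_ext (by intro l; simp [insL, h1, h2])
        exact LinearMap.congr_fun this _
      rw [map_neg, bd_cons, ih hm.2, bdL, map_sub (lift (F := F) (insL F x)), this, lift_single]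
      simp only [map_sub, cons_single, one_smul]
      abel

lemma insL_supp (x : ι) (m : List ι) (hm : m.Pairwise (· < ·)) :
    insL F x m ∈ sup F {l | l.Pairwise (· < ·) ∧ l.length = m.length + 1 ∧ ∀ y ∈ l, y = x ∨ y ∈ m} := by
  induction m with
  | nil => exact single_mem' ⟨by simp, by simp, by simp⟩
  | cons y m ih =>
    have hm' := hm
    rw [List.pairwise_cons] at hm
    rw [insL]
    split_ifs with h1 h2
    · refine single_mem' ⟨?_, by simp, by simp⟩
      rw [List.pairwise_cons]
      refine ⟨?_, hm'⟩
      intro z hz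
      rcases List.mem_cons.1 hz with rfl | h
      · exact h1
      · exact h1.trans (hm.1 z h)
    · exact Submodule.zero_mem _
    · refine Submodule.neg_mem _ (cons_mem ?_ (ih hm.2))
      rintro l ⟨a, b, c⟩
      refine ⟨?_, by simp [b], ?_⟩
      · rw [List.pairwise_cons]
        refine ⟨?_, a⟩
        intro z hz
        rcases c z hz with rfl | h
        · exact lt_of_le_of_ne (not_lt.1 h1) (Ne.symm h2)
        · exact hm.1 z h
      · intro z hz
        rcases List.mem_cons.1 hz with rfl | h
        · simp
        · rcases c z h with h | h <;> simp [h]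

noncomputable def srt (F : Type*) [CommRing F] : List ι → Chn F ι
  | [] => single [] 1
  | x :: l => lift (insL F x) (srt F l)

lemma srt_supp (l : List ι) :
    srt F l ∈ sup F {l' | l'.Pairwise (· < ·) ∧ l'.length = l.length ∧ ∀ y ∈ l', y ∈ l} := by
  induction l with
  | nil => exact single_mem' ⟨by simp, by simp, by simp⟩
  | cons x l ih =>
    rw [srt]
    refine lift_mem ?_ ih
    rintro l' ⟨a, b, c⟩
    refine sup_mono ?_ (insL_supp x l' a)
    rintro l'' ⟨a', b', c'⟩
    refine ⟨a', by simp [b', b], ?_⟩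
    intro y hy
    rcases c' y hy with h | h
    · simp [h]
    · simp [c y h]

lemma srt_zero (l : List ι) (h : ¬ l.Nodup) : srt F l = 0 := by
  have : srt F l ∈ sup F (∅ : Set (List ι)) := by
    refine sup_mono ?_ (srt_supp l)
    rintro l' ⟨a, b, c⟩
    have hn : l'.Nodup := List.Pairwise.imp (fun h => ne_of_lt h) a
    have := (hn.subperm c).perm_of_length_le (le_of_eq b.symm)
    exact h (this.nodup_iff.1 hn)
  simpa [sup] using this

lemma bd_srt (l : List ι) : bd (srt F l) = lift (srt F) (bdL l : Chn F ι) := by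
  induction l with
  | nil => simp [srt, bdL]
  | cons x l ih =>
    have h1 : ∀ c : Chn F ι, lift (srt F) (cons x c) = lift (insL F x) (lift (srt F) c) := by
      intro c
      have : lift (srt F) ∘ₗ cons x = lift (insL F x) ∘ₗ lift (srt F) :=
        lin_ext (by intro l; simp [srt])
      exact LinearMap.congr_fun this _
    have h2 : bd (lift (insL F x) (srt F l)) = srt F l - lift (insL F x) (bd (srt F l)) := by
      have := lin_congr (bd ∘ₗ lift (insL F x)) (LinearMap.id - lift (insL F x) ∘ₗ bd)
        (by intro m hm; simpa using bd_insL x m hm)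
        (sup_mono (fun l h => h.1) (srt_supp (F := F) l))
      simpa using this
    rw [srt, h2, ih, bdL, map_sub, h1, lift_single, one_smul]

end sort

/-! ### the dimension lemma -/

section dim
variable {ι : Type*} [LinearOrder ι]

noncomputable def mapC (f : X → Y) : Chn F X →ₗ[F] Chn F Y := lift (fun l => single (l.map f) 1)

lemma bd_mapC (f : X → Y) (c : Chn F X) : bd (mapC f c) = mapC f (bd c) := by
  have : bd ∘ₗ mapC f = mapC f ∘ₗ bd (F := F) := by
    apply lin_ext
    intro l
    simp only [LinearMap.comp_apply, mapC, lift_single, one_smul, bd_single]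
    induction l with
    | nil => simp [bdL]
    | cons x l ih =>
      have : ∀ c : Chn F X, mapC f (cons x c) = cons (f x) (mapC f c) := by
        intro c
        have : mapC f ∘ₗ cons x = cons (f x) ∘ₗ mapC (F := F) f :=
          lin_ext (by intro l; simp [mapC])
        exact LinearMap.congr_fun this _
      change _ = mapC f (bdL (x :: l))
      rw [List.map_cons, bdL, bdL, map_sub, this, ih]
      simp [mapC]
  exact LinearMap.congr_fun this _

variable (b : X → ι) (P : ι → X)

noncomputable def th (F : Type*) [CommRing F] : Chn F X →ₗ[F] Chn F X :=
  lift (fun l => mapC P (srt F (l.map b)))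

lemma bd_th (c : Chn F X) : bd (th b P F c) = th b P F (bd c) := by
  have : bd ∘ₗ th b P F = th b P F ∘ₗ bd := by
    apply lin_ext
    intro l
    have e : th b P F = mapC P ∘ₗ lift (srt F) ∘ₗ mapC b := lin_ext (by intro l; simp [th, mapC])
    rw [e]
    have e2 : mapC b (single l (1:F)) = single (l.map b) 1 := by simp [mapC]
    simp only [LinearMap.comp_apply]
    rw [bd_mapC, ← bd_mapC b, e2, lift_single, one_smul, bd_srt, bd_single]
  exact LinearMap.congr_fun this _

noncomputable def Hn (F : Type*) [CommRing F] : ℕ → (Chn F X →ₗ[F] Chn F X)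
  | 0 => 0
  | n + 1 => lift (fun l => match l with
    | [] => 0
    | x :: l => cons x (th b P F (single (x :: l) 1) - single (x :: l) 1 - Hn F n (bdL (x :: l))))

lemma Hn_spec (n : ℕ) (c : Chn F X) (hc : c ∈ sup F {l | l.length = n}) (h : bd c = 0) :
    bd (Hn b P F n c) = th b P F c - c := by
  induction n generalizing c with
  | zero =>
    have : th b P F c = c := by
      refine lin_congr (th b P F) LinearMap.id ?_ hc
      intro l hl
      rw [List.length_eq_zero_iff.1 hl]
      simp [th, srt, mapC]
    simp [Hn, this]
  | succ n ih =>
    have := lin_congr (bd ∘ₗ Hn b P F (n+1)) (th b P F - LinearMap.id - Hn b P F n ∘ₗ bd)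
      (S := {l | l.length = n + 1}) (by
      intro l hl
      match l, hl with
      | x :: l, hl =>
        simp only [LinearMap.comp_apply, Hn, lift_single, one_smul, bd_cons, LinearMap.sub_apply,
          LinearMap.id_apply, bd_single]
        rw [sub_eq_self]
        have hl' : l.length = n := by simpa using hl
        have hw : bd ((th b P F (single (x :: l) 1)) - single (x :: l) 1 - Hn b P F n (bdL (x :: l))) = 0 := by
          rw [map_sub, map_sub, bd_th, bd_single, ih _ (sup_mono ?_ (bdL_len (x :: l))) (bd_bdL _)]
          · simp
          · intro l' hl''
            replace hl'' : l'.length + 1 = _ := hl''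
            show l'.length = n
            simp at hl''; omega
        rw [hw, map_zero]) hc
    simp only [LinearMap.comp_apply, LinearMap.sub_apply, h] at this
    simpa using this

lemma Hn_spec' (n : ℕ) (c : Chn F X) (hc : c ∈ sup F {l | l.length = n + 1}) :
    bd (Hn b P F (n+1) c) + Hn b P F n (bd c) = th b P F c - c := by
  have := lin_congr (bd ∘ₗ Hn b P F (n+1) + Hn b P F n ∘ₗ bd) (th b P F - LinearMap.id)
      (S := {l | l.length = n + 1}) (by
      intro l hl
      match l, hl with
      | x :: l, hl =>
        simp only [LinearMap.comp_apply, Hn, lift_single, one_smul, bd_cons, LinearMap.sub_apply,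
          LinearMap.id_apply, bd_single, LinearMap.add_apply]
        have hl' : l.length = n := by simpa using hl
        have hw : bd ((th b P F (single (x :: l) 1)) - single (x :: l) 1 - Hn b P F n (bdL (x :: l))) = 0 := by
          rw [map_sub, map_sub, bd_th, bd_single, Hn_spec b P n _ (sup_mono ?_ (bdL_len (x :: l))) (bd_bdL _)]
          · simp
          · intro l' hl''
            replace hl'' : l'.length + 1 = _ := hl''
            show l'.length = n
            simp at hl''; omega
        rw [hw, map_zero]; simp) hc
  simpa using this

lemma deg_not_nodup {l : List X} (h : Deg l) : ¬ l.Nodup := by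
  intro hn
  exact h (List.Pairwise.isChain hn)

lemma Hn_supp (n : ℕ) (l : List X) (hl : l.length = n) :
    Hn b P F n (single l 1) ∈ sup F {l' | l'.length = n + 1 ∧
      (∀ x ∈ l', x ∈ l ∨ ∃ y ∈ l, x = P (b y)) ∧ (Deg l → Deg l')} := by
  induction n generalizing l with
  | zero => simp [Hn]
  | succ n ih =>
    match l, hl with
    | x :: l, hl =>
      have hl' : l.length = n := by simpa using hl
      simp only [Hn, lift_single, one_smul]
      refine cons_mem (S := {l' | l'.length = n + 1 ∧
        (∀ z ∈ l', z ∈ (x :: l) ∨ ∃ y ∈ (x :: l), z = P (b y)) ∧ (Deg (x :: l) → Deg l')}) ?_ ?_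
      · rintro l' ⟨a, b, c⟩
        refine ⟨by simp [a], ?_, fun h => deg_cons (c h)⟩
        intro z hz
        rcases List.mem_cons.1 hz with rfl | hz
        · left; simp
        · exact b z hz
      · refine Submodule.sub_mem _ (Submodule.sub_mem _ ?_ ?_) ?_
        · by_cases hd : Deg (x :: l)
          · have : th b P F (single (x :: l) 1) = 0 := by
              rw [th, lift_single, one_smul, srt_zero _ (deg_not_nodup (deg_map _ hd)), map_zero]
            rw [this]; exact Submodule.zero_mem _
          · rw [th, lift_single, one_smul]
            refine lift_mem ?_ (srt_supp _)
            rintro l' ⟨_, h1, h2⟩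
            refine single_mem' ⟨by simpa [hl'] using h1, ?_, fun h => absurd h hd⟩
            intro z hz
            obtain ⟨i, hi, rfl⟩ := List.mem_map.1 hz
            obtain ⟨y, hy, rfl⟩ := List.mem_map.1 (h2 i hi)
            exact Or.inr ⟨y, hy, rfl⟩
        · exact single_mem' ⟨hl, fun z hz => Or.inl hz, id⟩
        · have key : (bdL (x :: l) : Chn F X) ∈ sup F {l' | (l'.length + 1 = (x :: l).length ∧
            l'.Sublist (x :: l)) ∧ (Deg (x :: l) → Deg l')} := by
            intro l' hl'
            refine ⟨bdL_sublist (x :: l) hl', fun h => bdL_deg (x :: l) h hl'⟩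
          refine lin_mem (Hn b P F n) ?_ key
          rintro l' ⟨⟨h1, h2⟩, h3⟩
          refine sup_mono ?_ (ih l' (by simp at h1; omega))
          rintro l'' ⟨g1, g2, g3⟩
          refine ⟨g1, ?_, fun h => g3 (h3 h)⟩
          intro z hz
          rcases g2 z hz with h | ⟨y, hy, h⟩
          · exact Or.inl (h2.subset h)
          · exact Or.inr ⟨y, h2.subset hy, h⟩

theorem dim_kill {S T S' T' : Set (List X)} {k : ℕ} {u : List X → F} {z : Chn F X}
    (hu : Coc S T k u) (hz : Cyc S' T' k z)
    (h1 : ∀ l ∈ S', ∀ l', (∀ x ∈ l', x ∈ l ∨ ∃ y ∈ l, x = P (b y)) → l' ∈ S)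
    (h2 : ∀ l ∈ T', ∀ l', (∀ x ∈ l', x ∈ l ∨ ∃ y ∈ l, x = P (b y)) → l' ∈ T)
    (h3 : ∀ l ∈ S', l.length = k + 1 → ¬ (l.map b).Nodup) : lift u z = 0 := by
  have e1 : th b P F z = 0 := by
    refine lin_zero _ ?_ hz.supp
    rintro l ⟨hl, hk⟩
    rw [th, lift_single, one_smul, srt_zero _ (h3 l hl hk), map_zero]
  have e2 := Hn_spec' b P k z (sup_mono (fun l h => h.2) hz.supp)
  have e3 : lift u (bd (Hn b P F (k+1) z)) = 0 := by
    have m1 : Hn b P F (k+1) z ∈ sup F {l | l ∈ S ∧ l.length = k + 2} := by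
      refine lin_mem (Hn b P F (k+1)) ?_ hz.supp
      rintro l ⟨hl, hk⟩
      refine sup_mono ?_ (Hn_supp b P (k+1) l hk)
      rintro l' ⟨g1, g2, g3⟩
      exact ⟨h1 l hl l' g2, g1⟩
    refine lin_zero (lift u ∘ₗ bd) ?_ m1
    rintro l ⟨hl, hk⟩
    rw [LinearMap.comp_apply, bd_single, ← cob_eq, hu.coc l hl hk]
  have e4 : lift u (Hn b P F k (bd z)) = 0 := by
    refine lin_zero (lift u ∘ₗ Hn b P F k) ?_ hz.bdy
    rintro l ⟨hl, hk, hT⟩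
    rw [LinearMap.comp_apply]
    refine lin_zero (lift u) ?_ (Hn_supp b P k l hk)
    rintro l' ⟨g1, g2, g3⟩
    rw [lift_single, one_smul, hu.van l' (h1 l hl l' g2) g1]
    rcases hT with hT | hT
    · exact Or.inl (h2 l hT l' g2)
    · exact Or.inr (g3 hT)
  have := congrArg (lift u) e2
  rw [map_add, e3, e4, e1, zero_sub, map_neg] at this
  simpa using this.symm

end dim

end cls
end Ch
end MeanDimPaper

namespace MeanDimPaper
namespace Ch

open Finsupp
open scoped ENNReal

section metric

def Sm {X : Type*} [PseudoMetricSpace X] (ε : ℝ) : Set (List X) :=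
  {l | ∀ x ∈ l, ∀ y ∈ l, dist x y < ε}

def Nr {X : Type*} [PseudoMetricSpace X] (A : Set X) (ε : ℝ) : Set (List X) :=
  {l | ∀ x ∈ l, ∃ a ∈ A, dist x a < ε}

def TN {K : Type*} [PseudoMetricSpace K] (N : ℕ) (A : Set K) (ε : ℝ) : Set (List (Fin N → K)) :=
  {l | l = [] ∨ ∃ i, l.map (fun x => x i) ∈ Nr A ε}

lemma hered_Sm {X : Type*} [PseudoMetricSpace X] (ε : ℝ) : Hered (Sm (X := X) ε) :=
  fun _ _ h h' x hx y hy => h x (h' x hx) y (h' y hy)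

lemma hered_Nr {X : Type*} [PseudoMetricSpace X] (A : Set X) (ε : ℝ) : Hered (Nr (X := X) A ε) :=
  fun _ _ h h' x hx => h x (h' x hx)

lemma hered_TN {X : Type*} [PseudoMetricSpace X] (N : ℕ) (A : Set X) (ε : ℝ) :
    Hered (TN (K := X) N A ε) := by
  rintro l l' (h | ⟨i, h⟩) h'
  · subst h
    left
    exact List.eq_nil_iff_forall_not_mem.2 (fun x hx => by simpa using h' x hx)
  · right
    exact ⟨i, hh _ (hered_Nr A ε) h' h⟩

lemma nil_Sm {X : Type*} [PseudoMetricSpace X] (ε : ℝ) : [] ∈ (Sm (X := X) ε) := by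
  intro x hx; simp at hx

lemma Sm_mono {X : Type*} [PseudoMetricSpace X] {ε δ : ℝ} (h : δ ≤ ε) :
    (Sm (X := X) δ) ⊆ Sm ε := fun _ hl x hx y hy => (hl x hx y hy).trans_le h

lemma Nr_mono {X : Type*} [PseudoMetricSpace X] {A : Set X} {ε δ : ℝ} (h : δ ≤ ε) :
    (Nr (X := X) A δ) ⊆ Nr A ε := fun _ hl x hx => by
  obtain ⟨a, ha, h'⟩ := hl x hx
  exact ⟨a, ha, h'.trans_le h⟩

variable {F : Type*} [Field F] {K : Type*} [MetricSpace K]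

lemma pow_cls {A : Set K} {ε : ℝ} (hε : 0 < ε) {k : ℕ} {v : List K → F}
    (hv : Coc (Sm ε) (Nr A ε) k v)
    (hz : ∀ δ, 0 < δ → δ ≤ ε → ∃ z : Chn F K, Cyc (Sm δ) (Nr A δ) k z ∧ lift v z ≠ 0) (N : ℕ) :
    ∃ u : List (Fin N → K) → F, Coc (Sm ε) (TN N A ε) (N * k) u ∧
      ∀ δ, 0 < δ → δ ≤ ε → ∃ z : Chn F (Fin N → K), Cyc (Sm δ) (TN N A δ) (N * k) z ∧
        lift u z ≠ 0 := by
  induction N with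
  | zero =>
    refine ⟨fun _ => 1, ⟨?_, ?_⟩, ?_⟩
    · rintro l - hl ((h | ⟨i, -⟩) | h)
      · subst h; simp at hl
      · exact i.elim0
      · rw [zero_mul, zero_add, List.length_eq_one_iff] at hl
        obtain ⟨x, rfl⟩ := hl
        exact absurd h (deg_single x)
    · intro l _ hl
      rw [zero_mul, zero_add, List.length_eq_two] at hl
      obtain ⟨x, y, rfl⟩ := hl
      simp [cob]
    · intro δ hδ _
      refine ⟨single [Fin.elim0] 1, ⟨single_mem' ⟨?_, by simp⟩, ?_⟩, by simp⟩
      · intro x hx y hy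
        rw [Subsingleton.elim x y, dist_self]; exact hδ
      · simp only [bd_single, bdL, map_zero, sub_zero]
        exact single_mem' ⟨nil_Sm δ, by simp, Or.inl (Or.inl rfl)⟩
  | succ N ih =>
    obtain ⟨u, hu, hu'⟩ := ih
    have e : (N + 1) * k = k + N * k := by ring
    rw [e]
    have hp : ∀ (x : K) (y : Fin N → K), (Fin.cons x y : Fin (N+1) → K) 0 = x := by simp
    have hq : ∀ (x : K) (y : Fin N → K), Fin.tail (Fin.cons x y : Fin (N+1) → K) = y := by simp
    refine ⟨crs (fun z => z 0) Fin.tail k v u, ?_, ?_⟩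
    · refine prod_coc _ _ (hered_Sm ε) (hered_Sm ε) (hered_Nr A ε) (hered_TN N A ε) ?_ ?_ ?_ hv hu
      · intro l hl x hx y hy
        obtain ⟨x, hx', rfl⟩ := List.mem_map.1 hx
        obtain ⟨y, hy', rfl⟩ := List.mem_map.1 hy
        exact (dist_le_pi_dist x y 0).trans_lt (hl x hx' y hy')
      · intro l hl x hx y hy
        obtain ⟨x, hx', rfl⟩ := List.mem_map.1 hx
        obtain ⟨y, hy', rfl⟩ := List.mem_map.1 hy
        refine lt_of_le_of_lt ?_ (hl x hx' y hy')
        rw [dist_pi_le_iff dist_nonneg]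
        intro i
        exact dist_le_pi_dist x y i.succ
      · rintro l (rfl | ⟨i, h⟩)
        · right; left; rfl
        · refine Fin.cases (fun h => ?_) (fun i h => ?_) i h
          · exact Or.inl h
          · right; right
            refine ⟨i, ?_⟩
            rw [List.map_map]
            exact h
    · intro δ hδ hδε
      obtain ⟨z, hz1, hz2⟩ := hz δ hδ hδε
      obtain ⟨w, hw1, hw2⟩ := hu' δ hδ hδε
      refine ⟨E (fun (x : K) (y : Fin N → K) => (Fin.cons x y : Fin (N+1) → K)) z w, ?_, ?_⟩
      · refine prod_cyc _ ?_ ?_ ?_ (nil_Sm δ) (Or.inl rfl) hz1 hw1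
        · intro a ha b hb l hl e he e' he'
          obtain ⟨x, hx, y, hy, rfl⟩ := hl e he
          obtain ⟨x', hx', y', hy', rfl⟩ := hl e' he'
          rw [dist_pi_lt_iff hδ]
          intro i
          refine Fin.cases ?_ (fun i => ?_) i
          · simpa using ha x hx x' hx'
          · simpa using (dist_le_pi_dist y y' i).trans_lt (hb y hy y' hy')
        · intro a ha b hb l hl
          right
          refine ⟨0, ?_⟩
          intro x hx
          obtain ⟨z, hz, rfl⟩ := List.mem_map.1 hx
          obtain ⟨x', hx', y, hy, rfl⟩ := hl z hz
          simpa using ha x' hx'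
        · rintro a ha b (rfl | ⟨i, hb⟩) l hl
          · left
            refine List.eq_nil_iff_forall_not_mem.2 (fun x hx => ?_)
            obtain ⟨x, hx, y, hy, rfl⟩ := hl x hx
            simp at hy
          · right
            refine ⟨i.succ, ?_⟩
            intro x hx
            obtain ⟨z, hz, rfl⟩ := List.mem_map.1 hx
            obtain ⟨x, hx, y, hy, rfl⟩ := hl z hz
            have := hb (y i) (List.mem_map.2 ⟨y, hy, rfl⟩)
            simpa using this
      · rw [prod_ev (fun z : Fin (N+1) → K => z 0) Fin.tail
          (fun (x : K) (y : Fin N → K) => (Fin.cons x y : Fin (N+1) → K)) hp hq (hered_Sm ε)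
          (Sm_mono hδε) u hv hz1 hw1]
        exact mul_ne_zero hz2 hw2

/-- linear duality -/
lemma dual_ext {C M : Type*} [AddCommGroup C] [AddCommGroup M] [Module F C] [Module F M]
    (φ : C →ₗ[F] M) (w : C →ₗ[F] F) (h : ∀ c, φ c = 0 → w c = 0) :
    ∃ g : M →ₗ[F] F, ∀ c, g (φ c) = w c := by
  have hw : w ∈ φ.ker.dualAnnihilator := by
    rw [Submodule.mem_dualAnnihilator]
    exact h
  rw [← LinearMap.range_dualMap_eq_dualAnnihilator_ker] at hw
  obtain ⟨g, hg⟩ := hw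
  exact ⟨g, fun c => LinearMap.congr_fun hg c⟩

lemma exists_cobound {S T : Set (List K)} {k : ℕ} {v : List K → F}
    (h : ∀ z : Chn F K, Cyc S T k z → lift v z = 0) :
    ∃ b : List K → F, (∀ l ∈ S, l.length = k → (l ∈ T ∨ Deg l) → b l = 0) ∧
      ∀ l ∈ S, l.length = k + 1 → cob b l = v l := by
  obtain ⟨C, hC⟩ : ∃ C : Submodule F (Chn F K), C = sup F {l : List K | l ∈ S ∧ l.length = k + 1} :=
    ⟨_, rfl⟩
  obtain ⟨B, hB⟩ : ∃ C : Submodule F (Chn F K),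
    C = sup F {l : List K | l ∈ S ∧ l.length = k ∧ (l ∈ T ∨ Deg l)} := ⟨_, rfl⟩
  obtain ⟨g, hg⟩ := dual_ext (C := C) (M := Chn F K ⧸ B) (B.mkQ ∘ₗ bd ∘ₗ C.subtype) (lift v ∘ₗ C.subtype) (by
    rintro ⟨z, hz⟩ hz'
    apply h
    refine ⟨hC ▸ hz, ?_⟩
    have : B.mkQ (bd z) = 0 := hz'
    rw [← LinearMap.mem_ker, Submodule.ker_mkQ] at this
    exact hB ▸ this)
  have e : lift (fun l => g (B.mkQ (single l 1))) = g ∘ₗ B.mkQ := lin_ext (by simp)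
  refine ⟨fun l => g (B.mkQ (single l 1)), ?_, ?_⟩
  · intro l h1 h2 h3
    have : B.mkQ (single l 1) = 0 := by
      rw [← LinearMap.mem_ker, Submodule.ker_mkQ, hB]
      exact single_mem' ⟨h1, h2, h3⟩
    show g (B.mkQ (single l 1)) = 0; rw [this, map_zero]
  · intro l h1 h2
    rw [cob_eq, e]
    have hm : (single l 1 : Chn F K) ∈ C := by rw [hC]; exact single_mem' ⟨h1, h2⟩
    have := hg ⟨single l 1, hm⟩
    simpa using this

end metric

section dyn

lemma compat_unif {W K : Type*} [TopologicalSpace W] [CompactSpace W] [MetricSpace K]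
    {d : W → W → ℝ} (hd : IsCompatMetric d) {f : W → K} (hf : Continuous f) {ε : ℝ} (hε : 0 < ε) :
    ∃ η > 0, ∀ x y, d x y < η → dist (f x) (f y) < ε := by
  letI : PseudoMetricSpace W := PseudoMetricSpace.ofDistTopology d hd.refl hd.symm hd.triangle
    hd.isOpen_iff
  have := CompactSpace.uniformContinuous_of_continuous hf
  obtain ⟨η, h1, h2⟩ := Metric.uniformContinuous_iff.1 this ε hε
  exact ⟨η, h1, fun x y h => h2 h⟩

lemma compat_bdd {W : Type*} [TopologicalSpace W] [CompactSpace W]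
    {d : W → W → ℝ} (hd : IsCompatMetric d) : ∃ C, ∀ x y, d x y ≤ C := by
  letI : PseudoMetricSpace W := PseudoMetricSpace.ofDistTopology d hd.refl hd.symm hd.triangle
    hd.isOpen_iff
  obtain ⟨C, hC⟩ := Metric.isBounded_iff.1 (isCompact_univ (X := W)).isBounded
  exact ⟨C, fun x y => hC (Set.mem_univ x) (Set.mem_univ y)⟩

lemma shift_iter {K : Type*} (i : ℕ) (x : ℤ → K) (n : ℤ) : (shift K)^[i] x n = x (n + i) := by
  induction i generalizing x with
  | zero => simp
  | succ i ih => rw [Function.iterate_succ_apply, ih]; simp [shift]; congr 1; ring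

variable {F : Type*} [Field F] {K : Type*} [MetricSpace K] [CompactSpace K]

lemma widim_ge {A : Set K} {ε : ℝ} (hε : 0 < ε) {k : ℕ} {v : List K → F}
    (hv : Coc (Sm ε) (Nr A ε) k v)
    (hz : ∀ δ, 0 < δ → δ ≤ ε → ∃ z : Chn F K, Cyc (Sm δ) (Nr A δ) k z ∧ lift v z ≠ 0)
    (d : (ℤ → K) → (ℤ → K) → ℝ) (hd : IsCompatMetric d) :
    ∃ η > 0, ∀ N : ℕ, 1 ≤ N → ((N * k : ℕ) : ℕ∞) ≤ widim η (dynDist d (shift K) N) := by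
  obtain ⟨η, hη, hη'⟩ := compat_unif hd (continuous_apply (0:ℤ) : Continuous fun x : ℤ → K => x 0)
    (show 0 < ε / 8 by positivity)
  obtain ⟨C, hC⟩ := compat_bdd hd
  have hC0 : ∀ x : ℤ → K, 0 ≤ C := fun x => by have := hC x x; rwa [hd.refl] at this
  refine ⟨η, hη, fun N hN => ?_⟩
  have hdyn : ∀ x y, dynDist d (shift K) N x y ≤ C := by
    intro x y
    apply Real.sSup_le
    · rintro r ⟨i, -, rfl⟩; exact hC _ _
    · exact hC0 x
  refine le_iInf₂ fun α hα => le_iInf₂ fun β hβ => ?_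
  obtain ⟨hα1, hα2⟩ := hα
  obtain ⟨⟨hβ1, hβ2⟩, hβ3⟩ := hβ
  have hdiam : ∀ U : Set (ℤ → K), ∀ x ∈ U, ∀ y ∈ U,
      dynDist d (shift K) N x y ≤ diamD (dynDist d (shift K) N) U := by
    intro U x hx y hy
    apply le_csSup
    · refine ⟨C, ?_⟩
      rintro r ⟨x, -, y, -, rfl⟩; exact hdyn _ _
    · exact ⟨x, hx, y, hy, rfl⟩
  have hmesh : ∀ U ∈ α, ∀ x ∈ U, ∀ y ∈ U, dynDist d (shift K) N x y < η := by
    intro U hU x hx y hy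
    refine lt_of_le_of_lt ((hdiam U x hx y hy).trans ?_) hα2
    apply le_csSup
    · refine ⟨C, ?_⟩
      rintro r ⟨U, -, rfl⟩
      apply Real.sSup_le
      · rintro r ⟨x, -, y, -, rfl⟩; exact hdyn _ _
      · exact hC0 x
    · exact ⟨U, hU, rfl⟩
  have hβs : ∀ V ∈ β, ∀ x ∈ V, ∀ y ∈ V, ∀ i : ℕ, i < N → dist (x i) (y i) < ε / 8 := by
    intro V hV x hx y hy i hi
    obtain ⟨U, hU, hVU⟩ := hβ3 V hV
    have h1 : d ((shift K)^[i] x) ((shift K)^[i] y) < η := by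
      refine lt_of_le_of_lt ?_ (hmesh U hU x (hVU hx) y (hVU hy))
      apply le_csSup
      · refine ⟨C, ?_⟩
        rintro r ⟨i, -, rfl⟩; exact hC _ _
      · exact ⟨i, hi, rfl⟩
    have := hη' _ _ h1
    simpa [shift_iter] using this
  by_contra hcon
  rw [not_le] at hcon
  -- pull back
  let j : (Fin N → K) → (ℤ → K) := fun y n =>
    if h : 0 ≤ n ∧ n < N then y ⟨n.toNat, by omega⟩ else y ⟨0, by omega⟩
  have hj : Continuous j := by
    refine continuous_pi fun n => ?_
    by_cases h : 0 ≤ n ∧ n < N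
    · simp only [j, h, and_self, dite_true]; exact continuous_apply _
    · simp only [j, h, dite_false]; exact continuous_apply _
  have hji : ∀ y (i : Fin N), j y (i : ℕ) = y i := by
    intro y i
    have : (0:ℤ) ≤ ((i:ℕ):ℤ) ∧ ((i:ℕ):ℤ) < N := ⟨by omega, by have := i.2; omega⟩
    simp only [j, this, and_self, dite_true]
    congr 1
  let ι := {V : Set (ℤ → K) // V ∈ β ∧ (j ⁻¹' V).Nonempty}
  letI : LinearOrder ι := IsWellOrder.linearOrder WellOrderingRel
  obtain ⟨lam, hlam, hball⟩ := lebesgue_number_lemma_of_metric (s := (Set.univ : Set (Fin N → K)))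
    (c := fun i : ι => j ⁻¹' i.1) isCompact_univ (fun i => (hβ1 _ i.2.1).preimage hj) (by
      intro x _
      have : j x ∈ ⋃₀ β := by rw [hβ2]; trivial
      obtain ⟨V, hV, hx⟩ := this
      exact Set.mem_iUnion.2 ⟨⟨V, hV, x, hx⟩, hx⟩)
  choose b hb using fun x => hball x (Set.mem_univ x)
  let P : ι → (Fin N → K) := fun i => i.2.2.some
  have hP : ∀ i : ι, j (P i) ∈ i.1 := fun i => i.2.2.some_mem
  have hbx : ∀ x, j x ∈ (b x).1 := fun x => hb x (Metric.mem_ball_self hlam)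
  have hρ : ∀ x (i : Fin N), dist (P (b x) i) (x i) < ε / 8 := by
    intro x i
    have := hβs _ (b x).2.1 _ (hP (b x)) _ (hbx x) i i.2
    rwa [hji, hji] at this
  obtain ⟨u, hu, hu'⟩ := pow_cls hε hv hz N
  set δ := min lam (ε / 8) with hδ
  have hδ0 : 0 < δ := lt_min hlam (by positivity)
  have hδ1 : δ ≤ ε / 8 := min_le_right _ _
  obtain ⟨z, hz1, hz2⟩ := hu' δ hδ0 (by linarith)
  refine hz2 (dim_kill b P hu hz1 ?_ ?_ ?_)
  · intro l hl l' hl' x hx y hy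
    have aux : ∀ x ∈ l', ∃ x' ∈ l, ∀ i, dist (x i) (x' i) < ε / 8 := by
      intro x hx
      rcases hl' x hx with h | ⟨y, hy, rfl⟩
      · exact ⟨x, h, fun i => by rw [dist_self]; positivity⟩
      · exact ⟨y, hy, hρ y⟩
    obtain ⟨x', hx', hx''⟩ := aux x hx
    obtain ⟨y', hy', hy''⟩ := aux y hy
    rw [dist_pi_lt_iff hε]
    intro i
    have h1 := hx'' i
    have h2 := hy'' i
    have h3 := (dist_le_pi_dist x' y' i).trans_lt (hl x' hx' y' hy')
    have h4 := dist_triangle4 (x i) (x' i) (y' i) (y i)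
    rw [dist_comm (y' i)] at h4
    linarith
  · rintro l (rfl | ⟨i, hl⟩) l' hl'
    · left
      refine List.eq_nil_iff_forall_not_mem.2 (fun x hx => ?_)
      rcases hl' x hx with h | ⟨y, hy, -⟩
      · simp at h
      · simp at hy
    · right
      refine ⟨i, ?_⟩
      intro x hx
      obtain ⟨z, hz, rfl⟩ := List.mem_map.1 hx
      rcases hl' z hz with h | ⟨y, hy, rfl⟩
      · obtain ⟨a, ha, h⟩ := hl _ (List.mem_map.2 ⟨z, h, rfl⟩)
        exact ⟨a, ha, by linarith⟩
      · obtain ⟨a, ha, h⟩ := hl _ (List.mem_map.2 ⟨y, hy, rfl⟩)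
        refine ⟨a, ha, ?_⟩
        have := dist_triangle (P (b y) i) (y i) a
        have := hρ y i
        linarith
  · intro l hl hlen hnd
    refine absurd hcon (not_lt.2 ?_)
    refine le_iSup₂ (f := fun (n : ℕ) (_ : n ∈ {n : ℕ | ∃ f : Fin (n + 1) → Set (ℤ → K),
      Function.Injective f ∧ (∀ i, f i ∈ β) ∧ (⋂ i, f i).Nonempty}) => (n : ℕ∞)) (N * k) ?_
    refine ⟨fun i => (b (l.get (i.cast hlen.symm))).1, ?_, fun i => (b _).2.1, ?_⟩
    · intro i i' h
      have h' := Subtype.ext h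
      have := List.nodup_iff_injective_get.1 hnd
      have h2 := @this ⟨i, by have := i.2; simp; omega⟩ ⟨i', by have := i'.2; simp; omega⟩ (by
        simpa using h')
      simpa [Fin.ext_iff] using h2
    · refine ⟨j (l.get ⟨0, by omega⟩), ?_⟩
      rw [Set.mem_iInter]
      intro i
      refine hb _ ?_
      rw [Metric.mem_ball]
      exact (hl _ (List.get_mem _ _) _ (List.get_mem _ _)).trans_le (min_le_left _ _)

lemma mdim_ge {A : Set K} {ε : ℝ} (hε : 0 < ε) {k : ℕ} {v : List K → F}
    (hv : Coc (Sm ε) (Nr A ε) k v)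
    (hz : ∀ δ, 0 < δ → δ ≤ ε → ∃ z : Chn F K, Cyc (Sm δ) (Nr A δ) k z ∧ lift v z ≠ 0)
    (d : (ℤ → K) → (ℤ → K) → ℝ) (hd : IsCompatMetric d) :
    (k : ℝ≥0∞) ≤ mdim (shift K) d := by
  obtain ⟨η, hη, h⟩ := widim_ge hε hv hz d hd
  refine le_iSup₂_of_le η hη ?_
  refine Filter.le_liminf_of_le (by isBoundedDefault) ?_
  filter_upwards [Filter.eventually_ge_atTop 1] with N hN
  have h1 := h N hN
  rw [ENNReal.le_div_iff_mul_le (Or.inl (by simp; omega)) (Or.inl (by simp))]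
  have : (((N * k : ℕ) : ℕ∞) : ℝ≥0∞) ≤ (widim η (dynDist d (shift K) N) : ℝ≥0∞) :=
    ENat.toENNReal_le.2 h1
  refine le_trans (le_of_eq ?_) this
  simp [mul_comm]

/-- Every relative cocycle dies if the mean dimension is small. -/
theorem dies {A : Set K} {ε : ℝ} (hε : 0 < ε) {k : ℕ} {v : List K → F}
    (hv : Coc (Sm ε) (Nr A ε) k v)
    (d : (ℤ → K) → (ℤ → K) → ℝ) (hd : IsCompatMetric d) (hk : ¬ (k : ℝ≥0∞) ≤ mdim (shift K) d) :
    ∃ δ, 0 < δ ∧ δ ≤ ε ∧ ∃ b : List K → F,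
      (∀ l ∈ Sm δ, l.length = k → (l ∈ Nr A δ ∨ Deg l) → b l = 0) ∧
      ∀ l ∈ Sm δ, l.length = k + 1 → cob b l = v l := by
  by_contra hcon
  refine hk (mdim_ge hε hv ?_ d hd)
  intro δ h1 h2
  by_contra hcon2
  push Not at hcon2
  exact hcon ⟨δ, h1, h2, exists_cobound hcon2⟩

end dyn
end Ch
end MeanDimPaper

namespace MeanDimPaper
namespace Ch

open Finsupp
open scoped ENNReal

lemma covD_le_zero {X : Type*} [TopologicalSpace X] [T2Space X] [CompactSpace X]
    [TotallyDisconnectedSpace X] (α : Set (Set X)) (hα : IsOpenCover α) : covD α ≤ 0 := by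
  have h1 : ∀ x : X, ∃ U : Set X, IsClopen U ∧ x ∈ U ∧ ∃ V ∈ α, U ⊆ V := by
    intro x
    have : x ∈ ⋃₀ α := by rw [hα.2]; trivial
    obtain ⟨V, hV, hx⟩ := this
    obtain ⟨U, hU, hxU, hUV⟩ := compact_exists_isClopen_in_isOpen (hα.1 V hV) hx
    exact ⟨U, hU, hxU, V, hV, hUV⟩
  choose U hU hxU V hV hUV using h1
  obtain ⟨t, ht⟩ := isCompact_univ.elim_finite_subcover U (fun x => (hU x).isOpen)
    (fun x _ => Set.mem_iUnion.2 ⟨x, hxU x⟩)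
  -- enumerate
  obtain ⟨n, e, he⟩ : ∃ (n : ℕ) (e : Fin n → X), ∀ x ∈ t, ∃ i, e i = x := by
    refine ⟨t.card, fun i => (t.equivFin.symm i).1, fun x hx => ⟨t.equivFin ⟨x, hx⟩, by simp⟩⟩
  let W : Fin n → Set X := fun i => U (e i) \ ⋃ j : {j : Fin n // j < i}, U (e j.1)
  have hdis : ∀ i j, i ≠ j → ∀ x, x ∈ W i → x ∈ W j → False := by
    intro i j hij x hx hy
    rcases lt_or_gt_of_ne hij with h | h
    · exact hy.2 (Set.mem_iUnion.2 ⟨⟨i, h⟩, hx.1⟩)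
    · exact hx.2 (Set.mem_iUnion.2 ⟨⟨j, h⟩, hy.1⟩)
  have hcov : ∀ x, ∃ i, x ∈ W i := by
    intro x
    have hx := ht (Set.mem_univ x)
    simp only [Set.mem_iUnion] at hx
    obtain ⟨y, hy, hxy⟩ := hx
    obtain ⟨i, rfl⟩ := he y hy
    obtain ⟨i, hi, hmin⟩ := (wellFounded_lt (α := Fin n)).has_min {i | x ∈ U (e i)} ⟨i, hxy⟩
    refine ⟨i, hi, ?_⟩
    simp only [Set.mem_iUnion, not_exists]
    rintro ⟨j, hj⟩ hxj
    exact hmin j hxj hj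
  refine (iInf₂_le (Set.range W) ?_).trans ?_
  · refine ⟨⟨?_, ?_⟩, ?_⟩
    · rintro _ ⟨i, rfl⟩
      exact (hU _).isOpen.sdiff (isClosed_iUnion_of_finite fun j => (hU _).isClosed)
    · ext x
      simp only [Set.mem_univ, iff_true]
      obtain ⟨i, hi⟩ := hcov x
      exact ⟨W i, ⟨i, rfl⟩, hi⟩
    · rintro _ ⟨i, rfl⟩
      exact ⟨V (e i), hV _, Set.diff_subset.trans (hUV _)⟩
  · refine iSup₂_le ?_
    rintro m ⟨f, hf, hf2, x, hx⟩
    rw [Set.mem_iInter] at hx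
    by_contra hm
    have hm' : 1 ≤ m := by
      rcases Nat.eq_zero_or_pos m with rfl | h
      · simp at hm
      · exact h
    obtain ⟨i, hi⟩ := hf2 0
    obtain ⟨j, hj⟩ := hf2 ⟨1, by omega⟩
    have hij : i ≠ j := by
      rintro rfl
      have := hf (hi.symm.trans hj)
      simp [Fin.ext_iff] at this
    exact hdis i j hij x (hi ▸ hx 0) (hj ▸ hx _)

theorem one_le_mdim {K : Type*} [MetricSpace K] [CompactSpace K]
    (d : (ℤ → K) → (ℤ → K) → ℝ) (hd : IsCompatMetric d) (hK : topDim K ≠ 0) :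
    (1 : ℝ≥0∞) ≤ mdim (shift K) d := by
  by_contra hcon
  apply hK
  have : TotallyDisconnectedSpace K := by
    rw [totallyDisconnectedSpace_iff_connectedComponent_subsingleton]
    intro a x hx y hy
    by_contra hxy
    have hr : 0 < dist x y := dist_pos.2 hxy
    set r := dist x y with hrdef
    classical
    let χ : K → ℚ := fun p => if dist p y < r / 2 then 1 else 0
    let c : List K → ℚ := fun l => match l with
      | [] => 0
      | p :: _ => χ p
    have hc : ∀ p q, cob c [p, q] = χ q - χ p := by
      intro p q; simp [cob, c]
    have hcoc : Coc (Sm (r / 4)) (Nr {x, y} (r / 4)) 1 (cob c) := by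
      constructor
      · intro l hl hlen hT
        rw [List.length_eq_two] at hlen
        obtain ⟨p, q, rfl⟩ := hlen
        rw [hc]
        rcases hT with hT | hT
        · obtain ⟨a1, ha1, h1⟩ := hT p (by simp)
          obtain ⟨a2, ha2, h2⟩ := hT q (by simp)
          have h3 := hl p (by simp) q (by simp)
          have t1 := dist_triangle x p y
          have t2 := dist_triangle x q y
          have t3 := dist_triangle x p q
          have t4 := dist_triangle x q p
          rw [dist_comm x p] at *
          rw [dist_comm x q] at *
          rw [dist_comm q p] at *
          have e1 : χ p = χ q := by
            simp only [χ]
            rcases ha1 with rfl | ha1 <;> rcases ha2 with rfl | ha2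
            · rw [if_neg (by linarith), if_neg (by linarith)]
            · rw [Set.mem_singleton_iff] at ha2; subst ha2; exfalso; linarith
            · rw [Set.mem_singleton_iff] at ha1; subst ha1; exfalso; linarith
            · rw [Set.mem_singleton_iff] at ha1 ha2; subst ha1
              rw [ha2] at h2
              rw [if_pos (by linarith), if_pos (by linarith)]
          rw [e1, sub_self]
        · rw [deg_cons_cons] at hT
          rcases hT with rfl | hT
          · rw [sub_self]
          · exact absurd hT (deg_single q)
      · intro l _ _; exact cob_cob c l
    obtain ⟨δ, hδ, hδ', b, hb1, hb2⟩ := dies (by positivity) hcoc d hd (by simpa using hcon)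
    have hloc : IsLocallyConstant (fun p => b [p] - χ p) := by
      rw [IsLocallyConstant.iff_eventually_eq]
      intro p
      filter_upwards [Metric.ball_mem_nhds p hδ] with q hq
      rw [Metric.mem_ball] at hq
      have := hb2 [p, q] (by
        intro s hs t ht
        simp only [List.mem_cons, List.not_mem_nil, or_false] at hs ht
        rcases hs with rfl | rfl <;> rcases ht with rfl | rfl <;>
          first | (rw [dist_self]; exact hδ) | assumption | (rw [dist_comm]; assumption)) rfl
      rw [hc] at this
      simp only [cob] at this
      simp only [sub_zero] at this
      linarith
    have h := hloc.apply_eq_of_isPreconnected isPreconnected_connectedComponent hx hy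
    have hs : ∀ p : K, [p] ∈ Sm δ := by
      intro p s hs t ht
      simp only [List.mem_singleton] at hs ht
      rw [hs, ht, dist_self]; exact hδ
    have b1 : b [x] = 0 := hb1 [x] (hs x) rfl (Or.inl (by
      intro p hp; simp only [List.mem_singleton] at hp; exact ⟨x, by simp, by rw [hp, dist_self]; exact hδ⟩))
    have b2 : b [y] = 0 := hb1 [y] (hs y) rfl (Or.inl (by
      intro p hp; simp only [List.mem_singleton] at hp; exact ⟨y, by simp, by rw [hp, dist_self]; exact hδ⟩))
    have c1 : χ x = 0 := by simp only [χ]; rw [if_neg]; linarith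
    have c2 : χ y = 1 := by simp only [χ]; rw [if_pos]; rw [dist_self]; linarith
    simp only [b1, b2, c1, c2] at h
    norm_num at h
  refine le_antisymm (iSup₂_le fun α hα => ?_) zero_le
  exact covD_le_zero α hα

end Ch
end MeanDimPaper

namespace MeanDimPaper
namespace Ch

open Finsupp
open scoped ENNReal

/-- coboundaries of normalised cochains are normalised -/
lemma cob_deg {X G : Type*} [AddCommGroup G] (v : List X → G) (l : List X) (hl : Deg l)
    (h : ∀ l', l'.length + 1 = l.length → l'.Sublist l → Deg l' → v l' = 0) : cob v l = 0 := by
  induction l generalizing v with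
  | nil => exact absurd hl deg_nil
  | cons x l ih =>
    cases l with
    | nil => exact absurd hl (deg_single x)
    | cons y l =>
      rcases deg_cons_cons.1 hl with rfl | h1
      · simp only [cob]
        have : cob (fun l' => v (x :: x :: l')) l = cob (fun _ => (0 : G)) l := by
          apply cob_congr
          intro l' h1 h2
          exact h _ (by simpa using h1) (by simpa using h2) (deg_cons_cons.2 (Or.inl rfl))
        have h0 : cob (fun _ : List X => (0 : G)) l = 0 := by
          have := cob_hom (0 : G →+ G) (fun _ : List X => (0 : G)) l
          simpa using this
        rw [this, h0]; simp
      · rw [cob, h _ (by simp) (by simp) h1, ih _ h1]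
        · simp
        · intro l' h2 h3 h4
          exact h _ (by simpa using h2) (by simpa using h3) (deg_cons h4)

variable {K ι : Type*}

open Classical in
/-- the degree cocycle -/
noncomputable def eC (D : ℕ) (g : K → ι) (ω : Fin (D+1) → ι) (l : List K) : ℤ :=
  Matrix.det (fun j i : Fin (D+1) =>
    match l[(j : ℕ)]? with
    | Option.some x => if g x = ω i then (1 : ℤ) else 0
    | Option.none => 0)

open Classical in
lemma eC_ofFn (D : ℕ) (g : K → ι) (ω : Fin (D+1) → ι) (τ : Fin (D+1) → K) :
    eC D g ω (List.ofFn τ) =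
      Matrix.det (fun j i : Fin (D+1) => if g (τ j) = ω i then (1 : ℤ) else 0) := by
  unfold eC
  congr 1
  funext j i
  have : (List.ofFn τ)[(j:ℕ)]? = Option.some (τ j) := by
    rw [List.getElem?_ofFn]; simp; omega
  rw [this]

lemma exists_ofFn {X : Type*} {n : ℕ} {l : List X} (h : l.length = n) : ∃ τ : Fin n → X, l = List.ofFn τ := by
  subst h
  exact ⟨l.get, by simp⟩

lemma eC_zero {D : ℕ} {g : K → ι} {ω : Fin (D+1) → ι} {l : List K} (hl : l.length = D + 1)
    (h : ¬ ∀ i, ∃ x ∈ l, g x = ω i) : eC D g ω l = 0 := by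
  obtain ⟨τ, rfl⟩ := exists_ofFn hl
  rw [eC_ofFn]
  push Not at h
  obtain ⟨i, hi⟩ := h
  apply Matrix.det_eq_zero_of_column_eq_zero i
  intro j
  rw [if_neg (hi _ ((List.mem_ofFn' _ _).2 ⟨j, rfl⟩))]

lemma eC_dup {D : ℕ} {g : K → ι} {ω : Fin (D+1) → ι} {l : List K} (hl : l.length = D + 1)
    (h : ¬ l.Nodup) : eC D g ω l = 0 := by
  obtain ⟨τ, rfl⟩ := exists_ofFn hl
  rw [eC_ofFn]
  rw [List.nodup_ofFn] at h
  unfold Function.Injective at h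
  push Not at h
  obtain ⟨a, b, hab, hne⟩ := h
  apply Matrix.det_zero_of_row_eq hne
  funext i
  congr 1
  rw [hab]

lemma eC_cob {D : ℕ} {g : K → ι} {ω : Fin (D+1) → ι} (hω : Function.Injective ω) {l : List K}
    (hl : l.length = D + 2)
    (h : (∀ i, ∃ x ∈ l, g x = ω i) → ∀ x ∈ l, ∃ i, g x = ω i) : cob (eC D g ω) l = 0 := by
  classical
  obtain ⟨τ, rfl⟩ := exists_ofFn hl
  rw [cob_ofFn]
  by_cases hs : ∀ i, ∃ x ∈ List.ofFn τ, g x = ω i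
  · replace h := h hs
    let M : Matrix (Fin (D+2)) (Fin (D+2)) ℤ := fun j i =>
      Fin.cases (motive := fun _ => ℤ) 1 (fun i => if g (τ j) = ω i then (1 : ℤ) else 0) i
    have h1 : M.det = ∑ i : Fin (D+1+1), (-1 : ℤ)^(i:ℕ) •
        eC D g ω (List.ofFn (fun j => τ (i.succAbove j))) := by
      rw [Matrix.det_succ_column_zero]
      refine Finset.sum_congr rfl fun i _ => ?_
      rw [eC_ofFn]
      simp only [M, Fin.cases_zero, mul_one, smul_eq_mul]
      congr 1
    rw [← h1]
    have h2 : M.mulVec (Fin.cases (motive := fun _ => ℤ) 1 (fun _ => -1)) = 0 := by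
      funext j
      simp only [Matrix.mulVec, dotProduct, Fin.sum_univ_succ, M, Fin.cases_zero, Fin.cases_succ,
        Pi.zero_apply]
      obtain ⟨i, hi⟩ := h (τ j) ((List.mem_ofFn' _ _).2 ⟨j, rfl⟩)
      have : ∑ x : Fin (D+1), (if g (τ j) = ω x then (1:ℤ) else 0) * -1 = -1 := by
        rw [Finset.sum_eq_single i]
        · simp [hi]
        · intro b _ hb
          rw [if_neg]
          · simp
          · intro h'
            exact hb (hω (h'.symm.trans hi))
        · simp
      rw [Fin.sum_univ_succ] at this
      linarith
    by_contra hdet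
    have := Matrix.eq_zero_of_mulVec_eq_zero hdet h2
    have := congrFun this 0
    simp at this
  · apply Finset.sum_eq_zero
    intro i _
    rw [eC_zero (by simp)]
    · simp
    · intro h'
      apply hs
      intro i'
      obtain ⟨x, hx, hx'⟩ := h' i'
      refine ⟨x, ?_, hx'⟩
      rw [List.mem_ofFn] at hx ⊢
      obtain ⟨j, hj⟩ := hx
      exact ⟨_, hj⟩

variable {K ι : Type*} [MetricSpace K] [CompactSpace K]

lemma Sm_sub {l l' : List K} {ε : ℝ} (h : l'.Sublist l) (hl : l ∈ Sm ε) : l' ∈ Sm ε :=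
  hered_Sm ε l l' hl (fun _ hx => h.subset hx)

lemma Nr_sub {A : Set K} {l l' : List K} {ε : ℝ} (h : l'.Sublist l) (hl : l ∈ Nr A ε) : l' ∈ Nr A ε :=
  hered_Nr A ε l l' hl (fun _ hx => h.subset hx)

lemma net (K : Type*) [MetricSpace K] [CompactSpace K] {δ : ℝ} (hδ : 0 < δ) :
    ∃ ρ : K → K, (∀ p, dist (ρ p) p < δ) ∧ (Set.range ρ).Finite := by
  obtain ⟨t, ht⟩ := isCompact_univ.elim_finite_subcover (fun x : K => Metric.ball x δ)
    (fun x => Metric.isOpen_ball) (fun x _ => Set.mem_iUnion.2 ⟨x, Metric.mem_ball_self hδ⟩)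
  have : ∀ p : K, ∃ q ∈ t, dist q p < δ := by
    intro p
    have := ht (Set.mem_univ p)
    simp only [Set.mem_iUnion, Metric.mem_ball] at this
    obtain ⟨q, hq, h⟩ := this
    exact ⟨q, hq, by rwa [dist_comm]⟩
  choose ρ h1 h2 using this
  exact ⟨ρ, h2, t.finite_toSet.subset (by rintro _ ⟨p, rfl⟩; exact h1 p)⟩

lemma Sm_map {ρ : K → K} {δ : ℝ} (h : ∀ p, dist (ρ p) p < δ / 4) {l : List K} (hl : l ∈ Sm (δ/2)) :
    l.map ρ ∈ Sm δ := by
  intro x hx y hy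
  obtain ⟨a, ha, rfl⟩ := List.mem_map.1 hx
  obtain ⟨b, hb, rfl⟩ := List.mem_map.1 hy
  have h1 := h a
  have h2 := h b
  have h3 := hl a ha b hb
  have h4 := dist_triangle4 (ρ a) a b (ρ b)
  rw [dist_comm b] at h4
  linarith

lemma Nr_map {A : Set K} {ρ : K → K} {δ : ℝ} (h : ∀ p, dist (ρ p) p < δ / 4) {l : List K}
    (hl : l ∈ Nr A (δ/2)) : l.map ρ ∈ Nr A δ := by
  intro x hx
  obtain ⟨a, ha, rfl⟩ := List.mem_map.1 hx
  obtain ⟨b, hb, h3⟩ := hl a ha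
  have h1 := h a
  have h4 := dist_triangle (ρ a) a b
  have h5 : 0 ≤ dist a b := dist_nonneg
  exact ⟨b, hb, by linarith⟩

/-- clearing denominators -/
lemma common_den {T : Set ℚ} (hT : T.Finite) : ∃ m : ℕ, 0 < m ∧ ∀ q ∈ T, ∃ z : ℤ, (z : ℚ) = m * q := by
  induction T, hT using Set.Finite.induction_on with
  | empty => exact ⟨1, one_pos, by simp⟩
  | @insert a s _ _ ih =>
    obtain ⟨m, hm, h⟩ := ih
    refine ⟨m * a.den, Nat.mul_pos hm a.pos, ?_⟩
    rintro q (rfl | hq)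
    · refine ⟨m * q.num, ?_⟩
      push_cast
      rw [mul_assoc]
      congr 1
      rw [mul_comm]
      exact (Rat.mul_den_eq_num q).symm
    · obtain ⟨z, hz⟩ := h q hq
      refine ⟨z * a.den, ?_⟩
      push_cast
      rw [hz]; ring

lemma divide {n : ℕ} {A : Set K} (d : (ℤ → K) → (ℤ → K) → ℝ) (hd : IsCompatMetric d)
    (hk : ¬ (n : ℝ≥0∞) ≤ mdim (shift K) d) (e : List K → ℤ) (m : ℕ) (hm : 0 < m) :
    ∀ (δ : ℝ) (hδ : 0 < δ) (c : List K → ℤ)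
    (hc : ∀ l ∈ Sm δ, l.length = n + 1 → (l ∈ Nr A δ ∨ Deg l) → c l = 0)
    (hce : ∀ l ∈ Sm δ, l.length = n + 2 → cob c l = m * e l),
    ∃ δ', 0 < δ' ∧ δ' ≤ δ ∧ ∃ c : List K → ℤ,
      (∀ l ∈ Sm δ', l.length = n + 1 → (l ∈ Nr A δ' ∨ Deg l) → c l = 0) ∧
      ∀ l ∈ Sm δ', l.length = n + 2 → cob c l = e l := by
  induction m using Nat.strong_induction_on with
  | _ m ih =>
  intro δ hδ c hc hce
  rcases Nat.eq_or_lt_of_le hm with h1 | h1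
  · refine ⟨δ, hδ, le_rfl, c, hc, ?_⟩
    intro l hl hl'
    rw [hce l hl hl', ← h1]; simp
  · obtain ⟨p, hp, m', rfl⟩ := Nat.exists_prime_and_dvd (show m ≠ 1 by simp at h1; omega)
    haveI : Fact p.Prime := ⟨hp⟩
    have hm' : 0 < m' := Nat.pos_of_mul_pos_left hm
    obtain ⟨δ', h2, h3, b, hb, hb'⟩ := dies (F := ZMod p) (A := A) hδ (k := n)
      (v := fun l => (c l : ZMod p)) ⟨fun l a1 a2 a3 => by simp [hc l a1 a2 a3], fun l a1 a2 => by
        have := cob_hom (Int.castAddHom (ZMod p)) c l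
        simp only [Int.coe_castAddHom] at this
        rw [this, hce l a1 a2]; simp⟩ d hd hk
    let b' : List K → ℤ := fun l => ((b l).val : ℤ)
    have hb0 : ∀ l, b l = 0 → b' l = 0 := by intro l h; simp [b', h]
    have hbc : ∀ l, ((b' l : ℤ) : ZMod p) = b l := by intro l; simp [b']
    let c' : List K → ℤ := fun l => (c l - cob b' l) / p
    have hdvd : ∀ l ∈ Sm δ', l.length = n + 1 → p * c' l = c l - cob b' l := by
      intro l a1 a2
      apply Int.mul_ediv_cancel'
      rw [← ZMod.intCast_zmod_eq_zero_iff_dvd]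
      push_cast
      have := cob_hom (Int.castAddHom (ZMod p)) b' l
      simp only [Int.coe_castAddHom] at this
      rw [← this]
      have : cob (fun l => ((b' l : ℤ) : ZMod p)) l = cob b l := by
        congr 1; funext l; exact hbc l
      rw [this, hb' l a1 a2]; simp
    have hp0 : (p : ℤ) ≠ 0 := by exact_mod_cast hp.ne_zero
    obtain ⟨δ'', h4, h5, c'', h6⟩ := ih m' (by
        have := hp.two_le
        nlinarith) hm' δ' h2 c' (by
        intro l a1 a2 a3
        have h7 := hdvd l a1 a2
        rw [hc l (Sm_mono h3 a1) a2 (a3.imp (fun h => Nr_mono h3 h) id)] at h7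
        have h8 : cob b' l = 0 := by
          rcases a3 with a3 | a3
          · have : cob b' l = cob (fun _ => (0 : ℤ)) l := by
              apply cob_congr
              intro l' e1 e2
              exact hb0 _ (hb l' (Sm_sub e2 a1) (by omega) (Or.inl (Nr_sub e2 a3)))
            rw [this]
            simpa using cob_hom (0 : ℤ →+ ℤ) (fun _ : List K => (0 : ℤ)) l
          · apply cob_deg _ _ a3
            intro l' e1 e2 e3
            exact hb0 _ (hb l' (Sm_sub e2 a1) (by omega) (Or.inr e3))
        rw [h8] at h7
        simpa [hp.ne_zero] using h7) (by
        intro l a1 a2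
        apply mul_left_cancel₀ hp0
        have h7 := cob_hom (AddMonoidHom.mulLeft (p : ℤ)) c' l
        simp only [AddMonoidHom.coe_mulLeft] at h7
        rw [← h7]
        have : cob (fun l => (p : ℤ) * c' l) l = cob (fun l => c l - cob b' l) l := by
          apply cob_congr
          intro l' e1 e2
          exact hdvd l' (Sm_sub e2 a1) (by omega)
        rw [this, cob_sub, cob_cob, hce l (Sm_mono h3 a1) a2]
        push_cast; ring)
    exact ⟨δ'', h4, h5.trans h3, c'', h6⟩

/-- Part II: the integral degree cocycle is a coboundary at small scales -/
theorem integral_cobound {n : ℕ} {A : Set K} {ε : ℝ} (hε : 0 < ε)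
    (d : (ℤ → K) → (ℤ → K) → ℝ) (hd : IsCompatMetric d)
    (hk : ¬ (n : ℝ≥0∞) ≤ mdim (shift K) d) (g : K → ι) (ω : Fin (n+1+1) → ι)
    (hω : Function.Injective ω)
    (h1 : ∀ l ∈ Sm ε, (∀ i, ∃ x ∈ l, g x = ω i) → ∀ x ∈ l, ∃ i, g x = ω i)
    (h2 : ∀ l ∈ Sm ε, l ∈ Nr A ε → ¬ ∀ i, ∃ x ∈ l, g x = ω i) :
    ∃ δ, 0 < δ ∧ δ ≤ ε ∧ ∃ ρ : K → K, (∀ p, dist (ρ p) p < ε / 4) ∧ ∃ c : List K → ℤ,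
      (∀ l ∈ Sm δ, l.length = n + 1 → (l ∈ Nr A δ ∨ Deg l) → c l = 0) ∧
      ∀ l ∈ Sm δ, l.length = n + 2 → cob c l = eC (n+1) g ω (l.map ρ) := by
  obtain ⟨δ, h3, h4, b, hb, hb'⟩ := dies (F := ℚ) (A := A) hε (k := n+1)
      (v := fun l => (eC (n+1) g ω l : ℚ)) ⟨fun l a1 a2 a3 => by
        rcases a3 with a3 | a3
        · rw [eC_zero a2 (h2 l a1 a3)]; simp
        · rw [eC_dup a2 (deg_not_nodup a3)]; simp, fun l a1 a2 => by
        have := cob_hom (Int.castAddHom ℚ) (eC (n+1) g ω) l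
        simp only [Int.coe_castAddHom] at this
        rw [this, eC_cob hω a2 (h1 l a1)]; simp⟩ d hd (fun h => hk (le_trans (by
          push_cast; exact le_self_add) h))
  obtain ⟨ρ, h5, h6⟩ := net K (show 0 < δ/4 by positivity)
  have hfin : {q : ℚ | ∃ l : List K, l.length = n+1 ∧ q = b (l.map ρ)}.Finite := by
    have : Finite (Set.range ρ) := h6
    refine (Set.finite_range (fun τ : Fin (n+1) → Set.range ρ => b (List.ofFn fun i => (τ i).1))).subset ?_
    rintro q ⟨l, hl, rfl⟩
    obtain ⟨τ, rfl⟩ := exists_ofFn hl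
    exact ⟨fun i => ⟨ρ (τ i), τ i, rfl⟩, by simp [List.map_ofFn, Function.comp_def]⟩
  obtain ⟨m, hm, hm'⟩ := common_den hfin
  have : ∀ l : List K, ∃ z : ℤ, l.length = n + 1 → (z : ℚ) = m * b (l.map ρ) := by
    intro l
    by_cases h : l.length = n + 1
    · obtain ⟨z, hz⟩ := hm' _ ⟨l, h, rfl⟩
      exact ⟨z, fun _ => hz⟩
    · exact ⟨0, fun h' => absurd h' h⟩
  choose c hc using this
  obtain ⟨δ', e1, e2, c', e3, e4⟩ := divide (n := n) (A := A) d hd hk (fun l => eC (n+1) g ω (l.map ρ)) m hm (δ/2)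
    (by positivity) c (by
      intro l a1 a2 a3
      have := hc l a2
      rw [hb _ (Sm_map h5 a1) (by simpa using a2) (a3.imp (Nr_map h5) (deg_map ρ))] at this
      simpa using this) (by
      intro l a1 a2
      have h7 := hb' _ (Sm_map h5 a1) (by simpa using a2)
      rw [cob_map] at h7
      have h8 := cob_hom (Int.castAddHom ℚ) c l
      simp only [Int.coe_castAddHom] at h8
      have h9 : cob (fun l => (c l : ℚ)) l = cob (fun l => m * b (l.map ρ)) l := by
        apply cob_congr
        intro l' e1 e2
        exact hc l' (by omega)
      have h10 := cob_hom (AddMonoidHom.mulLeft (m : ℚ)) (fun l => b (l.map ρ)) l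
      simp only [AddMonoidHom.coe_mulLeft] at h10
      rw [h9, h10, h7] at h8
      have : ((cob c l : ℤ) : ℚ) = ((m * eC (n+1) g ω (l.map ρ) : ℤ) : ℚ) := by
        rw [← h8]; push_cast; rfl
      exact_mod_cast this)
  exact ⟨δ', e1, e2.trans (by linarith), ρ, fun p => (h5 p).trans_le (by linarith), c', e3, e4⟩

end Ch
end MeanDimPaper

namespace MeanDimPaper
namespace Hp

open scoped unitInterval
open CategoryTheory

/-- nonconstant vectors -/
def NC {m : ℕ} (y : Fin m → ℝ) : Prop := ∃ i j, y i ≠ y j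

def YS (m : ℕ) : Set ((Fin m → ℝ) × ℝ) := {p | p.2 ≠ 0 ∨ NC p.1}

lemma isOpen_NC {m : ℕ} : IsOpen {y : Fin m → ℝ | NC y} := by
  have : {y : Fin m → ℝ | NC y} = ⋃ i, ⋃ j, {y | y i ≠ y j} := by
    ext y; simp [NC]
  rw [this]
  exact isOpen_iUnion fun i => isOpen_iUnion fun j =>
    isOpen_ne_fun (continuous_apply i) (continuous_apply j)

lemma isOpen_YS (m : ℕ) : IsOpen (YS m) := by
  have : YS m = {p | p.2 ≠ 0} ∪ Prod.fst ⁻¹' {y | NC y} := by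
    ext p; simp [YS]
  rw [this]
  exact (isOpen_ne_fun continuous_snd continuous_const).union (isOpen_NC.preimage continuous_fst)

variable {m : ℕ} {Z : Type*} [TopologicalSpace Z] {Z' : Type*} [TopologicalSpace Z']

lemma NC_smul {y : Fin m → ℝ} (h : NC y) {r : ℝ} (hr : r ≠ 0) : NC (r • y) := by
  obtain ⟨i, j, h⟩ := h
  exact ⟨i, j, by simpa [hr] using h⟩

lemma NC_perm {y : Fin m → ℝ} (h : NC y) (π : Equiv.Perm (Fin m)) : NC (fun i => y (π i)) := by
  obtain ⟨i, j, h⟩ := h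
  exact ⟨π.symm i, π.symm j, by simpa using h⟩

def Nn (m : ℕ) (Z : Type*) [TopologicalSpace Z] : C(Z, YS m) :=
  ContinuousMap.const Z ⟨(0, 1), Or.inl one_ne_zero⟩
def Ss (m : ℕ) (Z : Type*) [TopologicalSpace Z] : C(Z, YS m) :=
  ContinuousMap.const Z ⟨(0, -1), Or.inl (neg_ne_zero.2 one_ne_zero)⟩

/-- curried map from a jointly continuous function -/
def cur {P : Type*} [TopologicalSpace P] (f : P → Z → (Fin m → ℝ) × ℝ)
    (hf : Continuous fun p : P × Z => f p.1 p.2) (hY : ∀ p z, f p z ∈ YS m) : C(P, C(Z, YS m)) :=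
  ContinuousMap.curry ⟨fun p => ⟨f p.1 p.2, hY _ _⟩, by exact hf.subtype_mk _⟩

lemma cur_apply {P : Type*} [TopologicalSpace P] (f : P → Z → (Fin m → ℝ) × ℝ)
    (hf : Continuous fun p : P × Z => f p.1 p.2) (hY : ∀ p z, f p z ∈ YS m) (p : P) (z : Z) :
    ((cur f hf hY p z : YS m) : (Fin m → ℝ) × ℝ) = f p z := rfl

lemma mem_YS_E {y : Fin m → ℝ} (h : NC y) (t : ℝ) : ((t * (1 - t)) • y, 1 - 2 * t) ∈ YS m := by
  by_cases ht : t = 1/2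
  · right
    exact NC_smul h (by rw [ht]; norm_num)
  · left
    intro h'
    apply ht
    simp only at h'
    linarith

/-- the suspension path -/
def PP (h : C(Z, Fin m → ℝ)) (hh : ∀ z, NC (h z)) : Path (Nn m Z) (Ss m Z) where
  toContinuousMap := cur (fun (t : I) z => (((t:ℝ) * (1 - t)) • h z, 1 - 2 * (t:ℝ)))
    (by fun_prop) (fun t z => mem_YS_E (hh z) t)
  source' := by
    ext z : 2
    simp [cur, Nn]
  target' := by
    ext z : 2
    simp [cur, Ss]
    norm_num

lemma PP_apply (h : C(Z, Fin m → ℝ)) (hh : ∀ z, NC (h z)) (t : I) (z : Z) :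
    ((PP h hh t z : YS m) : (Fin m → ℝ) × ℝ) = (((t:ℝ) * (1 - t)) • h z, 1 - 2 * (t:ℝ)) := rfl

/-- commuting squares -/
lemma sq {M : Type*} [TopologicalSpace M] (Γ : C(I × I, M)) {a b c d : M} (p : Path a b)
    (q : Path b d) (r : Path a c) (s : Path c d) (hp : ∀ t, p t = Γ (0, t))
    (hq : ∀ t, q t = Γ (t, 1)) (hr : ∀ t, r t = Γ (t, 0)) (hs : ∀ t, s t = Γ (1, t)) :
    (p.trans q).Homotopic (r.trans s) := by
  have ha : a = Γ (0, 0) := by rw [← hp]; simp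
  have hb : b = Γ (0, 1) := by rw [← hp]; simp
  have hc : c = Γ (1, 0) := by rw [← hs]; simp
  have hd : d = Γ (1, 1) := by rw [← hs]; simp
  subst ha hb hc hd
  let p' : Path ((0:I), (0:I)) (0, 1) := ⟨⟨fun t => (0, t), by fun_prop⟩, rfl, rfl⟩
  let q' : Path ((0:I), (1:I)) (1, 1) := ⟨⟨fun t => (t, 1), by fun_prop⟩, rfl, rfl⟩
  let r' : Path ((0:I), (0:I)) (1, 0) := ⟨⟨fun t => (t, 0), by fun_prop⟩, rfl, rfl⟩
  let s' : Path ((1:I), (0:I)) (1, 1) := ⟨⟨fun t => (1, t), by fun_prop⟩, rfl, rfl⟩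
  haveI : ContractibleSpace I := (convex_Icc (0:ℝ) 1).contractibleSpace ⟨0, by simp⟩
  have h1 : (p'.trans q').Homotopic (r'.trans s') := SimplyConnectedSpace.paths_homotopic _ _
  have h2 := h1.map Γ
  have e1 : p'.map Γ.continuous = p := by ext t; exact (hp t).symm
  have e2 : q'.map Γ.continuous = q := by ext t; exact (hq t).symm
  have e3 : r'.map Γ.continuous = r := by ext t; exact (hr t).symm
  have e4 : s'.map Γ.continuous = s := by ext t; exact (hs t).symm
  rw [Path.map_trans, Path.map_trans, e1, e2, e3, e4] at h2
  exact h2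

/-- path classes as arrows -/
def cl {M : Type*} [TopologicalSpace M] {a b : M} (p : Path a b) :
    FundamentalGroupoid.mk a ⟶ FundamentalGroupoid.mk b := Path.Homotopic.Quotient.mk p

lemma cl_trans {M : Type*} [TopologicalSpace M] {a b c : M} (p : Path a b) (q : Path b c) :
    cl (p.trans q) = cl p ≫ cl q := rfl

lemma cl_symm {M : Type*} [TopologicalSpace M] {a b : M} (p : Path a b) :
    cl p.symm = Groupoid.inv (cl p) := rfl

lemma cl_refl {M : Type*} [TopologicalSpace M] (a : M) :
    cl (Path.refl a) = 𝟙 _ := rfl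

lemma cl_eq {M : Type*} [TopologicalSpace M] {a b : M} {p q : Path a b} :
    cl p = cl q ↔ p.Homotopic q := Path.Homotopic.Quotient.eq

lemma cl_sq {M : Type*} [TopologicalSpace M] (Γ : C(I × I, M)) {a b c d : M} (p : Path a b)
    (q : Path b d) (r : Path a c) (s : Path c d) (hp : ∀ t, p t = Γ (0, t))
    (hq : ∀ t, q t = Γ (t, 1)) (hr : ∀ t, r t = Γ (t, 0)) (hs : ∀ t, s t = Γ (1, t)) :
    cl p ≫ cl q = cl r ≫ cl s := cl_eq.2 (sq Γ p q r s hp hq hr hs)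

lemma PP_line {h0 h1 : C(Z, Fin m → ℝ)} (hh0 : ∀ z, NC (h0 z)) (hh1 : ∀ z, NC (h1 z))
    (H : ∀ z, ∀ θ : ℝ, 0 ≤ θ → θ ≤ 1 → NC ((1 - θ) • h0 z + θ • h1 z)) :
    cl (PP h0 hh0) = cl (PP h1 hh1) := by
  have := cl_sq (cur (P := I × I) (fun p z => (((p.2:ℝ) * (1 - p.2)) •
      ((1 - (p.1:ℝ)) • h0 z + (p.1:ℝ) • h1 z), 1 - 2 * (p.2:ℝ))) (by fun_prop)
      (fun p z => mem_YS_E (H z p.1 p.1.2.1 p.1.2.2) _))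
    (PP h0 hh0) (Path.refl _) (Path.refl _) (PP h1 hh1)
    (by intro t; ext z : 2; simp [cur_apply, PP_apply])
    (by
      intro t; ext z : 2; rw [Path.refl_apply]; simp [cur_apply, Ss]; norm_num)
    (by intro t; ext z : 2; rw [Path.refl_apply]; simp [cur_apply, Nn])
    (by intro t; ext z : 2; simp [cur_apply, PP_apply])
  simpa [cl_refl] using this

/-- constant map at a basis vector -/
def eb (Z : Type*) [TopologicalSpace Z] (i : Fin m) : C(Z, Fin m → ℝ) :=
  ContinuousMap.const Z (Pi.single i 1)

lemma third (hm : 3 ≤ m) (i j : Fin m) : ∃ k : Fin m, k ≠ i ∧ k ≠ j := by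
  have : ({i, j} : Finset (Fin m)).card < (Finset.univ : Finset (Fin m)).card := by
    have := Finset.card_le_two (a := i) (b := j)
    simp; omega
  obtain ⟨k, _, hk⟩ := Finset.exists_mem_notMem_of_card_lt_card this
  simp at hk
  exact ⟨k, hk.1, hk.2⟩

lemma NC_eb (hm : 3 ≤ m) (i : Fin m) (z : Z) : NC (eb Z i z) := by
  obtain ⟨k, hk, _⟩ := third hm i i
  exact ⟨i, k, by simp [eb, hk]⟩

/-- null lemma -/
lemma PP_null (hm : 3 ≤ m) {h : C(Z, Fin m → ℝ)} (hh : ∀ z, NC (h z)) (k : Fin m)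
    (h0 : ∀ z i, 0 ≤ h z i) (hk : ∀ z, ∃ j, j ≠ k ∧ h z j = 0) :
    cl (PP h hh) = cl (PP (eb Z k) (NC_eb hm k)) := by
  apply PP_line
  intro z θ h1 h2
  rcases h1.eq_or_lt with rfl | h1
  · simpa using hh z
  obtain ⟨j, hj, hj'⟩ := hk z
  refine ⟨k, j, ?_⟩
  simp [eb, hj, hj']
  have := h0 z k
  have : 0 ≤ (1 - θ) * h z k := mul_nonneg (by linarith) this
  intro h'
  linarith

lemma PP_eb (hm : 3 ≤ m) (i k : Fin m) :
    cl (PP (eb Z i) (NC_eb hm i)) = cl (PP (eb Z k) (NC_eb hm k)) := by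
  obtain ⟨j, hj, hj'⟩ := third hm i k
  refine PP_null hm _ k ?_ ?_
  · intro z l
    simp only [eb, ContinuousMap.const_apply, Pi.single_apply]
    split_ifs <;> norm_num
  · intro z
    exact ⟨j, hj', by simp [eb, hj]⟩

/-- the difference constant -/
def rb (Z : Type*) [TopologicalSpace Z] (i j : Fin m) : C(Z, Fin m → ℝ) :=
  ContinuousMap.const Z (Pi.single i 1 - Pi.single j 1)

lemma NC_rb (hm : 3 ≤ m) {i j : Fin m} (hij : i ≠ j) (z : Z) : NC (rb Z i j z) := by
  obtain ⟨k, hk, hk'⟩ := third hm i j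
  exact ⟨i, k, by simp [rb, hk, hk', hij]⟩

lemma PP_rb (hm : 3 ≤ m) {i j : Fin m} (hij : i ≠ j) :
    cl (PP (rb Z i j) (NC_rb hm hij)) = cl (PP (eb Z i) (NC_eb hm i)) := by
  obtain ⟨k, hk, hk'⟩ := third hm i j
  apply PP_line
  intro z θ h1 h2
  refine ⟨i, k, ?_⟩
  simp [rb, eb, hk, hk', hij]

/-- composition with a permutation of coordinates -/
def pm (h : C(Z, Fin m → ℝ)) (π : Equiv.Perm (Fin m)) : C(Z, Fin m → ℝ) :=
  ⟨fun z i => h z (π i), by fun_prop⟩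

/-- the loop class of a map -/
noncomputable def yy (hm : 3 ≤ m) (h : C(Z, Fin m → ℝ)) (hh : ∀ z, NC (h z)) :
    FundamentalGroup C(Z, YS m) (Nn m Z) :=
  cl (PP h hh) ≫ Groupoid.inv (cl (PP (eb Z ⟨0, by omega⟩) (NC_eb hm _)))

lemma yy_null (hm : 3 ≤ m) {h : C(Z, Fin m → ℝ)} (hh : ∀ z, NC (h z)) (k : Fin m)
    (h0 : ∀ z i, 0 ≤ h z i) (hk : ∀ z, ∃ j, j ≠ k ∧ h z j = 0) :
    yy hm h hh = 1 := by
  rw [yy, PP_null hm hh k h0 hk, PP_eb hm k ⟨0, by omega⟩]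
  simp

lemma swap_mem {y : Fin m → ℝ} {s : ℝ} (h : (y, s) ∈ YS m) {i j : Fin m} (hij : i ≠ j) (θ : ℝ) :
    (y + ((1 - 2 * θ) * ((y i - y j) / 2) - θ * (1 - θ) * s - (y i - y j) / 2) •
        (Pi.single i 1 - Pi.single j 1 : Fin m → ℝ),
      θ * (1 - θ) * ((y i - y j) / 2) + (1 - 2 * θ) * s) ∈ YS m := by
  by_contra hcon
  simp only [YS, NC, Set.mem_setOf_eq, not_or, not_not, not_exists] at hcon
  obtain ⟨h1, h2⟩ := hcon
  have h3 := h2 i j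
  simp only [Pi.add_apply, Pi.smul_apply, Pi.sub_apply, Pi.single_eq_same, smul_eq_mul,
    Pi.single_eq_of_ne hij, Pi.single_eq_of_ne hij.symm] at h3
  set a := (y i - y j) / 2 with ha
  have hy : y i = y j + 2 * a := by rw [ha]; ring
  have h4 : (1 - 2 * θ) * a - θ * (1 - θ) * s = 0 := by rw [hy] at h3; linarith
  have hq : 0 < (1 - 2 * θ)^2 + (θ * (1 - θ))^2 := by
    by_cases ht : θ = 1/2
    · rw [ht]; norm_num
    · have : 1 - 2 * θ ≠ 0 := fun h => ht (by linarith)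
      positivity
  have h5 : ((1 - 2 * θ)^2 + (θ * (1 - θ))^2) * a = 0 := by
    linear_combination (1 - 2 * θ) * h4 + (θ * (1 - θ)) * h1
  have h6 : ((1 - 2 * θ)^2 + (θ * (1 - θ))^2) * s = 0 := by
    linear_combination (1 - 2 * θ) * h1 - (θ * (1 - θ)) * h4
  have h7 : a = 0 := by simpa [hq.ne'] using h5
  have h8 : s = 0 := by simpa [hq.ne'] using h6
  rcases h with h | ⟨k, l, h⟩
  · exact h h8
  · apply h
    have := h2 k l
    simpa [h7, h8] using this

lemma swap_one {y : Fin m → ℝ} {i j : Fin m} (hij : i ≠ j) :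
    y - (y i - y j) • (Pi.single i 1 - Pi.single j 1 : Fin m → ℝ) = fun k => y (Equiv.swap i j k) := by
  funext k
  by_cases h1 : k = i
  · subst h1; simp [hij]
  by_cases h2 : k = j
  · subst h2; simp [hij.symm]
  simp [h1, h2, Equiv.swap_apply_of_ne_of_ne h1 h2]

lemma yy_swap (hm : 3 ≤ m) {h : C(Z, Fin m → ℝ)} (hh : ∀ z, NC (h z)) {i j : Fin m} (hij : i ≠ j)
    (hh' : ∀ z, NC (pm h (Equiv.swap i j) z)) :
    yy hm (pm h (Equiv.swap i j)) hh' = (yy hm h hh)⁻¹ := by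
  have key := cl_sq (cur (P := I × I) (Z := Z) (fun p z =>
      (((p.2:ℝ) * (1 - p.2)) • h z + ((1 - 2 * (p.1:ℝ)) * (((p.2:ℝ) * (1 - p.2)) * (h z i - h z j) / 2)
          - p.1 * (1 - p.1) * (1 - 2 * p.2) - (((p.2:ℝ) * (1 - p.2)) * (h z i - h z j) / 2)) •
        (Pi.single i 1 - Pi.single j 1 : Fin m → ℝ),
      p.1 * (1 - p.1) * (((p.2:ℝ) * (1 - p.2)) * (h z i - h z j) / 2) + (1 - 2 * (p.1:ℝ)) * (1 - 2 * p.2)))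
      (by fun_prop)
      (fun p z => by
        have := swap_mem (mem_YS_E (hh z) p.2) hij p.1
        convert this using 4 <;> simp <;> ring))
    (PP h hh) (PP (rb Z i j) (NC_rb hm hij)).symm (PP (rb Z j i) (NC_rb hm hij.symm))
    (PP (pm h (Equiv.swap i j)) hh').symm
    (by intro t; ext z : 2; simp [cur_apply, PP_apply])
    (by
      intro t; ext z : 2
      rw [Path.symm_apply]
      simp [cur_apply, PP_apply, rb]
      constructor
      · rw [← neg_smul]; congr 1; ring
      · ring)
    (by
      intro t; ext z : 2
      simp [cur_apply, PP_apply, rb]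
      rw [← smul_neg, neg_sub])
    (by
      intro t; ext z : 2
      rw [Path.symm_apply]
      have e1 := swap_one (y := h z) hij
      have e2 : (pm h (Equiv.swap i j)) z = fun k => h z (Equiv.swap i j k) := rfl
      rw [Function.comp_apply, PP_apply, cur_apply, e2, ← e1]
      ext k
      · simp
        ring
      · simp
        ring)
  rw [cl_symm, cl_symm, PP_rb hm hij, PP_rb hm hij.symm, PP_eb hm i ⟨0, by omega⟩, PP_eb hm j ⟨0, by omega⟩] at key
  rw [eq_inv_iff_mul_eq_one]
  show (cl (PP h hh) ≫ Groupoid.inv (cl (PP (eb Z ⟨0, by omega⟩) (NC_eb hm _)))) ≫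
    (cl (PP (pm h (Equiv.swap i j)) hh') ≫ Groupoid.inv (cl (PP (eb Z ⟨0, by omega⟩) (NC_eb hm _)))) = 𝟙 _
  rw [key]
  simp

lemma yy_perm (hm : 3 ≤ m) {h : C(Z, Fin m → ℝ)} (hh : ∀ z, NC (h z)) (π : Equiv.Perm (Fin m)) :
    ∀ hh' : ∀ z, NC (pm h π z), yy hm (pm h π) hh' = (yy hm h hh) ^ ((Equiv.Perm.sign π : ℤˣ) : ℤ) := by
  induction π using Equiv.Perm.swap_induction_on' with
  | one =>
    intro hh'
    simp
    rfl
  | mul_swap f x y hxy ih =>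
    intro hh'
    have h1 : ∀ z, NC (pm h f z) := fun z => NC_perm (hh z) f
    have h2 : pm h (f * Equiv.swap x y) = pm (pm h f) (Equiv.swap x y) := rfl
    have h3 := yy_swap hm h1 hxy (fun z => NC_perm (h1 z) _)
    have h4 : yy hm (pm h (f * Equiv.swap x y)) hh' = (yy hm (pm h f) h1)⁻¹ := h3
    rw [h4, ih h1, Equiv.Perm.sign_mul, Equiv.Perm.sign_swap hxy]
    simp

/-- restriction of maps -/
def rs (m : ℕ) (i : C(Z', Z)) : C(C(Z, YS m), C(Z', YS m)) := ⟨fun f => f.comp i, ContinuousMap.continuous_precomp i⟩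

/-- restriction on loop classes -/
noncomputable def rsG (m : ℕ) (i : C(Z', Z)) :
    FundamentalGroup C(Z, YS m) (Nn m Z) →* FundamentalGroup C(Z', YS m) (Nn m Z') :=
  FundamentalGroup.map (rs m i) (Nn m Z)

lemma rsG_cl (i : C(Z', Z)) (p : Path (Nn m Z) (Nn m Z)) :
    rsG m i (cl p) = cl (p.map (rs m i).continuous) := rfl

lemma yy_rs (hm : 3 ≤ m) (i : C(Z', Z)) (h : C(Z, Fin m → ℝ)) (hh : ∀ z, NC (h z)) :
    rsG m i (yy hm h hh) = yy hm (h.comp i) (fun z => hh (i z)) := by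
  have h1 : yy hm h hh = cl ((PP h hh).trans (PP (eb Z ⟨0, by omega⟩) (NC_eb hm _)).symm) := rfl
  have h2 : yy hm (h.comp i) (fun z => hh (i z)) =
    cl ((PP (h.comp i) (fun z => hh (i z))).trans (PP (eb Z' ⟨0, by omega⟩) (NC_eb hm _)).symm) := rfl
  rw [h1, h2, rsG_cl, Path.map_trans]
  rfl

end Hp
end MeanDimPaper

namespace MeanDimPaper
namespace Hp

open scoped unitInterval
open CategoryTheory

lemma het_core {X T E : Type*} [TopologicalSpace X] [NormalSpace X] [TopologicalSpace T]
    [CompactSpace T] [TopologicalSpace E] {O : Set E} (hO : IsOpen O) (G : X → I → T → E)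
    (hG : Continuous fun p : X × I × T => G p.1 p.2.1 p.2.2) {C : Set X} (hC : IsClosed C)
    (h1 : ∀ x ∈ C, ∀ θ t, G x θ t ∈ O) (h0 : ∀ x t, G x 0 t ∈ O) :
    ∃ u : C(X, I), (∀ x ∈ C, u x = 1) ∧ ∀ x t, G x (u x) t ∈ O := by
  obtain ⟨U, hU⟩ : ∃ U : Set X, U = {x | ∀ q : I × T, G x q.1 q.2 ∈ O} := ⟨_, rfl⟩
  have hUo : IsOpen U := by
    have h2 : IsOpen {p : X × I × T | G p.1 p.2.1 p.2.2 ∈ O} := hO.preimage hG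
    rw [hU, isOpen_iff_mem_nhds]
    intro x hx
    obtain ⟨u, v, hu, hv, hxu, hvv, huv⟩ := generalized_tube_lemma (s := {x}) isCompact_singleton
      (isCompact_univ (X := I × T)) h2 (by
        rintro ⟨y, q⟩ ⟨hy, -⟩
        obtain rfl : y = x := hy
        exact hx q)
    refine Filter.mem_of_superset (hu.mem_nhds (hxu rfl)) ?_
    intro y hy q
    exact @huv (y, q) ⟨hy, hvv trivial⟩
  obtain ⟨f, hf0, hf1, hf⟩ := exists_continuous_zero_one_of_isClosed hUo.isClosed_compl hC
    (Set.disjoint_left.2 (fun x hx hx' => hx (by rw [hU]; exact fun q => h1 x hx' _ _)))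
  refine ⟨⟨fun x => ⟨f x, hf x⟩, by fun_prop⟩, ?_, ?_⟩
  · intro x hx
    exact Subtype.ext (hf1 hx)
  · intro x t
    by_cases hx : x ∈ U
    · rw [hU] at hx
      exact hx (_, t)
    · have : (⟨f x, hf x⟩ : I) = 0 := Subtype.ext (hf0 hx)
      simp only [ContinuousMap.coe_mk]
      rw [this]
      exact h0 x t

variable {m : ℕ}

/-- homotopy extension for paths -/
lemma loop_het {X Z : Type*} [TopologicalSpace X] [CompactSpace X] [T2Space X]
    [TopologicalSpace Z] [CompactSpace Z] [T2Space Z] (i : C(Z, X)) (hi : Function.Injective i)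
    {p q : YS m} (F0 : Path (ContinuousMap.const X p) (ContinuousMap.const X q))
    (Φ : Path (ContinuousMap.const Z p) (ContinuousMap.const Z q))
    (hom : Path.Homotopic (x₀ := ContinuousMap.const Z p) (x₁ := ContinuousMap.const Z q)
      (F0.map (rs m i).continuous) Φ) :
    ∃ F : Path (ContinuousMap.const X p) (ContinuousMap.const X q), ∀ t z, F t (i z) = Φ t z := by
  obtain ⟨H⟩ := hom
  have hemb : Topology.IsClosedEmbedding i := i.continuous.isClosedEmbedding hi
  have hemb2 : Topology.IsClosedEmbedding (Prod.map i (id : I × I → I × I)) :=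
    hemb.prodMap Topology.IsClosedEmbedding.id
  have cF0 : Continuous fun p : X × I => ((F0 p.2 p.1 : YS m) : (Fin m → ℝ) × ℝ) := by
    have : Continuous fun p : X × I => (F0 p.2) p.1 := by fun_prop
    exact continuous_subtype_val.comp this
  have cH : Continuous fun p : Z × I × I => ((H p.2 p.1 : YS m) : (Fin m → ℝ) × ℝ) := by
    have : Continuous fun p : Z × I × I => (H p.2) p.1 := by fun_prop
    exact continuous_subtype_val.comp this
  let L : C(Z × I × I, (Fin m → ℝ) × ℝ) := ⟨fun p => ((H p.2 p.1 : YS m) : (Fin m → ℝ) × ℝ)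
    - ((F0 p.2.2 (i p.1) : YS m) : (Fin m → ℝ) × ℝ), by
      refine cH.sub (cF0.comp (f := fun p : Z × I × I => (i p.1, p.2.2)) ?_)
      fun_prop⟩
  obtain ⟨L', hL'⟩ := ContinuousMap.exists_extension hemb2 L
  have hLz : ∀ z θ t, L' (i z, θ, t) = L (z, θ, t) := fun z θ t => DFunLike.congr_fun hL' (z, θ, t)
  have hL0 : ∀ z t, L (z, 0, t) = 0 := by
    intro z t
    simp only [L, ContinuousMap.coe_mk]
    rw [H.apply_zero]
    exact sub_self _
  have hLs : ∀ z θ, L (z, θ, 0) = 0 := by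
    intro z θ
    simp only [L, ContinuousMap.coe_mk]
    rw [H.source, F0.source]
    exact sub_self _
  have hLt : ∀ z θ, L (z, θ, 1) = 0 := by
    intro z θ
    simp only [L, ContinuousMap.coe_mk]
    rw [H.target, F0.target]
    exact sub_self _
  let L1 : X → I → I → (Fin m → ℝ) × ℝ := fun x θ t => L' (x, θ, t) - L' (x, 0, t)
  have cL1 : Continuous fun p : X × I × I => L1 p.1 p.2.1 p.2.2 := by
    simp only [L1]; fun_prop
  let L2 : X → I → I → (Fin m → ℝ) × ℝ := fun x θ t =>
    L1 x θ t - (1 - (t:ℝ)) • L1 x θ 0 - (t:ℝ) • L1 x θ 1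
  have cL2 : Continuous fun p : X × I × I => L2 p.1 p.2.1 p.2.2 := by
    simp only [L2, L1]; fun_prop
  have hL2 : ∀ z θ t, L2 (i z) θ t = L (z, θ, t) := by
    intro z θ t
    simp [L2, L1, hLz, hL0, hLs, hLt]
  have hG : ∀ z θ t, ((F0 t (i z) : YS m) : (Fin m → ℝ) × ℝ) + L2 (i z) θ t = (H (θ, t) z : YS m) := by
    intro z θ t
    rw [hL2]
    simp only [L, ContinuousMap.coe_mk]
    abel
  obtain ⟨u, hu1, hu⟩ := het_core (isOpen_YS m)
    (fun x θ t => ((F0 t x : YS m) : (Fin m → ℝ) × ℝ) + L2 x θ t)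
    ((cF0.comp (f := fun p : X × I × I => (p.1, p.2.2)) (by fun_prop)).add cL2)
    (C := Set.range i) hemb.isClosed_range (by
      rintro _ ⟨z, rfl⟩ θ t
      rw [hG]; exact Subtype.prop _) (by
      intro x t
      simp only [L2, L1, sub_self, smul_zero, sub_zero, add_zero]
      exact Subtype.prop _)
  refine ⟨⟨cur (fun t x => ((F0 t x : YS m) : (Fin m → ℝ) × ℝ) + L2 x (u x) t) ?_ (fun t x => hu x t), ?_, ?_⟩, ?_⟩
  · refine (cF0.comp (f := fun p : I × X => (p.2, p.1)) (by fun_prop)).add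
      (cL2.comp (f := fun p : I × X => (p.2, u p.2, p.1)) (by fun_prop))
  · ext x : 2
    show ((F0 0 x : YS m) : (Fin m → ℝ) × ℝ) + L2 x (u x) 0 = p
    rw [F0.source]
    simp [L2]
  · ext x : 2
    show ((F0 1 x : YS m) : (Fin m → ℝ) × ℝ) + L2 x (u x) 1 = q
    rw [F0.target]
    simp [L2]
  · intro t z
    apply Subtype.ext
    show ((F0 t (i z) : YS m) : (Fin m → ℝ) × ℝ) + L2 (i z) (u (i z)) t = (Φ t z : YS m)
    rw [hG, hu1 _ ⟨z, rfl⟩, H.apply_one]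
    rfl

/-- plain homotopy extension for nonvanishing maps -/
lemma plain_het {X : Type*} [TopologicalSpace X] [CompactSpace X] [T2Space X]
    {C : Set X} (hC : IsClosed C)
    (ψ : C(X, Fin m → ℝ)) (h0 : ∀ x, ψ x ≠ 0) (H : C(C × I, Fin m → ℝ)) (hH : ∀ p, H p ≠ 0)
    (hH0 : ∀ c : C, H (c, 0) = ψ c) :
    ∃ ψ' : C(X, Fin m → ℝ), (∀ x, ψ' x ≠ 0) ∧ ∀ c : C, ψ' c = H (c, 1) := by
  have hemb : Topology.IsClosedEmbedding (Prod.map ((↑) : C → X) (id : I → I)) :=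
    hC.isClosedEmbedding_subtypeVal.prodMap Topology.IsClosedEmbedding.id
  obtain ⟨L', hL'⟩ := ContinuousMap.exists_extension hemb H
  have hLz : ∀ (z : C) θ, L' (z, θ) = H (z, θ) := fun z θ => DFunLike.congr_fun hL' (z, θ)
  obtain ⟨u, hu1, hu⟩ := het_core (T := Unit) (O := {y : Fin m → ℝ | y ≠ 0}) (isOpen_ne)
    (fun x θ _ => ψ x + L' (x, θ) - L' (x, 0)) (by fun_prop) hC (by
      intro x hx θ _
      have h1 := hLz ⟨x, hx⟩ θ
      have h2 := hLz ⟨x, hx⟩ 0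
      simp only at h1 h2
      rw [h1, h2, hH0]
      simpa using hH _) (by intro x _; simpa using h0 x)
  refine ⟨⟨fun x => ψ x + L' (x, u x) - L' (x, 0), by fun_prop⟩, fun x => hu x (), ?_⟩
  intro c
  show ψ c + L' (c, u c) - L' (c, 0) = _
  rw [hLz, hLz, hH0, hu1 c c.2]
  simp

/-- straight line version -/
lemma line_het {X : Type*} [TopologicalSpace X] [CompactSpace X] [T2Space X]
    {C : Set X} (hC : IsClosed C)
    (ψ : C(X, Fin m → ℝ)) (h0 : ∀ x, ψ x ≠ 0) (h : C(C, Fin m → ℝ))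
    (hH : ∀ c : C, ∀ θ : ℝ, 0 ≤ θ → θ ≤ 1 → (1 - θ) • ψ c + θ • h c ≠ 0) :
    ∃ ψ' : C(X, Fin m → ℝ), (∀ x, ψ' x ≠ 0) ∧ ∀ c : C, ψ' c = h c := by
  obtain ⟨ψ', h1, h2⟩ := plain_het hC ψ h0 ⟨fun p => (1 - (p.2:ℝ)) • ψ p.1 + (p.2:ℝ) • h p.1, by fun_prop⟩
    (fun p => hH p.1 p.2 p.2.2.1 p.2.2.2) (by intro c; simp)
  exact ⟨ψ', h1, fun c => by rw [h2]; simp⟩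

end Hp
end MeanDimPaper

namespace MeanDimPaper
namespace Hp

open scoped unitInterval ENNReal
open CategoryTheory

lemma reindex {M D : ℕ} (a : Fin M → ℝ) (ha : ∑ v, a v = 1)
    (hs : (Finset.univ.filter fun v => a v ≠ 0).card ≤ D + 1) :
    ∃ (ν : Fin (D + 1) → Fin M) (u : Fin D → ℝ), ∀ g : Fin M → (Fin D → ℝ) × ℝ,
      ∑ v, a v • g v = (1 - ∑ j, u j) • g (ν 0) + ∑ j, u j • g (ν j.succ) := by
  classical
  obtain ⟨S, hS⟩ : ∃ S, S = Finset.univ.filter fun v => a v ≠ 0 := ⟨_, rfl⟩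
  rw [← hS] at hs
  have hne : Nonempty S := by
    by_contra h
    rw [nonempty_subtype] at h
    push Not at h
    have : ∑ v, a v = 0 := Finset.sum_eq_zero (fun v _ => by
      by_contra h2
      exact h v (by simp [hS, h2]))
    linarith
  obtain ⟨f⟩ : Nonempty (S ↪ Fin (D + 1)) := by
    rw [Function.Embedding.nonempty_iff_card_le]
    simpa using hs
  have hb : ∀ {E : Type} [AddCommGroup E] [Module ℝ E] (g : Fin M → E), ∑ j, (∑ v : S, if f v = j then a v else 0) • g (Function.invFun f j : S)
      = ∑ v, a v • g v := by
    intro E _ _ g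
    simp_rw [Finset.sum_smul]
    rw [Finset.sum_comm]
    simp only [ite_smul, zero_smul, Finset.sum_ite_eq, Finset.mem_univ, if_true]
    simp_rw [Function.leftInverse_invFun f.injective _]
    rw [Finset.sum_coe_sort S (fun v => a v • g v)]
    apply Finset.sum_subset (Finset.subset_univ _)
    intro v _ hv
    have : a v = 0 := by
      by_contra h2
      exact hv (by simp [hS, h2])
    simp [this]
  refine ⟨fun j => (Function.invFun f j : S), fun j => ∑ v : S, if f v = j.succ then a v else 0, fun g => ?_⟩
  rw [← hb g, Fin.sum_univ_succ]
  have h1 := hb (fun _ => (1 : ℝ))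
  simp only [smul_eq_mul, mul_one, ha] at h1
  rw [Fin.sum_univ_succ] at h1
  congr 2
  linarith

lemma genpos {M D : ℕ} (hD : 3 ≤ D) (Q : Fin M → ℝ → (Fin D → ℝ) × ℝ)
    (hQ : ∀ v, ContDiff ℝ 1 (Q v)) :
    ∃ w w' : Fin D → ℝ, ‖w‖ ≤ 1 ∧ ‖w'‖ ≤ 1 ∧ ∀ a : Fin M → ℝ, ∑ v, a v = 1 →
      (Finset.univ.filter fun v => a v ≠ 0).card ≤ D + 1 → ∀ t t' r r' : ℝ, 0 < r → 0 < r' →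
      ∑ v, a v • Q v t = r • (w, 1) → ∑ v, a v • Q v t' = r' • (w', -1) → False := by
  classical
  let P : (Fin (D + 1) → Fin M) → (Fin D → ℝ) × ℝ → (Fin D → ℝ) × ℝ := fun ν p =>
    (1 - ∑ j, p.1 j) • Q (ν 0) p.2 + ∑ j, p.1 j • Q (ν j.succ) p.2
  have hP : ∀ ν, ContDiff ℝ 1 (P ν) := by
    intro ν
    have : ∀ v, ContDiff ℝ 1 (fun p : (Fin D → ℝ) × ℝ => Q v p.2) :=
      fun v => (hQ v).comp contDiff_snd
    have h2 : ∀ j, ContDiff ℝ 1 (fun p : (Fin D → ℝ) × ℝ => p.1 j) := fun j => by fun_prop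
    refine ContDiff.add (ContDiff.smul (contDiff_const.sub (ContDiff.sum fun j _ => h2 j)) (this _))
      (ContDiff.sum fun j _ => (h2 j).smul (this _))
  let f : (Fin (D + 1) → Fin M) → ((Fin D → ℝ) × ℝ) × ℝ → (Fin D → ℝ) × (Fin D → ℝ) := fun ν p =>
    ((P ν p.1).2⁻¹ • (P ν p.1).1, (-(P ν (p.1.1, p.2)).2)⁻¹ • (P ν (p.1.1, p.2)).1)
  let s : (Fin (D + 1) → Fin M) → Set (((Fin D → ℝ) × ℝ) × ℝ) := fun ν =>
    {p | (P ν p.1).2 ≠ 0 ∧ -(P ν (p.1.1, p.2)).2 ≠ 0}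
  have hdim : dimH (⋃ ν, f ν '' s ν) < Module.finrank ℝ ((Fin D → ℝ) × (Fin D → ℝ)) := by
    rw [dimH_iUnion]
    refine lt_of_le_of_lt (b := ((D + 2 : ℕ) : ℝ≥0∞)) (iSup_le fun ν => ?_) ?_
    · refine (dimH_image_le_of_locally_lipschitzOn ?_).trans ((dimH_mono (Set.subset_univ _)).trans ?_)
      · intro p hp
        have hc : ContDiffAt ℝ 1 (f ν) p := by
          have h1 : ContDiffAt ℝ 1 (fun p : ((Fin D → ℝ) × ℝ) × ℝ => P ν p.1) p :=
            ((hP ν).comp contDiff_fst).contDiffAt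
          have h2 : ContDiffAt ℝ 1 (fun p : ((Fin D → ℝ) × ℝ) × ℝ => P ν (p.1.1, p.2)) p :=
            ((hP ν).comp (by fun_prop)).contDiffAt
          exact ContDiffAt.prodMk ((h1.snd.inv hp.1).smul h1.fst) ((h2.snd.neg.inv hp.2).smul h2.fst)
        obtain ⟨C, t, ht, h⟩ := hc.exists_lipschitzOnWith
        exact ⟨C, t, mem_nhdsWithin_of_mem_nhds ht, h⟩
      · rw [Real.dimH_univ_eq_finrank]
        simp only [Module.finrank_prod, Module.finrank_fintype_fun_eq_card, Fintype.card_fin,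
          Module.finrank_self]
        exact le_rfl
    · simp only [Module.finrank_prod, Module.finrank_fintype_fun_eq_card, Fintype.card_fin]
      exact_mod_cast (by omega)
  have hd := dense_compl_of_dimH_lt_finrank hdim
  obtain ⟨⟨w, w'⟩, hw, hb⟩ := hd.exists_mem_open (Metric.isOpen_ball (x := 0) (ε := 1)) ⟨0, by simp⟩
  have hn : ‖w‖ < 1 ∧ ‖w'‖ < 1 := by
    rw [mem_ball_zero_iff, Prod.norm_def] at hb
    simpa using hb
  refine ⟨w, w', hn.1.le, hn.2.le, fun a ha hs t t' r r' hr hr' h1 h2 => hw ?_⟩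
  obtain ⟨ν, u, hu⟩ := reindex a ha hs
  rw [hu (fun v => Q v t)] at h1
  rw [hu (fun v => Q v t')] at h2
  have h1' : P ν (u, t) = r • (w, 1) := h1
  have h2' : P ν (u, t') = r' • (w', -1) := h2
  refine Set.mem_iUnion.2 ⟨ν, ((u, t), t'), ⟨?_, ?_⟩, ?_⟩
  · simp [h1', hr.ne']
  · simp [h2', hr'.ne']
  · simp only [f, h1', h2']
    ext j <;> simp [hr.ne', hr'.ne']

def PUf (X : Type*) [MetricSpace X] (D : ℕ) : Prop :=
  ∀ δ : ℝ, 0 < δ → ∃ (M : ℕ) (t : Fin M → C(X, ℝ)) (p : Fin M → X), (∀ v x, 0 ≤ t v x) ∧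
    (∀ x, ∑ v, t v x = 1) ∧ (∀ v x, t v x ≠ 0 → dist (p v) x < δ) ∧
    ∀ x, (Finset.univ.filter fun v => t v x ≠ 0).card ≤ D + 1

lemma bern_smooth {E : Type*} [NormedAddCommGroup E] [NormedSpace ℝ E] (f : C(I, E)) {η : ℝ}
    (hη : 0 < η) : ∀ᶠ n : ℕ in Filter.atTop, ∃ Q : ℝ → E, ContDiff ℝ 1 Q ∧ Q 0 = f 0 ∧ Q 1 = f 1 ∧
      ∀ s : I, ‖Q s - f s‖ ≤ η := by
  have h := bernsteinApproximation_uniform f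
  rw [Metric.tendsto_atTop] at h
  obtain ⟨N, hN⟩ := h η hη
  filter_upwards [Filter.eventually_ge_atTop N, Filter.eventually_ge_atTop 1] with n hn h1
  let Q : ℝ → E := fun t => ∑ k : Fin (n + 1),
    ((n.choose k : ℝ) * t ^ (k : ℕ) * (1 - t) ^ (n - k)) • f (bernstein.z k)
  have hQ : ∀ s : I, Q s = bernsteinApproximation n f s := by
    intro s
    rw [bernsteinApproximation.apply]
    simp only [Q, bernstein_apply]
  refine ⟨Q, ?_, ?_, ?_, ?_⟩
  · refine ContDiff.sum fun k _ => ContDiff.smul ?_ contDiff_const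
    fun_prop
  · rw [← bernsteinApproximation.apply_zero n f, ← hQ]; rfl
  · rw [← bernsteinApproximation.apply_one (n := n) (by omega) f, ← hQ]; rfl
  · intro s
    rw [hQ, ← dist_eq_norm]
    exact (ContinuousMap.dist_apply_le_dist s).trans (hN n hn).le

lemma approx {X : Type*} [MetricSpace X] [CompactSpace X] {D : ℕ} (hPU : PUf X D) {E : Type*}
    [NormedAddCommGroup E] [NormedSpace ℝ E] (F : C(X × I, E)) {e0 e1 : E}
    (h0 : ∀ x, F (x, 0) = e0) (h1 : ∀ x, F (x, 1) = e1) {η : ℝ} (hη : 0 < η) :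
    ∃ (M : ℕ) (t : Fin M → C(X, ℝ)) (Q : Fin M → ℝ → E), (∀ v x, 0 ≤ t v x) ∧
      (∀ x, ∑ v, t v x = 1) ∧ (∀ x, (Finset.univ.filter fun v => t v x ≠ 0).card ≤ D + 1) ∧
      (∀ v, ContDiff ℝ 1 (Q v)) ∧ (∀ v, Q v 0 = e0) ∧ (∀ v, Q v 1 = e1) ∧
      ∀ x (s : I), ‖∑ v, t v x • Q v s - F (x, s)‖ ≤ η := by
  have hu := CompactSpace.uniformContinuous_of_continuous F.continuous
  rw [Metric.uniformContinuous_iff] at hu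
  obtain ⟨δ, hδ, hu⟩ := hu (η / 2) (by positivity)
  obtain ⟨M, t, p, ht0, ht1, htp, htc⟩ := hPU δ hδ
  have hb : ∀ᶠ n : ℕ in Filter.atTop, ∀ v, ∃ Q : ℝ → E, ContDiff ℝ 1 Q ∧ Q 0 = e0 ∧ Q 1 = e1 ∧
      ∀ s : I, ‖Q s - F (p v, s)‖ ≤ η / 2 := by
    rw [Filter.eventually_all]
    intro v
    have := bern_smooth (F.comp ⟨fun s => (p v, s), by fun_prop⟩) (half_pos hη)
    simpa [h0, h1] using this
  obtain ⟨n, hn⟩ := hb.exists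
  choose Q hQ hQ0 hQ1 hQs using hn
  refine ⟨M, t, Q, ht0, ht1, htc, hQ, hQ0, hQ1, fun x s => ?_⟩
  have : ∑ v, t v x • Q v s - F (x, s) = ∑ v, t v x • (Q v s - F (x, s)) := by
    simp only [smul_sub, Finset.sum_sub_distrib]
    rw [← Finset.sum_smul, ht1, one_smul]
  rw [this]
  refine (norm_sum_le _ _).trans ?_
  calc ∑ v, ‖t v x • (Q v s - F (x, s))‖ ≤ ∑ v, t v x * η := by
        refine Finset.sum_le_sum fun v _ => ?_
        rw [norm_smul, Real.norm_of_nonneg (ht0 v x)]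
        by_cases hz : t v x = 0
        · simp [hz]
        · refine mul_le_mul_of_nonneg_left ?_ (ht0 v x)
          have h3 : ‖F (p v, s) - F (x, s)‖ < η / 2 := by
            rw [← dist_eq_norm]
            apply hu
            simpa [Prod.dist_eq] using htp v x hz
          have h4 := norm_sub_le_norm_sub_add_norm_sub (Q v s) (F (p v, s)) (F (x, s))
          linarith [hQs v s]
    _ = η := by rw [← Finset.sum_mul, ht1, one_mul]

end Hp
end MeanDimPaper

namespace MeanDimPaper
namespace Hp

open scoped unitInterval ENNReal
open CategoryTheory

/-- the retraction away from two rays -/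
def qq {D : ℕ} (w w' : Fin D → ℝ) (p : (Fin D → ℝ) × ℝ) : Fin D → ℝ :=
  p.1 - (max p.2 0) • w - (max (-p.2) 0) • w'

lemma continuous_qq {D : ℕ} (w w' : Fin D → ℝ) : Continuous (qq w w') := by
  unfold qq
  fun_prop

lemma qq_ne {D : ℕ} {w w' : Fin D → ℝ} {p : (Fin D → ℝ) × ℝ} (hp : p ≠ 0)
    (h1 : ∀ r : ℝ, 0 < r → p ≠ r • (w, 1)) (h2 : ∀ r : ℝ, 0 < r → p ≠ r • (w', -1)) :
    qq w w' p ≠ 0 := by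
  obtain ⟨y, s⟩ := p
  intro h
  unfold qq at h
  simp only at h
  rcases lt_trichotomy s 0 with hs | hs | hs
  · rw [max_eq_right hs.le, max_eq_left (by linarith)] at h
    apply h2 (-s) (by linarith)
    ext j
    · have := congrFun h j
      simp at this ⊢
      linarith
    · simp
  · subst hs
    apply hp
    simp at h
    simp [h]
  · rw [max_eq_left hs.le, max_eq_right (by linarith)] at h
    apply h1 s hs
    ext j
    · have := congrFun h j
      simp at this ⊢
      linarith
    · simp

lemma ray_open {D : ℕ} {X : Type*} [TopologicalSpace X] (G : C(X × I, (Fin D → ℝ) × ℝ))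
    (hG : ∀ p, G p ≠ 0) (w : Fin D → ℝ) (e : ℝ) (he : e ≠ 0) (x : X)
    (h : ∀ s : I, ∀ r : ℝ, 0 < r → G (x, s) ≠ r • (w, e)) :
    ∀ᶠ y in nhds x, ∀ s : I, ∀ r : ℝ, 0 < r → G (y, s) ≠ r • (w, e) := by
  have hcl : IsOpen {p : (Fin D → ℝ) × ℝ | ¬ (p.1 = (p.2 / e) • w ∧ 0 ≤ p.2 / e)} := by
    have h1 : IsClosed {p : (Fin D → ℝ) × ℝ | p.1 = (p.2 / e) • w} :=
      isClosed_eq (by fun_prop) (by fun_prop)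
    have h2 : IsClosed {p : (Fin D → ℝ) × ℝ | 0 ≤ p.2 / e} :=
      isClosed_le (by fun_prop) (by fun_prop)
    exact (h1.inter h2).isOpen_compl
  have := (hcl.preimage G.continuous)
  have hz : ∀ s : I, (x, s) ∈ G ⁻¹' {p : (Fin D → ℝ) × ℝ | ¬ (p.1 = (p.2 / e) • w ∧ 0 ≤ p.2 / e)} := by
    rintro s ⟨h1, h2⟩
    rcases h2.eq_or_lt with h2 | h2
    · apply hG (x, s)
      rw [← h2, zero_smul] at h1
      have h3 : (G (x, s)).2 = 0 := by
        rcases div_eq_zero_iff.1 h2.symm with h | h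
        · exact h
        · exact absurd h he
      exact Prod.ext h1 h3
    · apply h s _ h2
      refine Prod.ext h1 ?_
      simp [he]
  obtain ⟨u, v, hu, hv, hxu, hvv, huv⟩ := generalized_tube_lemma (s := {x}) isCompact_singleton
      (isCompact_univ (X := I)) this (by
        rintro ⟨y, s⟩ ⟨hy, -⟩
        obtain rfl : y = x := hy
        exact hz s)
  filter_upwards [hu.mem_nhds (hxu rfl)] with y hy s r hr h3
  apply @huv (y, s) ⟨hy, hvv trivial⟩
  rw [h3]
  simp [he, hr.le]

lemma des {X : Type*} [MetricSpace X] [CompactSpace X] {D : ℕ} (hD : 3 ≤ D) (hPU : PUf X D)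
    (F : C(X × I, (Fin D → ℝ) × ℝ)) (hF : ∀ p, F p ≠ 0) (h0 : ∀ x, F (x, 0) = (0, 1))
    (h1 : ∀ x, F (x, 1) = (0, -1)) {C : Set X} (hC : IsClosed C) (h : C(C, Fin D → ℝ))
    (hFC : ∀ (c : C) (t : I), F (c, t) = (((t : ℝ) * (1 - t)) • h c, 1 - 2 * (t : ℝ))) :
    ∃ ψ : C(X, Fin D → ℝ), (∀ x, ψ x ≠ 0) ∧ ∀ c : C, ψ c = h c := by
  obtain ⟨η, hη, hηF⟩ : ∃ η : ℝ, 0 < η ∧ ∀ p, 4 * η ≤ ‖F p‖ := by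
    obtain ⟨b, hb, h⟩ := (isCompact_univ (X := X × I)).exists_forall_le' (f := fun p => ‖F p‖)
      (by fun_prop) (a := 0) (fun p _ => norm_pos_iff.2 (hF p))
    exact ⟨b / 4, by positivity, fun p => by have := h p trivial; linarith⟩
  obtain ⟨M, t, Q, ht0, ht1, htc, hQ, hQ0, hQ1, hQF⟩ := approx hPU F h0 h1 hη
  obtain ⟨w, w', hw, hw', hgp⟩ := genpos hD Q hQ
  obtain ⟨G, hG⟩ : ∃ G : C(X × I, (Fin D → ℝ) × ℝ), ∀ x (s : I), G (x, s) = ∑ v, t v x • Q v s :=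
    ⟨⟨fun p => ∑ v, t v p.1 • Q v p.2, by
      have : ∀ v, Continuous (Q v) := fun v => (hQ v).continuous
      fun_prop⟩, fun _ _ => rfl⟩
  have hGF : ∀ x s, ‖G (x, s) - F (x, s)‖ ≤ η := fun x s => by rw [hG]; exact hQF x s
  have hGn : ∀ p, 3 * η ≤ ‖G p‖ := by
    rintro ⟨x, s⟩
    have := norm_sub_norm_le (F (x, s)) (G (x, s))
    rw [norm_sub_rev] at this
    linarith [hGF x s, hηF (x, s)]
  have hG0 : ∀ p, G p ≠ 0 := fun p => by
    rw [← norm_pos_iff]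
    linarith [hGn p]
  have hGe0 : ∀ x, G (x, 0) = (0, 1) := fun x => by
    rw [hG]
    simp only [Set.Icc.coe_zero, hQ0]
    rw [← Finset.sum_smul, ht1, one_smul]
  have hGe1 : ∀ x, G (x, 1) = (0, -1) := fun x => by
    rw [hG]
    simp only [Set.Icc.coe_one, hQ1]
    rw [← Finset.sum_smul, ht1, one_smul]
  let V : X → Set ℝ := fun x => {l | 0 ≤ l ∧ l ≤ 1 ∧
    (∀ s : I, l ≤ s → ∀ r : ℝ, 0 < r → G (x, s) ≠ r • (w, 1)) ∧
    (∀ s : I, (s : ℝ) ≤ l → ∀ r : ℝ, 0 < r → G (x, s) ≠ r • (w', -1))}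
  have hVc : ∀ x, Convex ℝ (V x) := by
    intro x
    apply Set.OrdConnected.convex
    refine ⟨fun a ha b hb c hc => ⟨ha.1.trans hc.1, hc.2.trans hb.2.1, fun s hs => ?_, fun s hs => ?_⟩⟩
    · exact ha.2.2.1 s (hc.1.trans hs)
    · exact hb.2.2.2 s (hs.trans hc.2)
  have hVl : ∀ x, ∃ c, ∀ᶠ y in nhds x, c ∈ V y := by
    intro x
    by_cases hx : ∀ s : I, ∀ r : ℝ, 0 < r → G (x, s) ≠ r • (w, 1)
    · refine ⟨0, ?_⟩
      filter_upwards [ray_open G hG0 w 1 one_ne_zero x hx] with y hy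
      refine ⟨le_rfl, zero_le_one, fun s _ => hy s, fun s hs r hr h2 => ?_⟩
      obtain rfl : s = 0 := Subtype.ext (le_antisymm hs s.2.1)
      rw [hGe0] at h2
      have := congrArg Prod.snd h2
      simp at this
      linarith
    · push Not at hx
      obtain ⟨s, r, hr, hsr⟩ := hx
      have hx' : ∀ s : I, ∀ r : ℝ, 0 < r → G (x, s) ≠ r • (w', -1) := by
        intro s' r' hr' h2
        rw [hG] at hsr h2
        exact hgp (fun v => t v x) (ht1 x) (htc x) _ _ r r' hr hr' hsr h2
      refine ⟨1, ?_⟩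
      filter_upwards [ray_open G hG0 w' (-1) (by norm_num) x hx'] with y hy
      refine ⟨zero_le_one, le_rfl, fun s hs r hr h2 => ?_, fun s _ => hy s⟩
      obtain rfl : s = 1 := Subtype.ext (le_antisymm s.2.2 hs)
      rw [hGe1] at h2
      have := congrArg Prod.snd h2
      simp at this
      linarith
  obtain ⟨lam, hlam⟩ := exists_continuous_forall_mem_convex_of_local_const hVc hVl
  have hVq : ∀ x (s : I), (s : ℝ) ∈ V x → qq w w' (G (x, s)) ≠ 0 := fun x s hs =>
    qq_ne (hG0 _) (hs.2.2.1 s le_rfl) (hs.2.2.2 s le_rfl)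
  obtain ⟨hf, hhf⟩ : ∃ hf : I, (hf : ℝ) = 1 / 2 := ⟨⟨1 / 2, by norm_num, by norm_num⟩, rfl⟩
  have hhalf : ∀ c : C, (1 / 2 : ℝ) ∈ V c := by
    intro c
    have key : ∀ (s : I) (r e : ℝ) (u : Fin D → ℝ), 0 < r → ‖u‖ ≤ 1 → |e| = 1 → (1 - 2 * (s : ℝ)) * e ≤ 0 →
        G (c, s) ≠ r • (u, e) := by
      intro s r e u hr hu he hse h2
      have h3 := hGF c s
      have h4 : ‖(G (c, s) - F (c, s)).2‖ ≤ η := (norm_snd_le _).trans h3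
      rw [h2, hFC c s] at h4
      simp only [Prod.smul_mk, Prod.snd_sub, smul_eq_mul, Real.norm_eq_abs] at h4
      have h5 : r ≤ η := by
        have : r ≤ (r * e - (1 - 2 * (s : ℝ))) * e := by
          have : e * e = 1 := by rw [← abs_mul_abs_self, he]; norm_num
          nlinarith
        have h6 := le_abs_self ((r * e - (1 - 2 * (s : ℝ))) * e)
        rw [abs_mul, he, mul_one] at h6
        linarith
      have h6 : ‖G (c, s)‖ ≤ r := by
        rw [h2, norm_smul, Real.norm_of_nonneg hr.le]
        have : ‖(u, e)‖ ≤ 1 := by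
          rw [Prod.norm_def]
          simp [hu, he]
        nlinarith
      linarith [hGn (c, s)]
    refine ⟨by norm_num, by norm_num, fun s hs r hr => ?_, fun s hs r hr => ?_⟩
    · exact key s r 1 w hr hw (by simp) (by linarith)
    · exact key s r (-1) w' hr hw' (by simp) (by linarith)
  let lamI : C(X, I) := ⟨fun x => ⟨lam x, (hlam x).1, (hlam x).2.1⟩, by fun_prop⟩
  have hcq := continuous_qq w w'
  let ψ0 : C(X, Fin D → ℝ) := ⟨fun x => qq w w' (G (x, lamI x)), by fun_prop⟩
  obtain ⟨pth, hpth⟩ : ∃ pth : C(C × I, I), ∀ c θ, (pth (c, θ) : ℝ) = (1 - (θ : ℝ)) * lam c + θ * (1 / 2) := by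
    have hm : ∀ p : C × I, (1 - (p.2 : ℝ)) * lam p.1 + p.2 * (1 / 2) ∈ I := by
      intro p
      have := hlam p.1
      have h3 := p.2.2
      constructor
      · nlinarith [this.1, h3.1, h3.2]
      · nlinarith [this.1, this.2.1, h3.1, h3.2]
    exact ⟨⟨fun p => ⟨(1 - (p.2 : ℝ)) * lam p.1 + p.2 * (1 / 2), hm p⟩, by fun_prop⟩, fun c θ => rfl⟩
  obtain ⟨ψ1, hψ1, hpsiC⟩ := plain_het hC ψ0 (fun x => hVq x _ (hlam x))
    ⟨fun p : C × I => qq w w' (G (p.1, pth p)), by fun_prop⟩ (by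
      rintro ⟨c, θ⟩
      apply hVq
      rw [hpth]
      exact hVc c (hlam c) (hhalf c) (by linarith [θ.2.2]) θ.2.1 (by ring)) (by
      intro c
      simp only [ContinuousMap.coe_mk, ψ0]
      congr 3
      apply Subtype.ext
      rw [hpth]
      simp [lamI])
  have hpsie : ∀ c : C, ψ1 c = qq w w' (G (c, hf)) := by
    intro c
    rw [hpsiC]
    simp only [ContinuousMap.coe_mk]
    congr 3
    apply Subtype.ext
    rw [hpth, hhf]
    simp
  have hFh : ∀ c : C, F (c, hf) = ((1 / 4 : ℝ) • h c, 0) := by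
    intro c
    rw [hFC, hhf]
    norm_num
  have hh4 : ∀ c : C, 4 * η ≤ ‖(1 / 4 : ℝ) • h c‖ := by
    intro c
    have := hηF (c, hf)
    rw [hFh, Prod.norm_def] at this
    simpa using this
  have hclose : ∀ c : C, ‖ψ1 c - (1 / 4 : ℝ) • h c‖ ≤ 2 * η := by
    intro c
    have h2 := hGF c hf
    rw [hFh] at h2
    have h3 := (norm_fst_le _).trans h2
    have h4 := (norm_snd_le _).trans h2
    rw [hpsie]
    simp only [Prod.fst_sub, Prod.snd_sub, sub_zero, Real.norm_eq_abs] at h3 h4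
    unfold qq
    generalize G (c, hf) = gg at h3 h4 ⊢
    obtain ⟨y, s⟩ := gg
    simp only at h3 h4 ⊢
    have h5 : ‖(max s 0) • w + (max (-s) 0) • w'‖ ≤ η := by
      refine (norm_add_le _ _).trans ?_
      rw [norm_smul, norm_smul, Real.norm_of_nonneg (le_max_right _ _),
        Real.norm_of_nonneg (le_max_right _ _)]
      rcases le_total 0 s with hs | hs
      · rw [max_eq_left hs, max_eq_right (by linarith)]
        rw [abs_of_nonneg hs] at h4
        nlinarith
      · rw [max_eq_right hs, max_eq_left (by linarith)]
        rw [abs_of_nonpos hs] at h4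
        nlinarith
    have h6 := norm_sub_le (y - (1 / 4 : ℝ) • h c) ((max s 0) • w + (max (-s) 0) • w')
    rw [show y - max s 0 • w - max (-s) 0 • w' - (1 / 4 : ℝ) • h c =
      (y - (1 / 4 : ℝ) • h c) - ((max s 0) • w + (max (-s) 0) • w') by abel]
    linarith
  refine line_het hC ψ1 hψ1 h ?_
  intro c θ hθ0 hθ1 h2
  have h3 : (1 - θ) • (ψ1 c - (1 / 4 : ℝ) • h c) = -((1 - θ + 4 * θ) • ((1 / 4 : ℝ) • h c)) := by
    have : (1 - θ) • ψ1 c = - (θ • h c) := eq_neg_of_add_eq_zero_left h2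
    rw [smul_sub, this]
    module
  have h4 := congrArg norm h3
  rw [norm_neg, norm_smul, norm_smul (1 - θ + 4 * θ), Real.norm_of_nonneg (by linarith),
    Real.norm_of_nonneg (by linarith)] at h4
  have h5 := hclose c
  have h6 := hh4 c
  have h7 : (1 - θ) * ‖ψ1 c - (1 / 4 : ℝ) • h c‖ ≤ 2 * η := by nlinarith [norm_nonneg (ψ1 c - (1 / 4 : ℝ) • h c)]
  nlinarith

end Hp
end MeanDimPaper

namespace MeanDimPaper
namespace Hp

open scoped unitInterval ENNReal
open CategoryTheory

variable {m : ℕ}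

def inc {X : Type*} [TopologicalSpace X] {S T : Set X} (h : S ⊆ T) : C(S, T) :=
  ⟨Set.inclusion h, continuous_inclusion h⟩

def incX {X : Type*} [TopologicalSpace X] (S : Set X) : C(S, X) :=
  ⟨Subtype.val, continuous_subtype_val⟩

lemma path_cont {Z Y : Type*} [TopologicalSpace Z] [TopologicalSpace Y] [CompactSpace Z] [T2Space Z]
    {a b : C(Z, Y)} (P : Path a b) : Continuous fun p : Z × I => P p.2 p.1 := by fun_prop

/-- gluing extensions of a loop over a finite closed cover -/
lemma glue {X : Type*} [TopologicalSpace X] [CompactSpace X] [T2Space X] {C1 : Set X}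
    (hC1 : IsClosed C1) {ι : Type*} [Finite ι] (B : ι → Set X) (hB : ∀ τ, IsClosed (B τ))
    (hcov : ∀ x, x ∈ C1 ∨ ∃ τ, x ∈ B τ)
    (hdis : ∀ τ τ' x, τ ≠ τ' → x ∈ B τ → x ∈ B τ' → x ∈ C1)
    (Φ : Path (Nn m C1) (Nn m C1))
    (hext : ∀ τ, rsG m (inc (Set.inter_subset_right : B τ ∩ C1 ⊆ C1)) (cl Φ) = 1) :
    ∃ Ψ : Path (Nn m X) (Nn m X), ∀ t (x : C1), Ψ t x = Φ t x := by
  classical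
  have hF : ∀ τ, ∃ F : Path (Nn m (B τ)) (Nn m (B τ)), ∀ t (x : X) (h : x ∈ B τ) (h' : x ∈ C1),
      F t ⟨x, h⟩ = Φ t ⟨x, h'⟩ := by
    intro τ
    haveI : CompactSpace (B τ) := isCompact_iff_compactSpace.1 (hB τ).isCompact
    haveI : CompactSpace ↥(B τ ∩ C1) :=
      isCompact_iff_compactSpace.1 ((hB τ).inter hC1).isCompact
    have h1 := hext τ
    rw [rsG_cl] at h1
    have h2 : cl (Φ.map (rs m (inc (Set.inter_subset_right : B τ ∩ C1 ⊆ C1))).continuous)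
      = cl (Path.refl _) := h1
    rw [cl_eq] at h2
    obtain ⟨F, hF⟩ := loop_het (m := m) (inc (Set.inter_subset_left : B τ ∩ C1 ⊆ B τ))
      (Set.inclusion_injective (Set.inter_subset_left : B τ ∩ C1 ⊆ B τ)) (p := ⟨(0, 1), Or.inl one_ne_zero⟩)
      (q := ⟨(0, 1), Or.inl one_ne_zero⟩) (Path.refl _)
      (Φ.map (rs m (inc (Set.inter_subset_right : B τ ∩ C1 ⊆ C1))).continuous) (by
        refine Path.Homotopic.symm (h2.trans ?_)
        exact Path.Homotopic.refl _)
    exact ⟨F, fun t x h h' => hF t ⟨x, h, h'⟩⟩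
  choose F hF using hF
  let f : X → I → YS m := fun x t => if h : x ∈ C1 then Φ t ⟨x, h⟩ else
    if h : ∃ τ, x ∈ B τ then F h.choose t ⟨x, h.choose_spec⟩ else ⟨(0, 1), Or.inl one_ne_zero⟩
  have f1 : ∀ x (h : x ∈ C1) t, f x t = Φ t ⟨x, h⟩ := fun x h t => by simp only [f, dif_pos h]
  have f2 : ∀ τ x (h : x ∈ B τ) t, f x t = F τ t ⟨x, h⟩ := by
    intro τ x h t
    by_cases h1 : x ∈ C1
    · rw [f1 x h1, hF τ t x h h1]
    · have h2 : ∃ τ, x ∈ B τ := ⟨τ, h⟩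
      simp only [f, dif_neg h1, dif_pos h2]
      have h3 : h2.choose = τ := by
        by_contra h4
        exact h1 (hdis _ _ x h4 h2.choose_spec h)
      have h5 : ∀ τ', τ' = τ → ∀ h' : x ∈ B τ', F τ' t ⟨x, h'⟩ = F τ t ⟨x, h⟩ := by
        rintro _ rfl _
        rfl
      exact h5 _ h3 _
  have hfc : Continuous fun p : X × I => f p.1 p.2 := by
    refine (locallyFinite_of_finite (fun o : Option ι => Prod.fst ⁻¹' (o.elim C1 B : Set X) :
      Option ι → Set (X × I))).continuous ?_ ?_ ?_
    · rw [Set.eq_univ_iff_forall]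
      rintro ⟨x, t⟩
      rcases hcov x with h | ⟨τ, h⟩
      · exact Set.mem_iUnion.2 ⟨none, h⟩
      · exact Set.mem_iUnion.2 ⟨some τ, h⟩
    · rintro (_ | τ)
      · exact hC1.preimage continuous_fst
      · exact (hB τ).preimage continuous_fst
    · rintro (_ | τ)
      · rw [continuousOn_iff_continuous_restrict]
        haveI : CompactSpace C1 := isCompact_iff_compactSpace.1 hC1.isCompact
        have : Continuous fun p : (Prod.fst ⁻¹' C1 : Set (X × I)) =>
            Φ p.1.2 (⟨p.1.1, p.2⟩ : C1) := (path_cont Φ).comp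
              (f := fun p : (Prod.fst ⁻¹' C1 : Set (X × I)) => ((⟨p.1.1, p.2⟩ : C1), p.1.2))
              (by fun_prop)
        refine this.congr fun p => ?_
        exact (f1 _ _ _).symm
      · rw [continuousOn_iff_continuous_restrict]
        haveI : CompactSpace (B τ) := isCompact_iff_compactSpace.1 (hB τ).isCompact
        have : Continuous fun p : (Prod.fst ⁻¹' (B τ) : Set (X × I)) =>
            F τ p.1.2 (⟨p.1.1, p.2⟩ : B τ) := (path_cont (F τ)).comp
              (f := fun p : (Prod.fst ⁻¹' (B τ) : Set (X × I)) => ((⟨p.1.1, p.2⟩ : B τ), p.1.2))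
              (by fun_prop)
        refine this.congr fun p => ?_
        exact (f2 τ _ _ _).symm
  have hends : ∀ t : I, t = 0 ∨ t = 1 → ∀ x, f x t = ⟨(0, 1), Or.inl one_ne_zero⟩ := by
    intro t ht x
    rcases hcov x with h | ⟨τ, h⟩
    · rw [f1 x h]
      rcases ht with rfl | rfl
      · rw [Φ.source]; rfl
      · rw [Φ.target]; rfl
    · rw [f2 τ x h]
      rcases ht with rfl | rfl
      · rw [(F τ).source]; rfl
      · rw [(F τ).target]; rfl
  refine ⟨⟨ContinuousMap.curry ⟨fun p : I × X => f p.2 p.1, hfc.comp continuous_swap⟩, ?_, ?_⟩, ?_⟩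
  · ext1 x
    exact hends 0 (Or.inl rfl) x
  · ext1 x
    exact hends 1 (Or.inr rfl) x
  · intro t x
    exact f1 x.1 x.2 t

/-- extension to a path between poles with prescribed restriction -/
lemma ext_path (hm : 3 ≤ m) {X : Type*} [TopologicalSpace X] [CompactSpace X] [T2Space X]
    {A : Set X} (hA : IsClosed A) (g : C(A, Fin m → ℝ)) (hg : ∀ x, NC (g x))
    (Ψ : Path (Nn m X) (Nn m X)) (h : rsG m (incX A) (cl Ψ) = yy hm g hg) :
    ∃ F : Path (Nn m X) (Ss m X), ∀ (t : I) (x : A),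
      ((F t x : YS m) : (Fin m → ℝ) × ℝ) = (((t : ℝ) * (1 - t)) • g x, 1 - 2 * (t : ℝ)) := by
  haveI : CompactSpace A := isCompact_iff_compactSpace.1 hA.isCompact
  let E := PP (eb X (⟨0, by omega⟩ : Fin m)) (NC_eb hm _)
  have key : cl ((Ψ.trans E).map (rs m (incX A)).continuous) = cl (PP g hg) := by
    rw [Path.map_trans]
    have h3 : cl ((Ψ.map (rs m (incX A)).continuous).trans (E.map (rs m (incX A)).continuous)) =
      cl (Ψ.map (rs m (incX A)).continuous) ≫ cl (PP (eb A (⟨0, by omega⟩ : Fin m)) (NC_eb hm _)) := rfl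
    refine h3.trans ?_
    rw [rsG_cl] at h
    have h4 : cl (Ψ.map (rs m (incX A)).continuous) =
      cl (PP g hg) ≫ Groupoid.inv (cl (PP (eb A ⟨0, by omega⟩) (NC_eb hm _))) := h
    have h5 : ∀ {a b : FundamentalGroupoid C(A, YS m)} {c : FundamentalGroupoid C(A, YS m)} (u : a ⟶ b) (v : c ⟶ b),
      (u ≫ Groupoid.inv v) ≫ v = u := by intro a b c u v; simp
    calc _ = (cl (PP g hg) ≫ Groupoid.inv (cl (PP (eb A ⟨0, by omega⟩) (NC_eb hm _)))) ≫ cl (PP (eb A (⟨0, by omega⟩ : Fin m)) (NC_eb hm _)) := congrArg (fun z => z ≫ _) h4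
      _ = _ := h5 _ _
  have key := cl_eq.1 key
  obtain ⟨F, hF⟩ := loop_het (m := m) (incX A) Subtype.val_injective (p := ⟨(0, 1), Or.inl one_ne_zero⟩)
      (q := ⟨(0, -1), Or.inl (neg_ne_zero.2 one_ne_zero)⟩) (Ψ.trans E) (PP g hg) key
  refine ⟨F, fun t x => ?_⟩
  exact (congrArg Subtype.val (hF t x)).trans (PP_apply g hg t x)

end Hp
end MeanDimPaper

namespace MeanDimPaper
namespace Hp

open scoped unitInterval ENNReal
open CategoryTheory

lemma strictMono_facet {D M : ℕ} {τ : Fin (D + 1) → Fin M} {sg : Fin D → Fin M} (hτ : StrictMono τ)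
    (hsg : StrictMono sg) (h : ∀ j, sg j ∈ Set.range τ) : ∃ i : Fin (D + 1), sg = fun j => τ (i.succAbove j) := by
  choose ρ hρ using h
  have hρm : StrictMono ρ := by
    intro a b hab
    rw [← hτ.lt_iff_lt, hρ, hρ]
    exact hsg hab
  obtain ⟨i, hi⟩ : ∃ i, ∀ j, ρ j ≠ i := by
    by_contra h
    push Not at h
    have : Function.Surjective ρ := h
    have := Fintype.card_le_of_surjective ρ this
    simp at this
  have : ∀ j, ∃ k, i.succAbove k = ρ j := fun j => Fin.exists_succAbove_eq (hi j)
  choose ρ' hρ' using this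
  have hm : StrictMono ρ' := by
    intro a b hab
    rw [← (Fin.strictMono_succAbove i).lt_iff_lt, hρ', hρ']
    exact hρm hab
  have hid : ρ' = id := by
    apply (hm.range_inj strictMono_id).1
    rw [Set.range_id, Set.range_eq_univ]
    exact Finite.surjective_of_injective hm.injective
  refine ⟨i, funext fun j => ?_⟩
  rw [← hρ, ← hρ', hid]
  rfl

lemma list_prod_zpow {G : Type*} [Group G] {α : Type*} (y : G) (k : α → ℤ) (f : α → G) (l : List α)
    (h : ∀ a ∈ l, f a = y ^ k a) : (l.map f).prod = y ^ (l.map k).sum := by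
  induction l with
  | nil => simp
  | cons a l ih =>
    simp only [List.map_cons, List.prod_cons, List.sum_cons, zpow_add]
    rw [h a (by simp), ih (fun b hb => h b (by simp [hb]))]

lemma det_perm {m : ℕ} (r : Equiv.Perm (Fin m)) :
    Matrix.det (fun j i : Fin m => if j = r i then (1 : ℤ) else 0) = ((Equiv.Perm.sign r : ℤˣ) : ℤ) := by
  have h := Matrix.det_permutation (R := ℤ) r
  rw [← Matrix.det_transpose] at h
  rw [Int.cast_id] at h
  rw [← h]
  congr 1
  ext j i
  simp [Matrix.transpose_apply, PEquiv.toMatrix_apply, eq_comm]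

def simplexMap {Z : Type*} [TopologicalSpace Z] {D M : ℕ} (t : Fin M → C(Z, ℝ)) (sg : Fin D → Fin M) :
    C(Z, Fin (D + 1) → ℝ) :=
  ⟨fun z => Fin.cons (1 - ∑ j, t (sg j) z) (fun j => t (sg j) z), by
    refine continuous_pi fun i => ?_
    refine Fin.cases ?_ (fun j => ?_) i
    · simp only [Fin.cons_zero]
      fun_prop
    · simp only [Fin.cons_succ]
      fun_prop⟩

lemma simplexMap_zero {Z : Type*} [TopologicalSpace Z] {D M : ℕ} (t : Fin M → C(Z, ℝ))
    (sg : Fin D → Fin M) (z : Z) : simplexMap t sg z 0 = 1 - ∑ j, t (sg j) z := rfl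

lemma simplexMap_succ {Z : Type*} [TopologicalSpace Z] {D M : ℕ} (t : Fin M → C(Z, ℝ))
    (sg : Fin D → Fin M) (z : Z) (j : Fin D) : simplexMap t sg z j.succ = t (sg j) z := rfl

lemma simplexMap_nonneg {Z : Type*} [TopologicalSpace Z] {D M : ℕ} (t : Fin M → C(Z, ℝ))
    (ht0 : ∀ v x, 0 ≤ t v x) (ht1 : ∀ x, ∑ v, t v x = 1)
    (sg : Fin D → Fin M) (hsg : Function.Injective sg) (z : Z) (j : Fin (D + 1)) : 0 ≤ simplexMap t sg z j := by
  refine Fin.cases ?_ (fun j => ?_) j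
  · rw [simplexMap_zero, ← ht1 z, sub_nonneg]
    rw [← Finset.sum_image (f := fun v => t v z) (g := sg) (s := Finset.univ) (fun a _ b _ h => hsg h)]
    exact Finset.sum_le_sum_of_subset_of_nonneg (Finset.subset_univ _) (fun v _ _ => ht0 v z)
  · exact ht0 _ _

lemma NC_of_sum {m : ℕ} {y : Fin m → ℝ} (h1 : ∑ i, y i = 1) {i : Fin m} (hi : y i = 0) : NC y := by
  by_contra h
  unfold NC at h
  push Not at h
  have : ∑ i, y i = 0 := Finset.sum_eq_zero fun j _ => (h j i).trans hi
  linarith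

lemma simplexMap_sum {Z : Type*} [TopologicalSpace Z] {D M : ℕ} (t : Fin M → C(Z, ℝ))
    (sg : Fin D → Fin M) (z : Z) : ∑ i, simplexMap t sg z i = 1 := by
  rw [Fin.sum_univ_succ]
  simp [simplexMap_zero, simplexMap_succ]

lemma simplexMap_NC {Z : Type*} [TopologicalSpace Z] {D M : ℕ} (t : Fin M → C(Z, ℝ))
    (ht1 : ∀ x, ∑ v, t v x = 1) (sg : Fin D → Fin M)
    (hsg : Function.Injective sg) (z : Z)
    (hz : (Finset.univ.filter fun v => t v z ≠ 0).card ≤ D) : NC (simplexMap t sg z) := by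
  classical
  by_contra hn
  have hne : ∀ i, simplexMap t sg z i ≠ 0 := fun i hi => hn (NC_of_sum (simplexMap_sum t sg z) hi)
  have hsub : Finset.univ.image sg ⊆ Finset.univ.filter fun v => t v z ≠ 0 := by
    intro v hv
    obtain ⟨j, -, rfl⟩ := Finset.mem_image.1 hv
    simpa [simplexMap_succ] using hne j.succ
  have heq := Finset.eq_of_subset_of_card_le hsub (by
    rw [Finset.card_image_of_injective _ hsg]
    simpa using hz)
  apply hne 0
  rw [simplexMap_zero, sub_eq_zero, ← ht1 z]
  rw [← Finset.sum_image (f := fun v => t v z) (g := sg) (s := Finset.univ) (fun a _ b _ h => hsg h), heq]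
  symm
  apply Finset.sum_subset (Finset.subset_univ _)
  intro v _ hv
  simpa using hv

end Hp
end MeanDimPaper

namespace MeanDimPaper
namespace Hp

open scoped unitInterval ENNReal
open CategoryTheory

open Classical in
/-- exponent of a map induced by vertex labels, restricted to one simplex -/
lemma yy_label {Z : Type*} [TopologicalSpace Z] {D M : ℕ} (hm : 3 ≤ D + 1) (t : Fin M → C(Z, ℝ))
    (ht0 : ∀ v x, 0 ≤ t v x) {ι : Type*}
    (G : Fin M → ι) (ω : Fin (D + 1) → ι) (hω : Function.Injective ω)
    (gb : C(Z, Fin (D + 1) → ℝ)) (hgb : ∀ x i, gb x i = ∑ v, if G v = ω i then t v x else 0)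
    (hN : ∀ z, NC (gb z))
    (τ : Fin (D + 1) → Fin M) (hτ : Function.Injective τ) (hsupp : ∀ z v, v ∉ Set.range τ → t v z = 0)
    (T : C(Z, Fin (D + 1) → ℝ)) (hT : ∀ z j, T z j = t (τ j) z) (hTN : ∀ z, NC (T z)) :
    yy hm gb hN = (yy hm T hTN) ^
      (Matrix.det (fun j i : Fin (D + 1) => if G (τ j) = ω i then (1 : ℤ) else 0)) := by
  have hgb' : ∀ z i, gb z i = ∑ j, if G (τ j) = ω i then T z j else 0 := by
    intro z i
    rw [hgb]
    symm
    apply Fintype.sum_of_injective τ hτ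
    · intro v hv
      simp [hsupp z v hv]
    · intro j
      rw [hT]
  by_cases hs : ∀ i, ∃ j, G (τ j) = ω i
  · choose r hr using hs
    have hri : Function.Injective r := fun a b hab => hω (by rw [← hr, ← hr, hab])
    have hrb : Function.Bijective r := Finite.injective_iff_bijective.1 hri
    have hiff : ∀ j i, G (τ j) = ω i ↔ j = r i := by
      intro j i
      constructor
      · intro h
        obtain ⟨i', rfl⟩ := hrb.2 j
        rw [hr] at h
        rw [hω h]
      · rintro rfl
        exact hr i
    have hdet := det_perm (Equiv.ofBijective r hrb)
    have hpm : gb = pm T (Equiv.ofBijective r hrb) := by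
      ext z i
      rw [hgb']
      simp only [hiff]
      simp [pm]
    subst hpm
    rw [yy_perm hm hTN]
    congr 1
    rw [← hdet]
    congr 1
    funext j i
    simp [hiff]
  · push Not at hs
    obtain ⟨i, hi⟩ := hs
    have hdt : Matrix.det (fun j i : Fin (D + 1) => if G (τ j) = ω i then (1 : ℤ) else 0) = 0 :=
      Matrix.det_eq_zero_of_column_eq_zero i (fun j => if_neg (hi j))
    refine Eq.trans ?_ (congrArg (fun z => (yy hm T hTN) ^ z) hdt).symm
    refine Eq.trans ?_ (zpow_zero _).symm
    obtain ⟨k, hk, -⟩ := third hm i i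
    refine yy_null hm hN k ?_ (fun z => ⟨i, hk.symm, ?_⟩)
    · intro z i
      rw [hgb]
      exact Finset.sum_nonneg fun v _ => by
        split_ifs
        · exact ht0 v z
        · exact le_rfl
    · rw [hgb']
      simp [hi]

/-- exponent of a facet map restricted to one simplex -/
lemma yy_facet {Z : Type*} [TopologicalSpace Z] {D M : ℕ} (hm : 3 ≤ D + 1) (t : Fin M → C(Z, ℝ))
    (ht0 : ∀ v x, 0 ≤ t v x) (ht1 : ∀ x, ∑ v, t v x = 1)
    (τ : Fin (D + 1) → Fin M) (hτ : StrictMono τ) (hsupp : ∀ z v, v ∉ Set.range τ → t v z = 0)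
    (T : C(Z, Fin (D + 1) → ℝ)) (hT : ∀ z j, T z j = t (τ j) z) (hTN : ∀ z, NC (T z))
    (sg : Fin D → Fin M) (hsg : StrictMono sg) (hN : ∀ z, NC (simplexMap t sg z)) :
    yy hm (simplexMap t sg) hN = (yy hm T hTN) ^
      (∑ i : Fin (D + 1), if sg = (fun j => τ (i.succAbove j)) then (-1 : ℤ) ^ (i : ℕ) else 0) := by
  by_cases h : ∀ j, sg j ∈ Set.range τ
  · obtain ⟨i, rfl⟩ := strictMono_facet hτ hsg h
    have hsum : (∑ i' : Fin (D + 1), if (fun j => τ (i.succAbove j)) = (fun j => τ (i'.succAbove j))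
        then (-1 : ℤ) ^ (i' : ℕ) else 0) = (-1) ^ (i : ℕ) := by
      rw [Finset.sum_eq_single i]
      · simp
      · intro b _ hb
        rw [if_neg]
        intro h2
        apply hb
        apply Fin.succAbove_left_injective
        funext j
        exact (hτ.injective (congrFun h2 j)).symm
      · simp
    rw [hsum]
    have hpm : simplexMap t (fun j => τ (i.succAbove j)) = pm T (Fin.cycleRange i).symm := by
      ext z j
      refine Fin.cases ?_ (fun j => ?_) j
      · rw [simplexMap_zero]
        simp only [pm, ContinuousMap.coe_mk, Fin.cycleRange_symm_zero, hT]
        have h1 : ∑ j, t (τ j) z = 1 := by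
          rw [← ht1 z]
          exact Fintype.sum_of_injective τ hτ.injective _ _ (fun v hv => hsupp z v hv) (fun j => rfl)
        rw [Fin.sum_univ_succAbove _ i] at h1
        linarith
      · rw [simplexMap_succ]
        simp [pm, hT]
    have gen : ∀ (q : C(Z, Fin (D + 1) → ℝ)) (hq : ∀ z, NC (q z)),
        q = pm T (Fin.cycleRange i).symm → yy hm q hq = (yy hm T hTN) ^ ((-1 : ℤ) ^ (i : ℕ)) := by
      rintro q hq rfl
      rw [yy_perm hm hTN]
      congr 1
      rw [Equiv.Perm.sign_symm, Fin.sign_cycleRange]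
      simp
    exact gen _ _ hpm
  · rw [Finset.sum_eq_zero, zpow_zero]
    · push Not at h
      obtain ⟨j, hj⟩ := h
      exact yy_null hm hN 0 (fun z i => simplexMap_nonneg t ht0 ht1 sg hsg.injective z i)
        (fun z => ⟨j.succ, Fin.succ_ne_zero j, by rw [simplexMap_succ, hsupp z _ hj]⟩)
    · intro i _
      rw [if_neg]
      rintro rfl
      exact h fun j => ⟨_, rfl⟩

end Hp
end MeanDimPaper

namespace MeanDimPaper
namespace Hp

open scoped unitInterval ENNReal
open CategoryTheory

open Classical in
/-- the corrected obstruction class -/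
noncomputable def Th {Z : Type*} [TopologicalSpace Z] {D M : ℕ} (hm : 3 ≤ D + 1) (t : Fin M → C(Z, ℝ))
    (gb : C(Z, Fin (D + 1) → ℝ)) (hN : ∀ z, NC (gb z)) (c : (Fin D → Fin M) → ℤ)
    (hs : ∀ sg, c sg ≠ 0 → ∀ z, NC (simplexMap t sg z)) : FundamentalGroup C(Z, YS (D + 1)) (Nn (D + 1) Z) :=
  yy hm gb hN * ((Finset.univ : Finset (Fin D → Fin M)).toList.map
    (fun sg => if h : c sg ≠ 0 then (yy hm (simplexMap t sg) (hs sg h)) ^ (-(c sg)) else 1)).prod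

lemma Th_rs {Z Z' : Type*} [TopologicalSpace Z] [TopologicalSpace Z'] {D M : ℕ} (hm : 3 ≤ D + 1)
    (t : Fin M → C(Z, ℝ))
    (gb : C(Z, Fin (D + 1) → ℝ)) (hN : ∀ z, NC (gb z)) (c : (Fin D → Fin M) → ℤ)
    (hs : ∀ sg, c sg ≠ 0 → ∀ z, NC (simplexMap t sg z)) (i : C(Z', Z)) :
    rsG (D + 1) i (Th hm t gb hN c hs) =
      Th hm (fun v => (t v).comp i) (gb.comp i) (fun z => hN (i z)) c (fun sg h z => hs sg h (i z)) := by
  unfold Th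
  rw [map_mul, yy_rs, map_list_prod, List.map_map]
  congr 2
  apply List.map_congr_left
  intro sg _
  simp only [Function.comp]
  by_cases h : c sg ≠ 0
  · rw [dif_pos h, dif_pos h, map_zpow, yy_rs]
    rfl
  · rw [dif_neg h, dif_neg h, map_one]

/-- if every facet term is trivial -/
lemma Th_null {Z : Type*} [TopologicalSpace Z] {D M : ℕ} (hm : 3 ≤ D + 1)
    (t : Fin M → C(Z, ℝ)) (ht0 : ∀ v x, 0 ≤ t v x) (ht1 : ∀ x, ∑ v, t v x = 1)
    (gb : C(Z, Fin (D + 1) → ℝ)) (hN : ∀ z, NC (gb z)) (c : (Fin D → Fin M) → ℤ)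
    (hc0 : ∀ sg, c sg ≠ 0 → StrictMono sg)
    (hs : ∀ sg, c sg ≠ 0 → ∀ z, NC (simplexMap t sg z))
    (hz : ∀ sg, c sg ≠ 0 → ∃ j, ∀ z, t (sg j) z = 0) :
    Th hm t gb hN c hs = yy hm gb hN := by
  unfold Th
  rw [List.prod_eq_one, mul_one]
  intro x hx
  rw [List.mem_map] at hx
  obtain ⟨sg, -, rfl⟩ := hx
  by_cases h : c sg ≠ 0
  · rw [dif_pos h]
    obtain ⟨j, hj⟩ := hz sg h
    rw [yy_null hm (hs sg h) 0 (fun z i => simplexMap_nonneg t ht0 ht1 sg (hc0 sg h).injective z i)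
        (fun z => ⟨j.succ, Fin.succ_ne_zero j, by rw [simplexMap_succ, hj z]⟩), one_zpow]
  · rw [dif_neg h]

open Classical in
lemma Th_simplex {Z : Type*} [TopologicalSpace Z] {D M : ℕ} (hm : 3 ≤ D + 1)
    (t : Fin M → C(Z, ℝ)) (ht0 : ∀ v x, 0 ≤ t v x) (ht1 : ∀ x, ∑ v, t v x = 1)
    {ι : Type*} (G : Fin M → ι) (ω : Fin (D + 1) → ι) (hω : Function.Injective ω)
    (gb : C(Z, Fin (D + 1) → ℝ)) (hgb : ∀ x i, gb x i = ∑ v, if G v = ω i then t v x else 0)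
    (hN : ∀ z, NC (gb z)) (c : (Fin D → Fin M) → ℤ)
    (hc0 : ∀ sg, c sg ≠ 0 → StrictMono sg)
    (hs : ∀ sg, c sg ≠ 0 → ∀ z, NC (simplexMap t sg z))
    (τ : Fin (D + 1) → Fin M) (hτ : StrictMono τ) (hsupp : ∀ z v, v ∉ Set.range τ → t v z = 0)
    (hTN : ∀ z, ∃ j, t (τ j) z = 0)
    (hcob : ∑ i : Fin (D + 1), (-1 : ℤ) ^ (i : ℕ) * c (fun j => τ (i.succAbove j)) =
      Matrix.det (fun j i : Fin (D + 1) => if G (τ j) = ω i then (1 : ℤ) else 0)) :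
    Th hm t gb hN c hs = 1 := by
  let T : C(Z, Fin (D + 1) → ℝ) := ⟨fun z j => t (τ j) z, by fun_prop⟩
  have hT : ∀ z j, T z j = t (τ j) z := fun _ _ => rfl
  have hTN' : ∀ z, NC (T z) := by
    intro z
    obtain ⟨j, hj⟩ := hTN z
    refine NC_of_sum ?_ (i := j) hj
    rw [← ht1 z]
    exact Fintype.sum_of_injective τ hτ.injective _ _ (fun v hv => hsupp z v hv) (fun j => rfl)
  unfold Th
  rw [yy_label hm t ht0 G ω hω gb hgb hN τ hτ.injective hsupp T hT hTN',
    list_prod_zpow (yy hm T hTN') (fun sg => (∑ i : Fin (D + 1),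
      if sg = (fun j => τ (i.succAbove j)) then (-1 : ℤ) ^ (i : ℕ) else 0) * (-(c sg))), ← zpow_add]
  · rw [Finset.sum_map_toList]
    have : (∑ sg : Fin D → Fin M, (∑ i : Fin (D + 1),
      if sg = (fun j => τ (i.succAbove j)) then (-1 : ℤ) ^ (i : ℕ) else 0) * (-(c sg))) =
       - ∑ i : Fin (D + 1), (-1 : ℤ) ^ (i : ℕ) * c (fun j => τ (i.succAbove j)) := by
      simp only [Finset.sum_mul]
      rw [Finset.sum_comm, ← Finset.sum_neg_distrib]
      refine Finset.sum_congr rfl fun i _ => ?_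
      simp only [ite_mul, zero_mul]
      rw [Finset.sum_ite_eq' Finset.univ]
      simp
    rw [this, hcob, add_neg_cancel, zpow_zero]
  · intro sg _
    by_cases h : c sg ≠ 0
    · rw [dif_pos h, yy_facet hm t ht0 ht1 τ hτ hsupp T hT hTN' sg (hc0 sg h), zpow_mul]
    · rw [dif_neg h]
      push Not at h
      rw [h]
      simp

end Hp
end MeanDimPaper

namespace MeanDimPaper
namespace Hp

open scoped unitInterval ENNReal
open CategoryTheory

lemma closed_card {X : Type*} [TopologicalSpace X] {D M : ℕ} (t : Fin M → C(X, ℝ)) :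
    IsClosed {x | (Finset.univ.filter fun v => t v x ≠ 0).card ≤ D} := by
  rw [← isOpen_compl_iff, isOpen_iff_mem_nhds]
  intro x hx
  simp only [Set.mem_compl_iff, Set.mem_setOf_eq, not_le] at hx
  have h1 : ∀ v ∈ (Finset.univ.filter fun v => t v x ≠ 0), ∀ᶠ y in nhds x, t v y ≠ 0 := by
    intro v hv
    exact (t v).continuous.continuousAt.eventually_ne (by simpa using hv)
  rw [← Filter.eventually_all_finset] at h1
  filter_upwards [h1] with y hy
  simp only [Set.mem_compl_iff, Set.mem_setOf_eq, not_le]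
  refine hx.trans_le (Finset.card_le_card fun v hv => ?_)
  simpa using hy v hv

open Classical in
theorem hopf {X : Type*} [TopologicalSpace X] [CompactSpace X] [T2Space X] {D M : ℕ} (hm : 3 ≤ D + 1)
    (t : Fin M → C(X, ℝ)) (ht0 : ∀ v x, 0 ≤ t v x) (ht1 : ∀ x, ∑ v, t v x = 1)
    (htc : ∀ x, (Finset.univ.filter fun v => t v x ≠ 0).card ≤ D + 1)
    {A : Set X} (hA : IsClosed A)
    {ι : Type*} (G : Fin M → ι) (ω : Fin (D + 1) → ι) (hω : Function.Injective ω)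
    (hG : ∀ v x, t v x ≠ 0 → ∃ i, G v = ω i)
    (hGA : ∀ x ∈ A, ∃ i, ∀ v, G v = ω i → t v x = 0)
    (c : (Fin D → Fin M) → ℤ)
    (hc0 : ∀ sg, c sg ≠ 0 → StrictMono sg)
    (hcA : ∀ sg, c sg ≠ 0 → ∃ j, ∀ x ∈ A, t (sg j) x = 0)
    (hcob : ∀ τ : Fin (D + 1) → Fin M, StrictMono τ → (∃ x, ∀ j, t (τ j) x ≠ 0) →
      ∑ i : Fin (D + 1), (-1 : ℤ) ^ (i : ℕ) * c (fun j => τ (i.succAbove j)) =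
      Matrix.det (fun j i : Fin (D + 1) => if G (τ j) = ω i then (1 : ℤ) else 0))
    (gb : C(X, Fin (D + 1) → ℝ)) (hgb : ∀ x i, gb x i = ∑ v, if G v = ω i then t v x else 0) :
    (∀ x ∈ A, NC (gb x)) ∧ ∃ F : Path (Nn (D + 1) X) (Ss (D + 1) X), ∀ (s : I), ∀ x ∈ A,
      ((F s x : YS (D + 1)) : (Fin (D + 1) → ℝ) × ℝ) = (((s : ℝ) * (1 - s)) • gb x, 1 - 2 * (s : ℝ)) := by
  have hgsum : ∀ x, ∑ i, gb x i = 1 := by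
    intro x
    rw [← ht1 x]
    simp only [hgb]
    rw [Finset.sum_comm]
    refine Finset.sum_congr rfl fun v _ => ?_
    by_cases hv : t v x = 0
    · simp [hv]
    · obtain ⟨i, hi⟩ := hG v x hv
      rw [Finset.sum_eq_single i]
      · rw [if_pos hi]
      · intro b _ hb
        rw [if_neg]
        intro h
        exact hb (hω (h.symm.trans hi))
      · simp
  have hgA : ∀ x ∈ A, NC (gb x) := by
    intro x hx
    obtain ⟨i, hi⟩ := hGA x hx
    refine NC_of_sum (hgsum x) (i := i) ?_
    rw [hgb]
    exact Finset.sum_eq_zero fun v _ => by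
      split_ifs with h
      · exact hi v h
      · rfl
  refine ⟨hgA, ?_⟩
  have hg0 : ∀ x i, 0 ≤ gb x i := by
    intro x i
    rw [hgb]
    exact Finset.sum_nonneg fun v _ => by
      split_ifs
      · exact ht0 v x
      · exact le_rfl
  have hgC : ∀ x, (Finset.univ.filter fun v => t v x ≠ 0).card ≤ D → NC (gb x) := by
    intro x hx
    by_contra hn
    have hne : ∀ i, gb x i ≠ 0 := fun i hi => hn (NC_of_sum (hgsum x) hi)
    have : ∀ i, ∃ v, G v = ω i ∧ t v x ≠ 0 := by
      intro i
      by_contra h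
      push Not at h
      apply hne i
      rw [hgb]
      exact Finset.sum_eq_zero fun v _ => by
        split_ifs with h'
        · exact h v h'
        · rfl
    choose r hr hr' using this
    have hri : Function.Injective r := fun a b hab => hω (by rw [← hr, ← hr, hab])
    have := Finset.card_le_card (s := Finset.univ.image r)
      (t := Finset.univ.filter fun v => t v x ≠ 0) (by
        intro v hv
        obtain ⟨i, -, rfl⟩ := Finset.mem_image.1 hv
        simpa using hr' i)
    rw [Finset.card_image_of_injective _ hri, Finset.card_univ, Fintype.card_fin] at this
    omega
  let C1 : Set X := {x | (Finset.univ.filter fun v => t v x ≠ 0).card ≤ D} ∪ A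
  have hC1 : IsClosed C1 := (closed_card t).union hA
  have hAC : A ⊆ C1 := Set.subset_union_right
  have hgN : ∀ z : C1, NC ((gb.comp (incX C1)) z) := by
    rintro ⟨z, hz | hz⟩
    · exact hgC z hz
    · exact hgA z hz
  have hs : ∀ sg, c sg ≠ 0 → ∀ z : C1, NC (simplexMap (fun v => (t v).comp (incX C1)) sg z) := by
    rintro sg h ⟨z, hz | hz⟩
    · exact simplexMap_NC t ht1 sg (hc0 sg h).injective z hz
    · obtain ⟨j, hj⟩ := hcA sg h
      exact NC_of_sum (simplexMap_sum t sg z) (i := j.succ) (by rw [simplexMap_succ]; exact hj z hz)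
  obtain ⟨Φ, hΦ⟩ : ∃ Φ : Path (Nn (D + 1) C1) (Nn (D + 1) C1),
      cl Φ = Th hm (fun v => (t v).comp (incX C1)) (gb.comp (incX C1)) hgN c hs :=
    Path.Homotopic.Quotient.mk_surjective _
  let J := {τ : Fin (D + 1) → Fin M // StrictMono τ ∧ ∃ x, ∀ j, t (τ j) x ≠ 0}
  let B : J → Set X := fun τ => {x | ∀ v, v ∉ Set.range τ.1 → t v x = 0}
  have hB : ∀ τ, IsClosed (B τ) := by
    intro τ
    simp only [B, Set.setOf_forall]
    exact isClosed_iInter fun v => isClosed_iInter fun _ => isClosed_eq (t v).continuous continuous_const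
  have hcov : ∀ x, x ∈ C1 ∨ ∃ τ, x ∈ B τ := by
    intro x
    by_cases hx : (Finset.univ.filter fun v => t v x ≠ 0).card ≤ D
    · exact Or.inl (Or.inl hx)
    right
    have hx' : (Finset.univ.filter fun v => t v x ≠ 0).card = D + 1 := by have := htc x; omega
    refine ⟨⟨Finset.orderEmbOfFin _ hx', (Finset.orderEmbOfFin _ hx').strictMono, x, fun j => ?_⟩, ?_⟩
    · exact (Finset.mem_filter.1 (Finset.orderEmbOfFin_mem _ hx' j)).2
    · intro v hv
      by_contra h
      apply hv
      simp [h]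
  have hdis : ∀ τ τ' x, τ ≠ τ' → x ∈ B τ → x ∈ B τ' → x ∈ C1 := by
    intro τ τ' x hne hx hx'
    left
    by_contra hcard
    simp only [Set.mem_setOf_eq, not_le] at hcard
    have key : ∀ τ : J, x ∈ B τ → Set.range τ.1 = {v | t v x ≠ 0} := by
      intro τ hx
      have h1 : (Finset.univ.filter fun v => t v x ≠ 0) ⊆ Finset.univ.image τ.1 := by
        intro v hv
        by_contra h
        exact (Finset.mem_filter.1 hv).2 (hx v (by simpa using h))
      have h2 := Finset.eq_of_subset_of_card_le h1 (by
        rw [Finset.card_image_of_injective _ τ.2.1.injective, Finset.card_univ, Fintype.card_fin]; omega)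
      ext v
      have := Finset.ext_iff.1 h2 v
      simp at this
      simp [this]
    apply hne
    apply Subtype.ext
    exact (τ.2.1.range_inj τ'.2.1).1 ((key τ hx).trans (key τ' hx').symm)
  have hext : ∀ τ, rsG (D + 1) (inc (Set.inter_subset_right : B τ ∩ C1 ⊆ C1)) (cl Φ) = 1 := by
    intro τ
    rw [hΦ, Th_rs]
    by_cases hτA : ∃ x ∈ A, ∀ j, t (τ.1 j) x ≠ 0
    · obtain ⟨x, hxA, hx⟩ := hτA
      obtain ⟨i, hi⟩ := hGA x hxA
      refine (Th_null hm _ (fun v z => ht0 v z.1) (fun z => ht1 z.1) _ _ c hc0 _ ?_).trans ?_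
      rotate_left
      · obtain ⟨k, hk, -⟩ := third hm i i
        refine yy_null hm _ k (fun z i => hg0 z.1 i) (fun z => ⟨i, hk.symm, ?_⟩)
        show gb z.1 i = 0
        rw [hgb]
        refine Finset.sum_eq_zero fun v _ => ?_
        split_ifs with h
        · apply z.2.1 v
          rintro ⟨j, rfl⟩
          exact hx j (hi _ h)
        · rfl
      · intro sg h
        obtain ⟨j, hj⟩ := hcA sg h
        refine ⟨j, fun z => ?_⟩
        apply z.2.1
        rintro ⟨j', hj'⟩
        apply hx j'
        rw [hj']
        exact hj x hxA
    · push Not at hτA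
      refine Th_simplex hm _ (fun v z => ht0 v z.1) (fun z => ht1 z.1) G ω hω _ (fun z i => hgb z.1 i) _ c hc0 _
        τ.1 τ.2.1 (fun z v hv => z.2.1 v hv) ?_ (hcob τ.1 τ.2.1 τ.2.2)
      rintro ⟨z, hz1, hz2 | hz2⟩
      · by_contra h
        push Not at h
        have := Finset.card_le_card (s := Finset.univ.image τ.1)
          (t := Finset.univ.filter fun v => t v z ≠ 0) (by
            intro v hv
            obtain ⟨i, -, rfl⟩ := Finset.mem_image.1 hv
            exact Finset.mem_filter.2 ⟨Finset.mem_univ _, h i⟩)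
        rw [Finset.card_image_of_injective _ τ.2.1.injective, Finset.card_univ, Fintype.card_fin] at this
        have h3 : (Finset.univ.filter fun v => t v z ≠ 0).card ≤ D := hz2
        omega
      · exact hτA z hz2
  obtain ⟨Ψ, hΨ⟩ := glue hC1 B hB hcov hdis Φ hext
  have hcl : rsG (D + 1) (incX A) (cl Ψ) = yy hm (gb.comp (incX A)) (fun x => hgA x.1 x.2) := by
    have e1 : rsG (D + 1) (incX A) (cl Ψ) = rsG (D + 1) (inc hAC) (cl Φ) := by
      rw [rsG_cl, rsG_cl]
      congr 1
      ext s : 2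
      refine ContinuousMap.ext fun z => ?_
      exact hΨ s ⟨z.1, hAC z.2⟩
    rw [e1, hΦ, Th_rs]
    refine (Th_null hm _ (fun v z => ht0 v z.1) (fun z => ht1 z.1) _ _ c hc0 _ ?_).trans ?_
    rotate_left
    · rfl
    · intro sg h
      obtain ⟨j, hj⟩ := hcA sg h
      exact ⟨j, fun z => hj z.1 z.2⟩
  obtain ⟨F, hF⟩ := ext_path hm hA _ _ Ψ hcl
  exact ⟨F, fun s x hx => hF s ⟨x, hx⟩⟩

end Hp
end MeanDimPaper

namespace MeanDimPaper
namespace Hp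

open scoped unitInterval ENNReal

lemma PU_cover {X : Type*} [TopologicalSpace X] [CompactSpace X] [T2Space X] {D : ℕ}
    (hX : topDim X ≤ (D : ℕ∞)) (α : Set (Set X)) (hα : IsOpenCover α) :
    ∃ (M : ℕ) (t : Fin M → C(X, ℝ)), (∀ v x, 0 ≤ t v x) ∧ (∀ x, ∑ v, t v x = 1) ∧
      (∀ x, (Finset.univ.filter fun v => t v x ≠ 0).card ≤ D + 1) ∧
      ∀ v, ∃ U ∈ α, ∀ x, t v x ≠ 0 → x ∈ U := by
  classical
  have h1 : covD α < (D : ℕ∞) + 1 := by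
    refine lt_of_le_of_lt ((le_iSup₂ (f := fun α (_ : α ∈ {α : Set (Set X) | IsOpenCover α}) => covD α)
      α hα).trans hX) ?_
    exact_mod_cast Nat.lt_succ_self D
  unfold covD at h1
  simp only [iInf_lt_iff] at h1
  obtain ⟨β, ⟨hβ, hβα⟩, hord⟩ := h1
  obtain ⟨s, hsβ, hsfin, hscov⟩ := isCompact_univ.elim_finite_subcover_image (b := β) (c := id)
    (fun U hU => hβ.1 U hU) (by
      rw [← hβ.2, Set.sUnion_eq_biUnion]; rfl)
  haveI := hsfin.fintype
  let e := Fintype.equivFin s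
  let V : Fin (Fintype.card s) → Set X := fun i => (e.symm i).1
  have hVinj : Function.Injective V := fun a b h => e.symm.injective (Subtype.ext h)
  have hVβ : ∀ i, V i ∈ β := fun i => hsβ (e.symm i).2
  obtain ⟨f, hf⟩ := PartitionOfUnity.exists_isSubordinate isClosed_univ V (fun i => hβ.1 _ (hVβ i)) (by
    intro x hx
    obtain ⟨U, hU⟩ := Set.mem_iUnion.1 (hscov hx)
    obtain ⟨hU, hxU⟩ := Set.mem_iUnion.1 hU
    exact Set.mem_iUnion.2 ⟨e ⟨U, hU⟩, by simpa [V] using hxU⟩)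
  have hsub : ∀ v x, f v x ≠ 0 → x ∈ V v := fun v x h => hf v (subset_tsupport _ h)
  refine ⟨_, fun v => f v, fun v x => f.nonneg v x, fun x => ?_, fun x => ?_, fun v => ?_⟩
  · rw [← finsum_eq_sum_of_fintype]
    exact f.sum_eq_one (Set.mem_univ x)
  · by_contra hc
    push Not at hc
    obtain ⟨n, hn⟩ : ∃ n, (Finset.univ.filter fun v => f v x ≠ 0).card = n + 1 := ⟨_, (Nat.succ_pred_eq_of_pos (by omega)).symm⟩
    have h2 : (n : ℕ∞) ≤ ord β := by
      refine le_iSup₂ (f := fun n (_ : n ∈ {n : ℕ | ∃ f : Fin (n + 1) → Set X,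
        Function.Injective f ∧ (∀ i, f i ∈ β) ∧ (⋂ i, f i).Nonempty}) => (n : ℕ∞)) n ?_
      let g := Finset.orderEmbOfFin _ hn
      refine ⟨fun i => V (g i), hVinj.comp g.injective, fun i => hVβ _, x, Set.mem_iInter.2 fun i => ?_⟩
      exact hsub _ _ (Finset.mem_filter.1 (Finset.orderEmbOfFin_mem _ hn i)).2
    have h3 := h2.trans_lt hord
    have : n < D + 1 := by exact_mod_cast h3
    omega
  · obtain ⟨U, hU, hVU⟩ := hβα _ (hVβ v)
    exact ⟨U, hU, fun x hx => hVU (hsub v x hx)⟩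

lemma covD_le_of_family {X : Type*} [TopologicalSpace X] {D M : ℕ} (α : Set (Set X))
    (φ : Fin M → C(X, ℝ)) (h1 : ∀ x, ∃ v, φ v x ≠ 0)
    (hc : ∀ x, (Finset.univ.filter fun v => φ v x ≠ 0).card ≤ D + 1)
    (hα : ∀ v, ∃ U ∈ α, ∀ x, φ v x ≠ 0 → x ∈ U) : covD α ≤ (D : ℕ∞) := by
  classical
  let V : Fin M → Set X := fun v => {x | φ v x ≠ 0}
  refine (iInf₂_le (f := fun β (_ : β ∈ {β : Set (Set X) | IsOpenCover β ∧ Refines β α}) => ord β)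
    (Set.range V) ⟨⟨?_, ?_⟩, ?_⟩).trans ?_
  · rintro _ ⟨v, rfl⟩
    exact isOpen_ne_fun (φ v).continuous continuous_const
  · refine Set.eq_univ_of_forall fun x => ?_
    obtain ⟨v, hv⟩ := h1 x
    exact ⟨V v, ⟨v, rfl⟩, hv⟩
  · rintro _ ⟨v, rfl⟩
    exact hα v
  · refine iSup₂_le ?_
    rintro n ⟨f, hf, hfV, x, hx⟩
    choose r hr using hfV
    have hri : Function.Injective r := fun a b h => hf (by rw [← hr, ← hr, h])
    have h2 := Finset.card_le_card (s := Finset.univ.image r)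
      (t := Finset.univ.filter fun v => φ v x ≠ 0) (by
        intro v hv
        obtain ⟨i, -, rfl⟩ := Finset.mem_image.1 hv
        have : x ∈ V (r i) := by rw [hr]; exact Set.mem_iInter.1 hx i
        exact Finset.mem_filter.2 ⟨Finset.mem_univ _, this⟩)
    rw [Finset.card_image_of_injective _ hri, Finset.card_univ, Fintype.card_fin] at h2
    have := hc x
    exact_mod_cast (by omega : n ≤ D)

lemma PUf_of_topDim {X : Type*} [MetricSpace X] [CompactSpace X] {D : ℕ}
    (hX : topDim X ≤ (D : ℕ∞)) : PUf X D := by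
  intro δ hδ
  obtain ⟨M, t, h0, h1, hc, hU⟩ := PU_cover hX (Set.range fun p : X => Metric.ball p δ)
    ⟨by rintro _ ⟨p, rfl⟩; exact Metric.isOpen_ball,
      Set.eq_univ_of_forall fun x => ⟨_, ⟨x, rfl⟩, Metric.mem_ball_self hδ⟩⟩
  have : ∀ v, ∃ p : X, ∀ x, t v x ≠ 0 → dist p x < δ := by
    intro v
    obtain ⟨_, ⟨p, rfl⟩, hp⟩ := hU v
    exact ⟨p, fun x hx => by rw [dist_comm]; exact hp x hx⟩
  choose p hp using this
  exact ⟨M, t, p, h0, h1, hp, hc⟩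

lemma PUf_sub {X : Type*} [MetricSpace X] {D : ℕ} (h : PUf X D) (B : Set X) : PUf B D := by
  classical
  rcases isEmpty_or_nonempty B with hB | ⟨⟨b0⟩⟩
  · intro δ hδ
    exact ⟨0, fun v => v.elim0, fun v => v.elim0, fun v => v.elim0, fun x => (hB.false x).elim,
      fun v => v.elim0, fun x => (hB.false x).elim⟩
  intro δ hδ
  obtain ⟨M, t, p, h0, h1, hp, hc⟩ := h (δ / 2) (half_pos hδ)
  refine ⟨M, fun v => (t v).comp (incX B), fun v => if h : ∃ b : B, t v b ≠ 0 then h.choose else b0,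
    fun v x => h0 v x, fun x => h1 x, ?_, fun x => hc x⟩
  intro v x hx
  have hx' : t v x ≠ 0 := hx
  have hex : ∃ b : B, t v b ≠ 0 := ⟨x, hx'⟩
  dsimp only
  rw [dif_pos hex]
  have a1 := hp v _ hex.choose_spec
  have a2 := hp v _ hx'
  have a3 := dist_triangle_left (hex.choose : X) (x : X) (p v)
  show dist (hex.choose : X) (x : X) < δ
  linarith

end Hp
end MeanDimPaper

namespace MeanDimPaper
namespace Hp

open scoped unitInterval ENNReal

/-- at most `D+1` nonzero entries, all `ω i` nonzero: every nonzero index is some `ω i` -/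
lemma mem_range_of_card {N D : ℕ} {y : Fin N → ℝ} (hc : (Finset.univ.filter fun v => y v ≠ 0).card ≤ D + 1)
    {ω : Fin (D + 1) → Fin N} (hω : Function.Injective ω) (h : ∀ i, y (ω i) ≠ 0) {j : Fin N} (hj : y j ≠ 0) :
    ∃ i, j = ω i := by
  classical
  have h1 : Finset.univ.image ω ⊆ Finset.univ.filter fun v => y v ≠ 0 := by
    intro v hv
    obtain ⟨i, -, rfl⟩ := Finset.mem_image.1 hv
    exact Finset.mem_filter.2 ⟨Finset.mem_univ _, h i⟩
  have h2 := Finset.eq_of_subset_of_card_le h1 (by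
    rw [Finset.card_image_of_injective _ hω, Finset.card_univ, Fintype.card_fin]; exact hc)
  have h3 : j ∈ Finset.univ.image ω := by
    rw [h2]; exact Finset.mem_filter.2 ⟨Finset.mem_univ _, hj⟩
  obtain ⟨i, -, rfl⟩ := Finset.mem_image.1 h3
  exact ⟨i, rfl⟩

open Classical in
/-- the suspended map extends -/
lemma getF {K : Type*} [MetricSpace K] [CompactSpace K] {n N : ℕ} (hn : 2 ≤ n)
    (hPU : PUf K (n + 1)) (d : (ℤ → K) → (ℤ → K) → ℝ) (hd : IsCompatMetric d)
    (hk : ¬ (n : ℝ≥0∞) ≤ mdim (shift K) d)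
    (φ : Fin N → C(K, ℝ)) (hφ : ∀ x, ∃ v, φ v x ≠ 0)
    (hc : ∀ x, (Finset.univ.filter fun v => φ v x ≠ 0).card ≤ n + 1 + 1)
    (ω : Fin (n + 1 + 1) → Fin N) (hω : Function.Injective ω)
    (A B : Set K) (hA : A = {x | ∃ i, φ (ω i) x = 0})
    (hB : B = {x | ∀ j, j ∉ Set.range ω → φ j x = 0}) (hBc : IsClosed B) (hAc : IsClosed A) :
    ∃ gb : C(B, Fin (n + 1 + 1) → ℝ), (∀ x i, 0 ≤ gb x i) ∧ (∀ x, ∑ i, gb x i = 1) ∧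
      (∀ x i, gb x i ≠ 0 → φ (ω i) x ≠ 0) ∧
      ∃ F : Path (Nn (n + 1 + 1) B) (Ss (n + 1 + 1) B), ∀ (s : I) (x : B), (x : K) ∈ A →
      ((F s x : YS (n + 1 + 1)) : (Fin (n + 1 + 1) → ℝ) × ℝ) = (((s : ℝ) * (1 - s)) • gb x, 1 - 2 * (s : ℝ)) := by
  haveI : CompactSpace B := isCompact_iff_compactSpace.1 hBc.isCompact
  obtain ⟨ε₀, hε₀, hg⟩ := lebesgue_number_lemma_of_metric (isCompact_univ (X := K))
    (c := fun v => {x | φ v x ≠ 0}) (fun v => isOpen_ne_fun (φ v).continuous continuous_const)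
    (fun x _ => Set.mem_iUnion.2 (hφ x))
  have hg' : ∀ p, ∃ v, ∀ x, dist p x < ε₀ → φ v x ≠ 0 := by
    intro p
    obtain ⟨v, hv⟩ := hg p trivial
    exact ⟨v, fun x hx => hv (by rw [Metric.mem_ball, dist_comm]; exact hx)⟩
  choose g hg using hg'
  have hε : 0 < ε₀ / 2 := half_pos hε₀
  obtain ⟨δ, hδ, hδε, ρ, hρ, c, hc1, hc2⟩ := Ch.integral_cobound (A := A) hε d hd hk g ω hω
    (by
      intro l hl hall x hx
      obtain ⟨i, hi⟩ := mem_range_of_card (hc x) hω (j := g x) (fun i => by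
        obtain ⟨y, hy, hyi⟩ := hall i
        rw [← hyi]
        exact hg y x (by have := hl y hy x hx; linarith)) (hg x x (by simpa using hε₀))
      exact ⟨i, hi⟩)
    (by
      intro l hl hlA hall
      obtain ⟨y0, hy0, -⟩ := hall 0
      obtain ⟨a, ha, hya⟩ := hlA y0 hy0
      rw [hA] at ha
      obtain ⟨i, hi⟩ := ha
      obtain ⟨y, hy, hyi⟩ := hall i
      refine hg y a ?_ (by rw [hyi]; exact hi)
      have := hl y hy y0 hy0
      linarith [dist_triangle y y0 a])
  obtain ⟨M, t, p, ht0, ht1, htp, htc⟩ := hPU (δ / 2) (half_pos hδ)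
  let G : Fin M → Fin N := fun v => g (ρ (p v))
  have hG0 : ∀ v x, t v x ≠ 0 → φ (G v) x ≠ 0 := by
    intro v x hv
    refine hg _ _ ?_
    have := hρ (p v)
    have := htp v x hv
    linarith [dist_triangle (ρ (p v)) (p v) x]
  let c' : (Fin (n + 1) → Fin M) → ℤ := fun sg =>
    if StrictMono sg ∧ List.ofFn (fun j => p (sg j)) ∈ Ch.Sm δ then c (List.ofFn (fun j => p (sg j))) else 0
  let gb : C(B, Fin (n + 1 + 1) → ℝ) := ⟨fun x i => ∑ v, if G v = ω i then t v x else 0, by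
    refine continuous_pi fun i => continuous_finsetSum _ fun v _ => ?_
    split_ifs <;> fun_prop⟩
  have hgb : ∀ x i, gb x i = ∑ v, if G v = ω i then t v x else 0 := fun _ _ => rfl
  have hGB : ∀ v (x : B), t v x ≠ 0 → ∃ i, G v = ω i := by
    intro v x hv
    by_contra h
    apply hG0 v x hv
    refine hB.le x.2 _ ?_
    rintro ⟨i, hi⟩
    exact h ⟨i, hi.symm⟩
  have hgs : ∀ x i, gb x i ≠ 0 → φ (ω i) x ≠ 0 := by
    intro x i h
    rw [hgb] at h
    obtain ⟨v, -, hv⟩ := Finset.exists_ne_zero_of_sum_ne_zero h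
    by_cases h' : G v = ω i
    · rw [if_pos h'] at hv
      rw [← h']
      exact hG0 v x hv
    · rw [if_neg h'] at hv
      exact (hv rfl).elim
  obtain ⟨-, F, hF⟩ := hopf (X := B) (D := n + 1) (by omega) (fun v => (t v).comp (incX B)) (fun v x => ht0 v x)
    (fun x => ht1 x) (fun x => htc x) (A := {x : B | (x : K) ∈ A}) (hAc.preimage continuous_subtype_val)
    G ω hω hGB
    (by
      intro x hx
      have hx : (x : K) ∈ A := hx
      rw [hA] at hx
      obtain ⟨i, hi⟩ := hx
      refine ⟨i, fun v hv => ?_⟩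
      by_contra h
      apply hG0 v x h
      rw [hv]
      exact hi)
    c'
    (by
      intro sg h
      by_contra h'
      exact h (if_neg fun h2 => h' h2.1))
    (by
      intro sg h
      have hs : StrictMono sg ∧ List.ofFn (fun j => p (sg j)) ∈ Ch.Sm δ := by
        by_contra h'
        exact h (if_neg h')
      by_contra hno
      push Not at hno
      apply h
      show (if StrictMono sg ∧ List.ofFn (fun j => p (sg j)) ∈ Ch.Sm δ then c (List.ofFn (fun j => p (sg j))) else 0) = 0
      rw [if_pos hs]
      refine hc1 _ hs.2 (List.length_ofFn) (Or.inl ?_)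
      intro y hy
      obtain ⟨j, rfl⟩ := (List.mem_ofFn' _ _).1 hy
      obtain ⟨x, hx, hne⟩ := hno j
      refine ⟨x, hx, ?_⟩
      have := htp _ _ hne
      exact this.trans (half_lt_self hδ))
    (by
      rintro τ hτ ⟨x, hx⟩
      have hsm : List.ofFn (fun j => p (τ j)) ∈ Ch.Sm δ := by
        intro y hy z hz
        obtain ⟨j, rfl⟩ := (List.mem_ofFn' _ _).1 hy
        obtain ⟨j', rfl⟩ := (List.mem_ofFn' _ _).1 hz
        have h1 := htp _ _ (hx j)
        have h2 := htp _ _ (hx j')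
        have h3 := dist_triangle_right (p (τ j)) (p (τ j')) (incX B x)
        simp only at *
        have h1' : dist (p (τ j)) (incX B x) < δ / 2 := h1
        have h2' : dist (p (τ j')) (incX B x) < δ / 2 := h2
        linarith
      have h1 := hc2 _ hsm (List.length_ofFn)
      rw [List.map_ofFn, Ch.eC_ofFn, Ch.cob_ofFn] at h1
      refine Eq.trans ?_ h1
      refine Finset.sum_congr rfl fun i _ => ?_
      rw [smul_eq_mul]
      congr 1
      refine if_pos ⟨fun a b hab => hτ (Fin.strictMono_succAbove i hab), ?_⟩
      intro y hy z hz
      obtain ⟨j, rfl⟩ := (List.mem_ofFn' _ _).1 hy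
      obtain ⟨j', rfl⟩ := (List.mem_ofFn' _ _).1 hz
      exact hsm _ ((List.mem_ofFn' _ _).2 ⟨_, rfl⟩) _ ((List.mem_ofFn' _ _).2 ⟨_, rfl⟩))
    gb (fun x i => (hgb x i).trans (Finset.sum_congr rfl fun v _ => by split_ifs <;> rfl))
  refine ⟨gb, ?_, ?_, hgs, F, fun s x hx => hF s x hx⟩
  · intro x i
    rw [hgb]
    exact Finset.sum_nonneg fun v _ => by
      split_ifs
      · exact ht0 v x
      · exact le_rfl
  · intro x
    rw [← ht1 x]
    simp only [hgb]
    rw [Finset.sum_comm]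
    refine Finset.sum_congr rfl fun v _ => ?_
    by_cases hv : t v x = 0
    · simp [hv]
    · obtain ⟨i, hi⟩ := hGB v x hv
      rw [Finset.sum_eq_single i]
      · rw [if_pos hi]
      · intro b _ hb
        rw [if_neg]
        intro h
        exact hb (hω (h.symm.trans hi))
      · simp

end Hp
end MeanDimPaper

namespace MeanDimPaper
namespace Hp

open scoped unitInterval ENNReal

/-- difference coordinates -/
def kap (D : ℕ) (y : Fin (D + 1) → ℝ) : Fin D → ℝ := fun j => y j.succ - y 0

lemma kap_cont (D : ℕ) : Continuous (kap D) := by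
  unfold kap
  fun_prop

lemma kap_ne {D : ℕ} {y : Fin (D + 1) → ℝ} (h : NC y) : kap D y ≠ 0 := by
  intro h0
  have h1 : ∀ i, y i = y 0 := by
    intro i
    refine Fin.cases rfl (fun j => ?_) i
    have := congrFun h0 j
    simp only [kap, Pi.zero_apply] at this
    linarith
  obtain ⟨i, j, hij⟩ := h
  exact hij ((h1 i).trans (h1 j).symm)

lemma kap_lin {D : ℕ} (a b : ℝ) (y z : Fin (D + 1) → ℝ) : a • kap D y + b • kap D z = kap D (a • y + b • z) := by
  funext j
  simp only [kap, Pi.add_apply, Pi.smul_apply, smul_eq_mul]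
  ring

lemma kap_smul {D : ℕ} (a : ℝ) (y : Fin (D + 1) → ℝ) : kap D (a • y) = a • kap D y := by
  funext j
  simp only [kap, Pi.smul_apply, smul_eq_mul]
  ring

lemma kap_zero {D : ℕ} : kap D 0 = 0 := by
  funext j
  simp [kap]

lemma getPsi {K : Type*} [MetricSpace K] [CompactSpace K] {n N : ℕ} (hn : 2 ≤ n)
    (hPU : PUf K (n + 1)) (d : (ℤ → K) → (ℤ → K) → ℝ) (hd : IsCompatMetric d)
    (hk : ¬ (n : ℝ≥0∞) ≤ mdim (shift K) d)
    (φ : Fin N → C(K, ℝ)) (hφ0 : ∀ v x, 0 ≤ φ v x) (hφ : ∀ x, ∃ v, φ v x ≠ 0)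
    (hc : ∀ x, (Finset.univ.filter fun v => φ v x ≠ 0).card ≤ n + 1 + 1)
    (ω : Fin (n + 1 + 1) → Fin N) (hω : Function.Injective ω)
    (A B : Set K) (hA : A = {x | ∃ i, φ (ω i) x = 0})
    (hB : B = {x | ∀ j, j ∉ Set.range ω → φ j x = 0}) (hBc : IsClosed B) (hAc : IsClosed A) :
    ∃ ψ : C(B, Fin (n + 1) → ℝ), (∀ x, ψ x ≠ 0) ∧
      ∀ x : B, (x : K) ∈ A → ψ x = kap (n + 1) (fun i => φ (ω i) x) := by
  haveI : CompactSpace B := isCompact_iff_compactSpace.1 hBc.isCompact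
  obtain ⟨gb, hg0, hg1, hgs, F, hF⟩ := getF hn hPU d hd hk φ hφ hc ω hω A B hA hB hBc hAc
  have hlin : ∀ x : B, (x : K) ∈ A → ∀ θ : ℝ, 0 ≤ θ → θ ≤ 1 →
      NC ((1 - θ) • gb x + θ • (fun i => φ (ω i) x)) := by
    intro x hx θ h0 h1
    have hx' := hA.le hx
    obtain ⟨i, hi⟩ := hx'
    have hgi : gb x i = 0 := by
      by_contra h
      exact hgs x i h hi
    obtain ⟨k, -, hk⟩ := Finset.exists_ne_zero_of_sum_ne_zero (by rw [hg1 x]; exact one_ne_zero :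
      ∑ i, gb x i ≠ 0)
    have k1 : 0 < gb x k := lt_of_le_of_ne (hg0 x k) hk.symm
    have k2 : 0 < φ (ω k) x := lt_of_le_of_ne (hφ0 _ _) (hgs x k hk).symm
    refine ⟨k, i, ne_of_gt ?_⟩
    simp only [Pi.add_apply, Pi.smul_apply, smul_eq_mul, hgi, hi, mul_zero, add_zero]
    rcases h0.eq_or_lt with rfl | h0
    · simpa using k1
    · have := mul_pos h0 k2
      have := mul_nonneg (sub_nonneg.2 h1) k1.le
      linarith
  let F' : C(B × I, (Fin (n + 1) → ℝ) × ℝ) := ⟨fun p => (kap (n + 1) (F p.2 p.1 : YS (n + 1 + 1)).1.1,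
    (F p.2 p.1 : YS (n + 1 + 1)).1.2), by
      have := path_cont F
      have h2 := continuous_subtype_val.comp this
      exact ((kap_cont _).comp (continuous_fst.comp h2)).prodMk (continuous_snd.comp h2)⟩
  have hF' : ∀ p, F' p = (kap (n + 1) (F p.2 p.1 : YS (n + 1 + 1)).1.1, (F p.2 p.1 : YS (n + 1 + 1)).1.2) :=
    fun _ => rfl
  have hCc : IsClosed {x : B | (x : K) ∈ A} := hAc.preimage continuous_subtype_val
  obtain ⟨ψ, hψ, hψC⟩ := des (X := B) (D := n + 1) (by omega) (PUf_sub hPU B) F'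
    (by
      intro p hp
      rw [hF'] at hp
      have h1 := congrArg Prod.fst hp
      have h2 := congrArg Prod.snd hp
      rcases (F p.2 p.1 : YS (n + 1 + 1)).2 with h | h
      · exact h h2
      · exact kap_ne h h1)
    (by
      intro x
      rw [hF']
      have : F 0 x = Nn (n + 1 + 1) B x := by rw [F.source]
      simp only [this]
      show (kap (n + 1) 0, (1:ℝ)) = _
      rw [kap_zero])
    (by
      intro x
      rw [hF']
      have : F 1 x = Ss (n + 1 + 1) B x := by rw [F.target]
      simp only [this]
      show (kap (n + 1) 0, (-1:ℝ)) = _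
      rw [kap_zero])
    hCc ⟨fun x => kap (n + 1) (gb x), (kap_cont _).comp (by fun_prop)⟩
    (by
      intro x s
      rw [hF']
      simp only [hF s x x.2, kap_smul]
      rfl)
  obtain ⟨ψ', hψ', hψC'⟩ := line_het hCc ψ hψ
    ⟨fun x => kap (n + 1) (fun i => φ (ω i) x), (kap_cont _).comp (by fun_prop)⟩
    (by
      intro x θ h0 h1
      rw [hψC]
      simp only [ContinuousMap.coe_mk]
      rw [kap_lin]
      exact kap_ne (hlin x x.2 θ h0 h1))
  exact ⟨ψ', hψ', fun x hx => hψC' ⟨x, hx⟩⟩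

lemma elim {K : Type*} [MetricSpace K] [CompactSpace K] {n N : ℕ} (hn : 2 ≤ n)
    (hPU : PUf K (n + 1)) (d : (ℤ → K) → (ℤ → K) → ℝ) (hd : IsCompatMetric d)
    (hk : ¬ (n : ℝ≥0∞) ≤ mdim (shift K) d)
    (φ : Fin N → C(K, ℝ)) (hφ0 : ∀ v x, 0 ≤ φ v x) (hφ : ∀ x, ∃ v, φ v x ≠ 0)
    (hc : ∀ x, (Finset.univ.filter fun v => φ v x ≠ 0).card ≤ n + 1 + 1)
    (ω : Fin (n + 1 + 1) → Fin N) (hω : Function.Injective ω) :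
    ∃ φ' : Fin N → C(K, ℝ), (∀ v x, 0 ≤ φ' v x) ∧ (∀ x, ∃ v, φ' v x ≠ 0) ∧
      (∀ v x, φ' v x ≠ 0 → φ v x ≠ 0) ∧ ∀ x, ∃ i, φ' (ω i) x = 0 := by
  classical
  let A : Set K := {x | ∃ i, φ (ω i) x = 0}
  let B : Set K := {x | ∀ j, j ∉ Set.range ω → φ j x = 0}
  have hAc : IsClosed A := by
    simp only [A, Set.setOf_exists]
    exact isClosed_iUnion_of_finite fun i => isClosed_eq (φ (ω i)).continuous continuous_const
  have hBc : IsClosed B := by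
    simp only [B, Set.setOf_forall]
    exact isClosed_iInter fun v => isClosed_iInter fun _ => isClosed_eq (φ v).continuous continuous_const
  have hAB : ∀ x, x ∉ A → x ∈ B := by
    intro x hx j hj
    by_contra h
    have : ∀ i, φ (ω i) x ≠ 0 := fun i hi => hx ⟨i, hi⟩
    obtain ⟨i, hi⟩ := mem_range_of_card (hc x) hω this h
    exact hj ⟨i, hi.symm⟩
  obtain ⟨ψ, hψ, hψA⟩ := getPsi hn hPU d hd hk φ hφ0 hφ hc ω hω A B rfl rfl hBc hAc
  have hne : (Finset.univ : Finset (Fin (n + 1 + 1))).Nonempty := Finset.univ_nonempty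
  let y : B → Fin (n + 1 + 1) → ℝ := fun x => Fin.cons 0 (ψ x)
  have hy : ∀ i, Continuous fun x => y x i := by
    intro i
    refine Fin.cases ?_ (fun j => ?_) i
    · exact continuous_const
    · show Continuous fun x => ψ x j
      fun_prop
  let mn : B → ℝ := fun x => Finset.univ.inf' hne (y x)
  have hmn : Continuous mn := Continuous.finset_inf'_apply hne (fun i _ => hy i)
  have hmle : ∀ x i, mn x ≤ y x i := fun x i => Finset.inf'_le _ (Finset.mem_univ i)
  have hmex : ∀ x, ∃ i, mn x = y x i := by
    intro x
    obtain ⟨i, -, hi⟩ := Finset.exists_mem_eq_inf' hne (y x)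
    exact ⟨i, hi⟩
  have hyA : ∀ x : B, (x : K) ∈ A → ∀ i, y x i - mn x = φ (ω i) x := by
    intro x hx
    have h1 : ∀ i, y x i = φ (ω i) x - φ (ω 0) x := by
      intro i
      refine Fin.cases ?_ (fun j => ?_) i
      · simp [y]
      · show ψ x j = _
        rw [hψA x hx]
        rfl
    have h2 : mn x = - φ (ω 0) x := by
      apply le_antisymm
      · obtain ⟨i, hi⟩ := hx
        have := hmle x i
        rw [h1, hi] at this
        linarith
      · obtain ⟨i, hi⟩ := hmex x
        rw [hi, h1]
        linarith [hφ0 (ω i) x]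
    intro i
    rw [h1, h2]
    ring
  let f : Fin (n + 1 + 1) → K → ℝ := fun i x => if h : x ∈ B then y ⟨x, h⟩ i - mn ⟨x, h⟩ else φ (ω i) x
  have hfB : ∀ i (x : K) (h : x ∈ B), f i x = y ⟨x, h⟩ i - mn ⟨x, h⟩ := fun i x h => dif_pos h
  have hfA : ∀ i x, x ∈ A → f i x = φ (ω i) x := by
    intro i x hx
    by_cases h : x ∈ B
    · rw [hfB i x h, hyA ⟨x, h⟩ hx]
    · exact dif_neg h
  have hfc : ∀ i, Continuous (f i) := by
    intro i
    have h1 : ContinuousOn (f i) A := (φ (ω i)).continuous.continuousOn.congr (fun x hx => hfA i x hx)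
    have h2 : ContinuousOn (f i) B := by
      rw [continuousOn_iff_continuous_restrict]
      have : B.domRestrict (f i) = fun x => y x i - mn x := by
        funext x
        exact hfB i x x.2
      rw [this]
      exact (hy i).sub hmn
    have h3 := h1.union_of_isClosed h2 hAc hBc
    have h4 : A ∪ B = Set.univ := Set.eq_univ_of_forall fun x => by
      by_cases h : x ∈ A
      · exact Or.inl h
      · exact Or.inr (hAB x h)
    rw [h4] at h3
    exact continuousOn_univ.1 h3
  have hf0 : ∀ i x, 0 ≤ f i x := by
    intro i x
    by_cases h : x ∈ B
    · rw [hfB i x h]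
      linarith [hmle ⟨x, h⟩ i]
    · have : x ∈ A := by
        by_contra h'
        exact h (hAB x h')
      rw [hfA i x this]
      exact hφ0 _ _
  let φ' : Fin N → C(K, ℝ) := fun v => if h : ∃ i, ω i = v then ⟨f h.choose, hfc _⟩ else φ v
  have hφ'1 : ∀ i x, φ' (ω i) x = f i x := by
    intro i x
    have h : ∃ i', ω i' = ω i := ⟨i, rfl⟩
    have h2 : h.choose = i := hω h.choose_spec
    simp only [φ', dif_pos h, ContinuousMap.coe_mk]
    rw [h2]
  have hφ'2 : ∀ v x, (¬ ∃ i, ω i = v) → φ' v x = φ v x := by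
    intro v x h
    simp only [φ', dif_neg h]
  have hφ'A : ∀ v x, x ∈ A → φ' v x = φ v x := by
    intro v x hx
    by_cases h : ∃ i, ω i = v
    · obtain ⟨i, rfl⟩ := h
      rw [hφ'1, hfA i x hx]
    · exact hφ'2 v x h
  refine ⟨φ', ?_, ?_, ?_, ?_⟩
  · intro v x
    by_cases h : ∃ i, ω i = v
    · obtain ⟨i, rfl⟩ := h
      rw [hφ'1]
      exact hf0 i x
    · rw [hφ'2 v x h]
      exact hφ0 v x
  · intro x
    by_cases h : x ∈ B
    · by_contra hno
      push Not at hno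
      apply hψ ⟨x, h⟩
      have h1 : ∀ i, y ⟨x, h⟩ i = mn ⟨x, h⟩ := by
        intro i
        have := hno (ω i)
        rw [hφ'1, hfB i x h] at this
        linarith
      funext j
      have a1 := h1 j.succ
      have a0 := h1 0
      rw [← a0] at a1
      exact a1
    · have : x ∈ A := by
        by_contra h'
        exact h (hAB x h')
      obtain ⟨v, hv⟩ := hφ x
      exact ⟨v, by rw [hφ'A v x this]; exact hv⟩
  · intro v x hv
    by_cases hx : x ∈ A
    · rw [hφ'A v x hx] at hv
      exact hv
    · by_cases h : ∃ i, ω i = v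
      · obtain ⟨i, rfl⟩ := h
        exact fun hi => hx ⟨i, hi⟩
      · rw [hφ'2 v x h] at hv
        exact hv
  · intro x
    by_cases h : x ∈ B
    · obtain ⟨i, hi⟩ := hmex ⟨x, h⟩
      refine ⟨i, ?_⟩
      rw [hφ'1, hfB i x h, hi, sub_self]
    · have hx : x ∈ A := by
        by_contra h'
        exact h (hAB x h')
      obtain ⟨i, hi⟩ := id hx
      exact ⟨i, by rw [hφ'A _ x hx]; exact hi⟩

/-- eliminate all top dimensional simplices -/
lemma elim_all {K : Type*} [MetricSpace K] [CompactSpace K] {n N : ℕ} (hn : 2 ≤ n)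
    (hPU : PUf K (n + 1)) (d : (ℤ → K) → (ℤ → K) → ℝ) (hd : IsCompatMetric d)
    (hk : ¬ (n : ℝ≥0∞) ≤ mdim (shift K) d) (k : ℕ) :
    ∀ (φ : Fin N → C(K, ℝ)), (∀ v x, 0 ≤ φ v x) → (∀ x, ∃ v, φ v x ≠ 0) →
    (∀ x, (Finset.univ.filter fun v => φ v x ≠ 0).card ≤ n + 1 + 1) →
    Set.ncard {S : Finset (Fin N) | S.card = n + 1 + 1 ∧ ∃ x, ∀ v ∈ S, φ v x ≠ 0} ≤ k →
    ∃ φ' : Fin N → C(K, ℝ), (∀ x, ∃ v, φ' v x ≠ 0) ∧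
      (∀ v x, φ' v x ≠ 0 → φ v x ≠ 0) ∧ ∀ x, (Finset.univ.filter fun v => φ' v x ≠ 0).card ≤ n + 1 := by
  classical
  induction k with
  | zero =>
    intro φ h0 h1 hc hk0
    refine ⟨φ, h1, fun _ _ h => h, fun x => ?_⟩
    by_contra h
    push Not at h
    have he : {S : Finset (Fin N) | S.card = n + 1 + 1 ∧ ∃ x, ∀ v ∈ S, φ v x ≠ 0} = ∅ := by
      rw [← Set.ncard_eq_zero (Set.toFinite _)]
      omega
    have : (Finset.univ.filter fun v => φ v x ≠ 0) ∈
        {S : Finset (Fin N) | S.card = n + 1 + 1 ∧ ∃ x, ∀ v ∈ S, φ v x ≠ 0} :=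
      ⟨by have := hc x; omega, x, fun v hv => (Finset.mem_filter.1 hv).2⟩
    rw [he] at this
    exact this
  | succ k ih =>
    intro φ h0 h1 hc hk1
    by_cases he : {S : Finset (Fin N) | S.card = n + 1 + 1 ∧ ∃ x, ∀ v ∈ S, φ v x ≠ 0} = ∅
    · exact ih φ h0 h1 hc (by rw [he]; simp)
    obtain ⟨S, hS, x0, hx0⟩ := Set.nonempty_iff_ne_empty.2 he
    obtain ⟨φ', a0, a1, a2, a3⟩ := elim hn hPU d hd hk φ h0 h1 hc (S.orderEmbOfFin hS)
      (S.orderEmbOfFin hS).injective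
    have hc' : ∀ x, (Finset.univ.filter fun v => φ' v x ≠ 0).card ≤ n + 1 + 1 := by
      intro x
      refine le_trans (Finset.card_le_card fun v hv => ?_) (hc x)
      exact Finset.mem_filter.2 ⟨Finset.mem_univ _, a2 v x (Finset.mem_filter.1 hv).2⟩
    have hlt : Set.ncard {S : Finset (Fin N) | S.card = n + 1 + 1 ∧ ∃ x, ∀ v ∈ S, φ' v x ≠ 0} <
        Set.ncard {S : Finset (Fin N) | S.card = n + 1 + 1 ∧ ∃ x, ∀ v ∈ S, φ v x ≠ 0} := by
      refine Set.ncard_lt_ncard ?_ (Set.toFinite _)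
      refine ⟨fun T hT => ⟨hT.1, hT.2.choose, fun v hv => a2 v _ (hT.2.choose_spec v hv)⟩, fun hsub => ?_⟩
      obtain ⟨-, x, hx⟩ := hsub (⟨hS, x0, hx0⟩ : S ∈ {S : Finset (Fin N) | S.card = n + 1 + 1 ∧ ∃ x, ∀ v ∈ S, φ v x ≠ 0})
      obtain ⟨i, hi⟩ := a3 x
      exact hx _ (Finset.orderEmbOfFin_mem _ hS i) hi
    obtain ⟨φ'', b1, b2, b3⟩ := ih φ' a0 a1 hc' (by omega)
    exact ⟨φ'', b1, fun v x h => a2 v x (b2 v x h), b3⟩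

theorem main_big {K : Type*} [MetricSpace K] [CompactSpace K] {n : ℕ} (hn : 2 ≤ n)
    (hK : topDim K = ((n + 1 : ℕ) : ℕ∞)) (d : (ℤ → K) → (ℤ → K) → ℝ) (hd : IsCompatMetric d) :
    (n : ℝ≥0∞) ≤ mdim (shift K) d := by
  by_contra hk
  have : topDim K ≤ (n : ℕ∞) := by
    refine iSup₂_le fun α hα => ?_
    obtain ⟨N, φ, h0, h1, hc, hU⟩ := PU_cover hK.le α hα
    obtain ⟨φ', a1, a2, a3⟩ := elim_all hn (PUf_of_topDim hK.le) d hd hk _ φ h0 (fun x => by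
      obtain ⟨v, -, hv⟩ := Finset.exists_ne_zero_of_sum_ne_zero (by rw [h1 x]; exact one_ne_zero :
        ∑ v, φ v x ≠ 0)
      exact ⟨v, hv⟩) hc le_rfl
    refine covD_le_of_family α φ' a1 a3 fun v => ?_
    obtain ⟨U, hUα, hU⟩ := hU v
    exact ⟨U, hUα, fun x hx => hU x (a2 v x hx)⟩
  rw [hK] at this
  have h2 : n + 1 ≤ n := by exact_mod_cast this
  omega

end Hp

section

open scoped ENNReal

theorem mdim_fullshift_ge_aux {K : Type*} [MetricSpace K] [CompactSpace K]
    (hfin : topDim K ≠ ⊤)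
    (d : (ℤ → K) → (ℤ → K) → ℝ) (hd : IsCompatMetric d) :
    ((topDim K - 1 : ℕ∞) : ℝ≥0∞) ≤ mdim (shift K) d := by
  obtain ⟨D, hD⟩ := ENat.ne_top_iff_exists.1 hfin
  rw [← hD]
  have hcast : (((D : ℕ∞) - 1 : ℕ∞) : ℝ≥0∞) = ((D - 1 : ℕ) : ℝ≥0∞) := by
    have : ((D : ℕ∞) - 1 : ℕ∞) = ((D - 1 : ℕ) : ℕ∞) := by simp
    rw [this]
    rfl
  rw [hcast]
  by_cases h : 3 ≤ D
  · obtain ⟨n, rfl⟩ : ∃ n, D = n + 1 := ⟨D - 1, by omega⟩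
    exact Hp.main_big (by omega) hD.symm d hd
  · by_cases h0 : D ≤ 1
    · have : D - 1 = 0 := by omega
      rw [this]
      simp
    · have : D = 2 := by omega
      subst this
      have h1 := Ch.one_le_mdim d hd (by rw [← hD]; norm_num)
      simpa using h1

end

end MeanDimPaper

open Filter Set
open scoped ENNReal

namespace MeanDimPaper

variable {X : Type*} [TopologicalSpace X]

/-- for a finite dimensional compact metric space `K`, the mean dimension of
the full shift on the alphabet `K` is at least `dim K - 1`. -/
theorem mdim_fullshift_ge {K : Type*} [MetricSpace K] [CompactSpace K]
    (hfin : topDim K ≠ ⊤)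
    (d : (ℤ → K) → (ℤ → K) → ℝ) (hd : IsCompatMetric d) :
    ((topDim K - 1 : ℕ∞) : ℝ≥0∞) ≤ mdim (shift K) d := by
  exact mdim_fullshift_ge_aux hfin d hd

end MeanDimPaper
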